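/- Suppose n > n₁ ≥ 1 and m > m₁ ≥ 1 are integers with n ≥ 300 and L_n − L_{n₁} = 𝒫_m − 𝒫_{m₁}. Then min{(n−n₁)·log δ, (m−m₁)·log α} < 7.33·10^{13}·(1 + log(2n)) and max{(n−n₁)·log δ, (m−m₁)·log α} < 2.57·10^{27}·(1 + log(2n))², where δ = (1+√5)/2 and α is the unique real root of x³ − x − 1. -/

import Mathlib

/-- The Padovan sequence: 𝒫₀ = 𝒫₁ = 𝒫₂ = 1, 𝒫_{k+3} = 𝒫_{k+1} + 𝒫_k. -/
def padovan : ℕ → ℕ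
  | 0 => 1
  | 1 => 1
  | 2 => 1
  | k + 3 => padovan (k + 1) + padovan k

/-- The Lucas sequence: L₀ = 2, L₁ = 1, L_{k+2} = L_{k+1} + L_k. -/
def lucasSeq : ℕ → ℕ
  | 0 => 2
  | 1 => 1
  | k + 2 => lucasSeq (k + 1) + lucasSeq k


section PolyPart
open Polynomial

theorem ze_common_prime {A : Type*} [CommRing A] [IsDomain A] [UniqueFactorizationMonoid A]
    (f g : A[X]) (n : ℕ) (hf : f ≠ 0) (hg : g.natDegree ≤ n)
    (h : resultant f g f.natDegree n = 0) :
    ∃ q : A[X], Prime q ∧ 0 < q.natDegree ∧ q ∣ f ∧ q ∣ g := by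
  classical
  obtain ⟨k, rfl⟩ := Nat.exists_eq_add_of_le hg
  rw [resultant_add_right_deg _ _ _ _ _ le_rfl] at h
  have h1 : resultant f g f.natDegree g.natDegree = 0 := by
    rcases mul_eq_zero.1 h with h | h
    · exact absurd (eq_zero_of_pow_eq_zero h) (by simpa using hf)
    · exact h
  let K := FractionRing A
  let φ := algebraMap A K
  have hφ : Function.Injective φ := IsFractionRing.injective A K
  have h2 : resultant (f.map φ) (g.map φ) = 0 := by
    have := resultant_map_map f g f.natDegree g.natDegree φ
    rw [h1, map_zero] at this
    rwa [natDegree_map_eq_of_injective hφ, natDegree_map_eq_of_injective hφ]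
  rw [resultant_eq_zero_iff] at h2
  have hfK : f.map φ ≠ 0 := by rwa [Ne, Polynomial.map_eq_zero_iff hφ]
  obtain ⟨p, hp, hpf, hpg⟩ : ∃ p : K[X], Irreducible p ∧ p ∣ f.map φ ∧ p ∣ g.map φ := by
    by_contra hcon
    push Not at hcon
    refine h2.2 ?_
    refine (isRelPrime_iff_isCoprime).1 ?_
    refine WfDvdMonoid.isRelPrime_of_no_irreducible_factors ?_ ?_
    · rintro ⟨h, -⟩; exact hfK h
    · intro z hz hzf; exact hcon z hz hzf
  let _ : NormalizedGCDMonoid A := Classical.choice inferInstance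
  obtain ⟨b, hb, hbm⟩ := IsLocalization.integerNormalization_spec (nonZeroDivisors A) p
  set r := IsLocalization.integerNormalization (nonZeroDivisors A) p with hr
  have hb0 : b ≠ 0 := nonZeroDivisors.ne_zero hb
  have hr0 : r ≠ 0 := by
    intro h0
    rw [h0] at hbm
    simp [Algebra.smul_def] at hbm
    rcases hbm with hbm | hbm
    · exact hb0 hbm
    · exact hp.ne_zero hbm
  have hass : Associated (r.primPart.map φ) p := by
    have e1 : r.map φ = C (φ r.content) * r.primPart.map φ := by
      conv_lhs => rw [r.eq_C_content_mul_primPart]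
      simp
    have e2 : C (φ b) * p = C (φ r.content) * r.primPart.map φ := by
      rw [← e1, hbm, Algebra.smul_def]; rfl
    have u1 : IsUnit (C (φ b) : K[X]) := by
      rw [isUnit_C, isUnit_iff_ne_zero]; simpa [φ] using hb0
    have u2 : IsUnit (C (φ r.content) : K[X]) := by
      rw [isUnit_C, isUnit_iff_ne_zero]; simpa [φ, content_eq_zero_iff] using hr0
    have a1 : Associated (C (φ b) * p) p := associated_unit_mul_left _ _ u1
    have a2 : Associated (C (φ r.content) * r.primPart.map φ) (r.primPart.map φ) :=
      associated_unit_mul_left _ _ u2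
    exact (a2.symm.trans (e2 ▸ Associated.refl _)).trans a1
  have hprim := r.isPrimitive_primPart
  have hirr : Irreducible (r.primPart.map φ) := hass.irreducible_iff.2 hp
  refine ⟨r.primPart, ?_, ?_, ?_, ?_⟩
  · exact ((hprim.irreducible_iff_irreducible_map_fraction_map (K := K)).2 hirr).prime
  · rw [← natDegree_map_eq_of_injective hφ]
    exact hirr.natDegree_pos
  · exact hprim.dvd_of_fraction_map_dvd_fraction_map (K := K) (hass.dvd.trans hpf)
  · exact hprim.dvd_of_fraction_map_dvd_fraction_map (K := K) (hass.dvd.trans hpg)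

theorem ze_prime_count {A ι : Type*} [CommRing A] [IsDomain A] 
    (I : Finset ι) (q : ι → A[X]) : ∀ (f : A[X]), f ≠ 0 → (∀ i ∈ I, Prime (q i)) →
    (∀ i ∈ I, 0 < (q i).natDegree) → (∀ i ∈ I, q i ∣ f) →
    (∀ i ∈ I, ∀ j ∈ I, i ≠ j → ¬ Associated (q i) (q j)) → I.card ≤ f.natDegree := by
  classical
  induction I using Finset.induction_on with
  | empty => simp
  | insert a s ha ih =>
    intro f hf hp hd hdvd hne
    obtain ⟨k, rfl⟩ := hdvd a (by simp)
    have hk : k ≠ 0 := right_ne_zero_of_mul hf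
    have hqa := left_ne_zero_of_mul hf
    rw [Finset.card_insert_of_notMem ha, natDegree_mul hqa hk]
    have := ih k hk (fun i hi => hp i (by simp [hi])) (fun i hi => hd i (by simp [hi]))
      (fun i hi => by
        have h1 := hdvd i (by simp [hi])
        rcases (hp i (by simp [hi])).dvd_or_dvd h1 with h | h
        · exact absurd ((hp i (by simp [hi])).associated_of_dvd (hp a (by simp)) h)
            (hne i (by simp [hi]) a (by simp) (by rintro rfl; exact ha hi))
        · exact h)
      (fun i hi j hj => hne i (by simp [hi]) j (by simp [hj]))
    have := hd a (by simp)
    omega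

theorem ze_elim {A ι : Type*} [CommRing A] [IsDomain A] [UniqueFactorizationMonoid A] [Algebra ℝ A]
    (f : A[X]) (hf : f ≠ 0) (J : Finset ι) (g : ι → A[X]) (n : ℕ) (hg : ∀ j ∈ J, (g j).natDegree ≤ n)
    (h : ∀ q : A[X], Prime q → 0 < q.natDegree → q ∣ f → ∃ j ∈ J, ¬ q ∣ g j) :
    ∃ c : ι → ℝ, resultant f (∑ j ∈ J, c j • g j) f.natDegree n ≠ 0 := by
  classical
  let V : A[X] → Subspace ℝ (ι → ℝ) := fun q =>
    { carrier := {c | q ∣ ∑ j ∈ J, c j • g j}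
      add_mem' := by
        intro a b ha hb
        simp only [Set.mem_ofPred_eq, Pi.add_apply, add_smul, Finset.sum_add_distrib] at *
        exact dvd_add ha hb
      zero_mem' := by simp
      smul_mem' := by
        intro t a ha
        simp only [Set.mem_ofPred_eq, Pi.smul_apply, smul_eq_mul, mul_smul, ← Finset.smul_sum] at *
        rw [Algebra.smul_def]
        exact Dvd.dvd.mul_left ha _ }
  let s0 := (UniqueFactorizationMonoid.factors f).toFinset.filter (fun q => 0 < q.natDegree)
  have hs : (⊤ : Subspace ℝ (ι → ℝ)) ∉ s0.image V := by
    intro hmem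
    obtain ⟨q, hq, hV⟩ := Finset.mem_image.1 hmem
    simp only [s0, Finset.mem_filter, Multiset.mem_toFinset] at hq
    obtain ⟨j, hj, hnd⟩ := h q (UniqueFactorizationMonoid.prime_of_factor q hq.1) hq.2
      (UniqueFactorizationMonoid.dvd_of_mem_factors hq.1)
    have : (Pi.single j 1 : ι → ℝ) ∈ V q := by rw [hV]; trivial
    apply hnd
    have h2 : q ∣ ∑ i ∈ J, (Pi.single j 1 : ι → ℝ) i • g i := this
    rw [Finset.sum_eq_single j] at h2
    · simpa using h2
    · intro b _ hb; simp [hb]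
    · intro h; exact absurd hj h
  have hne := Subspace.biUnion_ne_univ_of_top_notMem hs
  obtain ⟨c, hc⟩ := (Set.ne_univ_iff_exists_notMem _).1 hne
  refine ⟨c, fun h0 => ?_⟩
  obtain ⟨q, hq, hqd, hqf, hqg⟩ := ze_common_prime f _ n hf
    (natDegree_sum_le_of_forall_le _ _ fun j hj => (natDegree_smul_le _ _).trans (hg j hj)) h0
  apply hc
  obtain ⟨p, hp, hass⟩ := UniqueFactorizationMonoid.exists_mem_factors_of_dvd hf hq.irreducible hqf
  refine Set.mem_iUnion₂.2 ⟨V p, Finset.mem_image.2 ⟨p, ?_, rfl⟩, ?_⟩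
  · simp only [s0, Finset.mem_filter, Multiset.mem_toFinset]
    refine ⟨hp, ?_⟩
    rwa [← natDegree_eq_of_degree_eq (degree_eq_degree_of_associated hass)]
  · exact hass.symm.dvd.trans hqg

/-- filtration -/
structure ZFilt {A : Type*} [CommRing A] (D : ℕ → AddSubgroup A) : Prop where
  one : (1 : A) ∈ D 0
  mono : ∀ {a b : ℕ}, a ≤ b → D a ≤ D b
  mul : ∀ {a b : ℕ} {x y : A}, x ∈ D a → y ∈ D b → x * y ∈ D (a + b)

theorem ZFilt.det {A : Type*} [CommRing A] {D : ℕ → AddSubgroup A} (hD : ZFilt D) {k d : ℕ}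
    (M : Matrix (Fin k) (Fin k) A) (h : ∀ i j, M i j ∈ D d) : M.det ∈ D (k * d) := by
  rw [Matrix.det_apply]
  refine AddSubgroup.sum_mem _ fun σ _ => ?_
  have hp : ∀ s : Finset (Fin k), ∏ i ∈ s, M (σ i) i ∈ D (s.card * d) := by
    classical
    intro s
    induction s using Finset.induction_on with
    | empty => simpa using hD.one
    | insert a s ha ih =>
      rw [Finset.prod_insert ha, Finset.card_insert_of_notMem ha, add_mul, one_mul, add_comm]
      exact hD.mul (h _ _) ih
  have h1 := hp Finset.univ
  rw [Finset.card_univ, Fintype.card_fin] at h1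
  rcases Int.units_eq_one_or (Equiv.Perm.sign σ) with h | h
  · rw [h, one_smul]; exact h1
  · rw [h, Units.neg_smul, one_smul]; exact neg_mem h1

theorem ZFilt.resultant {A : Type*} [CommRing A] {D : ℕ → AddSubgroup A} (hD : ZFilt D) {m n d : ℕ}
    (f g : A[X]) (hf : ∀ i, f.coeff i ∈ D d) (hg : ∀ i, g.coeff i ∈ D d) :
    resultant f g m n ∈ D ((m + n) * d) := by
  refine hD.det _ fun i j => ?_
  simp only [sylvester, Matrix.of_apply]
  refine Fin.addCases (fun j => ?_) (fun j => ?_) j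
  · simp only [Fin.addCases_left]
    split_ifs
    · exact hg _
    · exact zero_mem _
  · simp only [Fin.addCases_right]
    split_ifs
    · exact hf _
    · exact zero_mem _

/-- degree filtration -/
def zDeg (A : Type*) [CommRing A] (d : ℕ) : AddSubgroup A[X] :=
  { carrier := {p | p.natDegree ≤ d}
    add_mem' := fun ha hb => (natDegree_add_le _ _).trans (max_le ha hb)
    zero_mem' := by simp
    neg_mem' := fun {a} ha => by simpa using ha }

/-- lifted filtration -/
def zLift {A : Type*} [CommRing A] (D : ℕ → AddSubgroup A) (d : ℕ) : AddSubgroup A[X] :=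
  { carrier := {p | ∀ i, p.coeff i ∈ D d}
    add_mem' := fun ha hb i => by rw [coeff_add]; exact add_mem (ha i) (hb i)
    zero_mem' := fun i => by simp [zero_mem]
    neg_mem' := fun {a} ha i => by rw [coeff_neg]; exact neg_mem (ha i) }

theorem zDeg_filt (A : Type*) [CommRing A] : ZFilt (zDeg A) where
  one := by simp [zDeg]
  mono := fun h _ hx => le_trans hx h
  mul := fun hx hy => natDegree_mul_le.trans (add_le_add hx hy)

theorem zLift_filt {A : Type*} [CommRing A] {D : ℕ → AddSubgroup A} (hD : ZFilt D) :
    ZFilt (zLift D) where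
  one := by
    intro i
    rw [coeff_one]
    split_ifs
    · exact hD.one
    · exact zero_mem _
  mono := fun h _ hx i => hD.mono h (hx i)
  mul := by
    intro a b x y hx hy i
    rw [coeff_mul]
    exact sum_mem fun p _ => hD.mul (hx _) (hy _)
open Polynomial

/-- translation in two variables -/
noncomputable def t2 (u y : ℝ) : ℝ[X][X] ≃+* ℝ[X][X] :=
  (mapEquiv (taylorEquiv u).toRingEquiv).trans (taylorEquiv (C y : ℝ[X])).toRingEquiv

theorem t2_apply (u y : ℝ) (p : ℝ[X][X]) :
    t2 u y p = taylor (C y) (p.map (taylorAlgHom u : ℝ[X] →+* ℝ[X])) := rfl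

/-- evaluation -/
noncomputable def ev2 (U Y : ℝ) : ℝ[X][X] →+* ℝ := eval₂RingHom (evalRingHom U) Y

theorem t2_C (u y : ℝ) (p : ℝ[X]) : t2 u y (C p) = C (taylor u p) := by
  simp [t2_apply]

theorem t2_X (u y : ℝ) : t2 u y X = X + C (C y) := by
  simp [t2_apply]

theorem ev2_t2 (u y U Y : ℝ) (p : ℝ[X][X]) : ev2 U Y (t2 u y p) = ev2 (U + u) (Y + y) p := by
  have : (ev2 U Y).comp (t2 u y : ℝ[X][X] →+* ℝ[X][X]) = ev2 (U + u) (Y + y) := by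
    ext
    · simp [t2_C, ev2]
    · simp [t2_C, ev2]
    · simp [t2_X, ev2]
  exact congrArg (fun f : ℝ[X][X] →+* ℝ => f p) this

theorem t2_t2 (u y u' y' : ℝ) (p : ℝ[X][X]) :
    t2 u y (t2 u' y' p) = t2 (u + u') (y + y') p := by
  have : (t2 u y : ℝ[X][X] →+* ℝ[X][X]).comp (t2 u' y' : ℝ[X][X] →+* ℝ[X][X])
      = (t2 (u + u') (y + y') : ℝ[X][X] →+* ℝ[X][X]) := by
    ext1
    · ext1
      · ext; simp [t2_C]
      · simp [t2_C]; ring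
    · simp [t2_X, t2_C]; ring
  exact congrArg (fun f : ℝ[X][X] →+* ℝ[X][X] => f p) this

theorem t2_zero (p : ℝ[X][X]) : t2 0 0 p = p := by
  have : (t2 0 0 : ℝ[X][X] →+* ℝ[X][X]) = RingHom.id _ := by
    ext1
    · ext1
      · ext; simp [t2_C]
      · simp [t2_C]
    · simp [t2_X]
  exact congrArg (fun f : ℝ[X][X] →+* ℝ[X][X] => f p) this

theorem taylor1_inj (u : ℝ) : Function.Injective (taylorAlgHom u : ℝ[X] →+* ℝ[X]) :=
  taylor_injective u

theorem t2_natDegree (u y : ℝ) (p : ℝ[X][X]) : (t2 u y p).natDegree = p.natDegree := by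
  rw [t2_apply, natDegree_taylor, natDegree_map_eq_of_injective (taylor1_inj u)]

theorem t2_lc (u y : ℝ) (p : ℝ[X][X]) : (t2 u y p).leadingCoeff = taylor u p.leadingCoeff := by
  rw [t2_apply, leadingCoeff_taylor, leadingCoeff_map_of_injective (taylor1_inj u)]
  rfl

theorem t2_lclc (u y : ℝ) (p : ℝ[X][X]) :
    (t2 u y p).leadingCoeff.leadingCoeff = p.leadingCoeff.leadingCoeff := by
  rw [t2_lc, leadingCoeff_taylor]

theorem tc_coeff {A : Type*} [CommRing A] (f : A[X]) (r : A) (e : ℕ)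
    (hf : f.natDegree ≤ e + 1) :
    (taylor r f).coeff e = f.coeff e + (e + 1) * r * f.coeff (e + 1) := by
  rw [taylor_coeff, eval_eq_sum_range' (n := 2)]
  · simp [Finset.sum_range_succ, hasseDeriv_coeff, add_comm 1 e]
    ring
  · have := natDegree_hasseDeriv_le f e
    omega

theorem unit_zz {a b : ℝ[X][X]} (h : Associated a b) : ∃ c : ℝ, a = C (C c) * b := by
  obtain ⟨v, hv⟩ := h.symm
  obtain ⟨r, hr, hr2⟩ := isUnit_iff.1 v.isUnit
  obtain ⟨c, hc, hc2⟩ := isUnit_iff.1 hr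
  refine ⟨c, ?_⟩
  rw [← hv, ← hr2, ← hc2, mul_comm]

theorem ze_stab (q : ℝ[X][X]) (hq : 0 < q.natDegree) : ∃ A B : ℝ, (A ≠ 0 ∨ B ≠ 0) ∧
    ∀ u y, Associated (t2 u y q) q → A * u + B * y = 0 := by
  obtain ⟨e, he⟩ : ∃ e, q.natDegree = e + 1 := ⟨q.natDegree - 1, by omega⟩
  have hq0 : q ≠ 0 := by rintro rfl; simp at hq
  have key : ∀ u y, Associated (t2 u y q) q → taylor u (q.coeff (e + 1)) = q.coeff (e + 1) ∧
      taylor u (q.coeff e) + (e + 1) * C y * q.coeff (e + 1) = q.coeff e := by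
    intro u y h
    obtain ⟨c, hc⟩ := unit_zz h
    have hc1 : c = 1 := by
      have h1 := congrArg (fun p => p.leadingCoeff.leadingCoeff) hc
      simp only [t2_lclc, leadingCoeff_mul, leadingCoeff_C] at h1
      have : q.leadingCoeff.leadingCoeff ≠ 0 := by simpa using hq0
      field_simp at h1
      linarith
    rw [hc1] at hc
    simp only [map_one, one_mul] at hc
    have h1 : taylor u (q.coeff (e + 1)) = q.coeff (e + 1) := by
      have := congrArg leadingCoeff hc
      rwa [t2_lc, leadingCoeff, he] at this
    refine ⟨h1, ?_⟩
    have h2 := congrArg (fun p => p.coeff e) hc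
    simp only [t2_apply] at h2
    rw [tc_coeff _ _ _ (by rw [natDegree_map_eq_of_injective (taylor1_inj u), he]),
      coeff_map, coeff_map] at h2
    have h3 : (taylorAlgHom u : ℝ[X] →+* ℝ[X]) (q.coeff (e + 1)) = q.coeff (e + 1) := h1
    rw [h3] at h2
    exact h2
  have hlc : q.coeff (e + 1) ≠ 0 := by
    rw [← he]; simpa using hq0
  by_cases hA : (q.coeff (e + 1)).natDegree = 0 ∧ (q.coeff e).natDegree ≤ 1
  · obtain ⟨hb, hh⟩ := hA
    obtain ⟨b, hb⟩ := natDegree_eq_zero.1 hb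
    have hb0 : b ≠ 0 := by rintro rfl; simp at hb; exact hlc hb.symm
    refine ⟨(q.coeff e).coeff 1, (e + 1) * b, Or.inr (by positivity), ?_⟩
    intro u y h
    have h2 := congrArg (fun p => p.coeff 0) (key u y h).2
    rw [← hb] at h2
    simp only [coeff_add] at h2
    rw [tc_coeff _ _ _ (by simpa using hh)] at h2
    have : ((e : ℝ[X]) + 1) * C y * C b = C ((e + 1) * y * b) := by simp
    rw [this] at h2
    simp at h2
    linarith
  · refine ⟨1, 0, Or.inl one_ne_zero, ?_⟩
    intro u y h
    by_contra hu
    have hu : u ≠ 0 := by intro h; apply hu; rw [h]; ring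
    obtain ⟨k1, k2⟩ := key u y h
    have h1 : (q.coeff (e + 1)).natDegree = 0 := by
      by_contra hd
      obtain ⟨k, hk⟩ := Nat.exists_eq_succ_of_ne_zero hd
      have h2 := congrArg (fun p => p.coeff k) k1
      rw [tc_coeff _ _ _ (by rw [hk])] at h2
      have h3 : (q.coeff (e + 1)).coeff (k + 1) ≠ 0 := by
        rw [show k + 1 = (q.coeff (e + 1)).natDegree from hk.symm]; simpa using hlc
      have : ((k : ℝ) + 1) * u * (q.coeff (e + 1)).coeff (k + 1) ≠ 0 := by positivity
      apply this; linarith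
    refine hA ⟨h1, ?_⟩
    by_contra hd
    obtain ⟨b, hb⟩ := natDegree_eq_zero.1 h1
    obtain ⟨k, hk⟩ : ∃ k, (q.coeff e).natDegree = k + 2 := ⟨(q.coeff e).natDegree - 2, by omega⟩
    have h2 := congrArg (fun p => p.coeff (k + 1)) k2
    rw [← hb] at h2
    have e1 : ((e : ℝ[X]) + 1) * C y * C b = C ((e + 1) * y * b) := by simp
    rw [e1] at h2
    simp only [coeff_add, coeff_C_succ] at h2
    rw [tc_coeff _ _ _ (by rw [hk])] at h2
    have h3 : (q.coeff e).coeff (k + 1 + 1) ≠ 0 := by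
      have : q.coeff e ≠ 0 := by intro h; rw [h] at hk; simp at hk
      rw [show k + 1 + 1 = (q.coeff e).natDegree from hk.symm]; simpa using this
    have : (((k + 1 : ℕ) : ℝ) + 1) * u * (q.coeff e).coeff (k + 1 + 1) ≠ 0 := by positivity
    apply this; linarith

theorem ze_coeff_smul (p : ℝ[X][X]) (c : ℝ) : c • p = C (C c) * p := by
  rw [Algebra.smul_def]; rfl

theorem zDeg_taylor (u : ℝ) (d : ℕ) (p : ℝ[X]) (hp : p ∈ zDeg ℝ d) : taylor u p ∈ zDeg ℝ d := by
  change (taylor u p).natDegree ≤ d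
  rw [natDegree_taylor]; exact hp

theorem t2_filt (u y : ℝ) (d : ℕ) (p : ℝ[X][X]) (hp : p ∈ zLift (zDeg ℝ) d) :
    t2 u y p ∈ zLift (zDeg ℝ) d := by
  intro i
  rw [t2_apply, taylor_coeff, eval_eq_sum_range]
  refine sum_mem fun j _ => ?_
  rw [hasseDeriv_coeff, coeff_map]
  have h1 : (taylorAlgHom u : ℝ[X] →+* ℝ[X]) (p.coeff (j + i)) ∈ zDeg ℝ d :=
    zDeg_taylor u d _ (hp _)
  have h2 : (((j + i).choose i : ℕ) : ℝ[X]) ∈ zDeg ℝ 0 := by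
    change natDegree _ ≤ 0
    rw [natDegree_natCast]
  have h3 : (C y ^ j : ℝ[X]) ∈ zDeg ℝ 0 := by
    change natDegree _ ≤ 0
    rw [← C_pow, natDegree_C]
  have := (zDeg_filt ℝ).mul ((zDeg_filt ℝ).mul h2 h1) h3
  simpa using this

theorem ze_step2 {ι : Type*} (R : ℝ[X][X]) (hR : R ≠ 0) (d : ℕ) (hd0 : 0 < d)
    (hRY : R.natDegree ≤ d) (hRU : R ∈ zLift (zDeg ℝ) d) (J : Finset ι) (u y : ι → ℝ)
    (H : ∀ A B : ℝ, (A ≠ 0 ∨ B ≠ 0) → d < (J.image (fun j => A * u j + B * y j)).card) :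
    ∃ N : ℝ[X], N ≠ 0 ∧ N.natDegree ≤ 2 * d * d ∧ ∀ U Y : ℝ, ev2 U Y R = 0 →
      (∀ j ∈ J, ev2 (U + u j) (Y + y j) R = 0) → N.eval U = 0 := by
  classical
  obtain ⟨c, hc⟩ := ze_elim R hR J (fun j => t2 (u j) (y j) R) d
    (fun j _ => by rw [t2_natDegree]; exact hRY) (by
      intro q hq hqd hqR
      by_contra hcon
      push Not at hcon
      obtain ⟨A, B, hAB, hst⟩ := ze_stab q hqd
      have hlt := H A B hAB
      have hrep : ∀ v ∈ J.image (fun j => A * u j + B * y j), ∃ j ∈ J, A * u j + B * y j = v := by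
        intro v hv; simpa using hv
      have : Nonempty ι := by
        by_contra hne
        rw [not_nonempty_iff] at hne
        have : J = ∅ := Finset.eq_empty_of_isEmpty J
        rw [this] at hlt; simp at hlt
      choose! g hg1 hg2 using hrep
      have := ze_prime_count (J.image (fun j => A * u j + B * y j))
        (fun v => t2 (- u (g v)) (- y (g v)) q) R hR
        (fun v _ => (MulEquiv.prime_iff (t2 (- u (g v)) (- y (g v)))).2 hq)
        (fun v _ => by rw [t2_natDegree]; exact hqd)
        (fun v hv => by
          have := map_dvd (t2 (- u (g v)) (- y (g v))) (hcon _ (hg1 v hv))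
          rw [t2_t2] at this
          simpa [t2_zero] using this)
        (fun v hv w hw hvw hass => by
          have h1 := hass.map (t2 (u (g w)) (y (g w)))
          rw [t2_t2, t2_t2] at h1
          simp only [add_neg_cancel, t2_zero] at h1
          have h2 := hst _ _ h1
          have h3 := hg2 v hv
          have h4 := hg2 w hw
          apply hvw
          rw [← h3, ← h4]; linarith)
      omega)
  refine ⟨_, hc, ?_, ?_⟩
  · have h1 := (zDeg_filt ℝ).resultant (m := R.natDegree) (n := d) (d := d) R
      (∑ j ∈ J, c j • t2 (u j) (y j) R) hRU (by
        intro i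
        have : ∑ j ∈ J, c j • t2 (u j) (y j) R ∈ zLift (zDeg ℝ) d := by
          refine sum_mem fun j _ => ?_
          intro i
          rw [coeff_smul]
          exact (natDegree_smul_le _ _).trans (t2_filt _ _ _ _ hRU i)
        exact this i)
    refine le_trans h1 (Nat.mul_le_mul_right _ (by omega))
  · intro U Y h0 hj
    obtain ⟨p, q, -, -, hpq⟩ := exists_mul_add_mul_eq_C_resultant (m := R.natDegree) (n := d) R
      (∑ j ∈ J, c j • t2 (u j) (y j) R) le_rfl
      (natDegree_sum_le_of_forall_le _ _ fun j hj => (natDegree_smul_le _ _).trans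
        (by rw [t2_natDegree]; exact hRY)) (by omega)
    have h1 := congrArg (ev2 U Y) hpq
    rw [map_add, map_mul, map_mul, h0, map_sum] at h1
    have h2 : ∀ j ∈ J, ev2 U Y (c j • t2 (u j) (y j) R) = 0 := by
      intro j hjJ
      rw [ze_coeff_smul, map_mul, ev2_t2, hj j hjJ, mul_zero]
    rw [Finset.sum_eq_zero h2] at h1
    have h3 : ∀ r : ℝ[X], ev2 U Y (C r) = r.eval U := by intro r; simp [ev2]
    rw [h3] at h1
    rw [← h1]; ring

/-- scaling translation in three variables -/
noncomputable def t3h (u w : ℝ) : ℝ[X][X][X] →+* ℝ[X][X][X] :=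
  (compRingHom (C (C (C w)) * X)).comp (mapRingHom (t2 u 0 : ℝ[X][X] →+* ℝ[X][X]))

theorem t3h_coeff (u w : ℝ) (p : ℝ[X][X][X]) (i : ℕ) :
    (t3h u w p).coeff i = t2 u 0 (p.coeff i) * C (C w) ^ i := by
  simp [t3h, comp_C_mul_X_coeff]

theorem t3h_t3h (u w u' w' : ℝ) (p : ℝ[X][X][X]) :
    t3h u w (t3h u' w' p) = t3h (u + u') (w * w') p := by
  ext1 i
  simp only [t3h_coeff, map_mul, map_pow, t2_t2, t2_C, taylor_C, add_zero, mul_pow]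
  ring

theorem t3h_one (p : ℝ[X][X][X]) : t3h 0 1 p = p := by
  ext1 i
  simp [t3h_coeff, t2_zero]

/-- as equivalence -/
noncomputable def t3 (u w : ℝ) (hw : w ≠ 0) : ℝ[X][X][X] ≃+* ℝ[X][X][X] :=
  RingEquiv.ofRingHom (t3h u w) (t3h (-u) w⁻¹)
    (RingHom.ext fun p => by simp [t3h_t3h, hw, t3h_one])
    (RingHom.ext fun p => by simp [t3h_t3h, hw, t3h_one])

theorem t3_apply (u w : ℝ) (hw : w ≠ 0) (p : ℝ[X][X][X]) : t3 u w hw p = t3h u w p := rfl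

theorem t3h_natDegree (u w : ℝ) (hw : w ≠ 0) (p : ℝ[X][X][X]) :
    (t3h u w p).natDegree = p.natDegree := by
  have h : ∀ i, (t3h u w p).coeff i = 0 ↔ p.coeff i = 0 := by
    intro i
    rw [t3h_coeff]
    simp [hw]
  apply le_antisymm
  · rw [natDegree_le_iff_coeff_eq_zero]
    intro N hN
    rw [h]; exact coeff_eq_zero_of_natDegree_lt hN
  · rw [natDegree_le_iff_coeff_eq_zero]
    intro N hN
    rw [← h]; exact coeff_eq_zero_of_natDegree_lt hN

/-- evaluation -/
noncomputable def ev3 (U Y W : ℝ) : ℝ[X][X][X] →+* ℝ := eval₂RingHom (ev2 U Y) W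

theorem ev3_t3h (u w U Y W : ℝ) (p : ℝ[X][X][X]) :
    ev3 U Y W (t3h u w p) = ev3 (U + u) Y (w * W) p := by
  have : (ev3 U Y W).comp (t3h u w) = ev3 (U + u) Y (w * W) := by
    refine Polynomial.ringHom_ext' ?_ ?_
    · refine RingHom.ext fun a => ?_
      simp [ev3, t3h, ev2_t2]
    · simp [ev3, t3h, ev2]
  exact congrArg (fun f : ℝ[X][X][X] →+* ℝ => f p) this

theorem unit_gen {A : Type*} [CommRing A] [IsDomain A] {a b : A[X]} (h : Associated a b) :
    ∃ c : A, IsUnit c ∧ a = C c * b := by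
  obtain ⟨v, hv⟩ := h.symm
  obtain ⟨r, hr, hr2⟩ := isUnit_iff.1 v.isUnit
  refine ⟨r, hr, ?_⟩
  rw [← hv, ← hr2, mul_comm]

theorem prime_equiv {A : Type*} [CommRing A] (e : A ≃+* A) {q : A} (hq : Prime q) : Prime (e q) :=
  (MulEquiv.prime_iff e).2 hq

theorem unit_zzz {a b : ℝ[X][X][X]} (h : Associated a b) : ∃ c : ℝ, a = C (C (C c)) * b := by
  obtain ⟨r, hr, hr2⟩ := unit_gen h
  obtain ⟨c, hc, hc2⟩ := isUnit_iff.1 hr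
  obtain ⟨e, he, he2⟩ := isUnit_iff.1 hc
  refine ⟨e, ?_⟩
  rw [hr2, ← hc2, ← he2]

theorem ze_stab3 (q : ℝ[X][X][X]) (hq : 0 < q.natDegree) (h0 : q.coeff 0 ≠ 0) (u w : ℝ)
    (h : Associated (t3h u w q) q) : w ^ q.natDegree = 1 := by
  obtain ⟨c, hc⟩ := unit_zzz h
  have hq0 : q ≠ 0 := by rintro rfl; simp at hq
  have key : ∀ i, (q.coeff i).leadingCoeff.leadingCoeff * w ^ i =
      c * (q.coeff i).leadingCoeff.leadingCoeff := by
    intro i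
    have h1 := congrArg (fun p => (p.coeff i).leadingCoeff.leadingCoeff) hc
    simpa only [t3h_coeff, leadingCoeff_mul, t2_lclc, leadingCoeff_pow, leadingCoeff_C,
      coeff_C_mul] using h1
  have k0 := key 0
  have ke := key q.natDegree
  have n0 : (q.coeff 0).leadingCoeff.leadingCoeff ≠ 0 := by simpa using h0
  have ne : (q.coeff q.natDegree).leadingCoeff.leadingCoeff ≠ 0 := by simpa using hq0
  have hc1 : c = 1 := by
    rw [pow_zero, mul_one] at k0
    exact mul_right_cancel₀ n0 (by rw [one_mul]; exact k0.symm)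
  rw [hc1, one_mul] at ke
  exact mul_left_cancel₀ ne (by rw [mul_one]; exact ke)

theorem ze_step1 (P : ℝ[X][X][X]) (hP : P.coeff 0 ≠ 0) (S T : ℕ) (hS : 0 < S)
    (hPZ : P.natDegree ≤ S) (hPY : ∀ i, (P.coeff i).natDegree ≤ T)
    (hPU : ∀ i, P.coeff i ∈ zLift (zDeg ℝ) T) (δ : ℝ) (hδ : 1 < δ) :
    ∃ R : ℝ[X][X], R ≠ 0 ∧ R.natDegree ≤ 2 * S * T ∧ R ∈ zLift (zDeg ℝ) (2 * S * T) ∧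
      ∀ U Y W : ℝ, (∀ j ≤ S, ev3 (U + j) Y (δ ^ j * W) P = 0) → ev2 U Y R = 0 := by
  classical
  have hP0 : P ≠ 0 := by rintro rfl; simp at hP
  have hδ0 : ∀ j : ℕ, δ ^ j ≠ 0 := fun j => by positivity
  obtain ⟨c, hc⟩ := ze_elim P hP0 (Finset.range (S + 1)) (fun j : ℕ => t3h j (δ ^ j) P) S
    (fun j _ => by rw [t3h_natDegree _ _ (hδ0 j)]; exact hPZ) (by
      intro q hq hqd hqP
      by_contra hcon
      push Not at hcon
      have hq0 : q.coeff 0 ≠ 0 := by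
        obtain ⟨k, rfl⟩ := hqP
        rw [mul_coeff_zero] at hP
        exact left_ne_zero_of_mul hP
      have := ze_prime_count (Finset.range (S + 1))
        (fun j : ℕ => t3 (-j) (δ ^ j)⁻¹ (inv_ne_zero (hδ0 j)) q) P hP0
        (fun v _ => prime_equiv (t3 (-v) (δ ^ v)⁻¹ (inv_ne_zero (hδ0 v))) hq)
        (fun v _ => by rw [t3_apply, t3h_natDegree _ _ (inv_ne_zero (hδ0 v))]; exact hqd)
        (fun v hv => by
          have := map_dvd (t3 (-v) (δ ^ v)⁻¹ (inv_ne_zero (hδ0 v))) (hcon _ hv)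
          rw [t3_apply, t3_apply, t3h_t3h] at this
          simpa [t3h_one, hδ0, t3_apply, inv_mul_cancel₀ (hδ0 v)] using this)
        (fun v hv w hw hvw hass => by
          have h1 := hass.map (t3 w (δ ^ w) (hδ0 w))
          rw [t3_apply, t3_apply, t3_apply, t3_apply, t3h_t3h, t3h_t3h] at h1
          rw [add_neg_cancel, mul_inv_cancel₀ (hδ0 w), t3h_one] at h1
          have h2 := ze_stab3 q hqd hq0 _ _ h1
          have hpos : 0 < δ ^ w * (δ ^ v)⁻¹ := by positivity
          have h3 := (pow_eq_one_iff_of_nonneg hpos.le (by omega)).1 h2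
          rw [mul_inv_eq_one₀ (hδ0 v)] at h3
          exact hvw (pow_right_injective₀ (by linarith) (by linarith) h3).symm)
      rw [Finset.card_range] at this
      omega)
  have hmem : ∀ D : ℕ → AddSubgroup ℝ[X][X], (∀ (r : ℝ) a p, p ∈ D a → C (C r) * p ∈ D a) →
      (∀ i, P.coeff i ∈ D T) → (∀ u p, p ∈ D T → t2 u 0 p ∈ D T) →
      ∀ i, (∑ j ∈ Finset.range (S + 1), c j • t3h j (δ ^ j) P).coeff i ∈ D T := by
    intro D hD hPD ht i
    rw [finsetSum_coeff]
    refine sum_mem fun j _ => ?_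
    rw [coeff_smul, t3h_coeff, ze_coeff_smul]
    apply hD
    rw [mul_comm, ← C_pow, ← C_pow]
    exact hD _ _ _ (ht _ _ (hPD i))
  refine ⟨_, hc, ?_, ?_, ?_⟩
  · have h1 := (zDeg_filt ℝ[X]).resultant (m := P.natDegree) (n := S) (d := T) P
      (∑ j ∈ Finset.range (S + 1), c j • t3h j (δ ^ j) P) hPY
      (hmem (zDeg ℝ[X]) (fun r a p hp => (natDegree_C_mul_le _ _).trans hp) hPY
        (fun u p hp => (t2_natDegree u 0 p).le.trans hp))
    refine le_trans h1 (Nat.mul_le_mul_right _ (by omega))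
  · have h1 := (zLift_filt (zDeg_filt ℝ)).resultant (m := P.natDegree) (n := S) (d := T) P
      (∑ j ∈ Finset.range (S + 1), c j • t3h j (δ ^ j) P) hPU
      (hmem (zLift (zDeg ℝ)) (fun r a p hp i => by
          rw [coeff_C_mul]; exact (natDegree_C_mul_le _ _).trans (hp i)) hPU
        (fun u p hp => t2_filt u 0 T p hp))
    exact (zLift_filt (zDeg_filt ℝ)).mono (Nat.mul_le_mul_right _ (by omega)) h1
  · intro U Y W hj
    obtain ⟨p, q, -, -, hpq⟩ := exists_mul_add_mul_eq_C_resultant (m := P.natDegree) (n := S) P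
      (∑ j ∈ Finset.range (S + 1), c j • t3h j (δ ^ j) P) le_rfl
      (natDegree_sum_le_of_forall_le _ _ fun j hj => (natDegree_smul_le _ _).trans
        (by rw [t3h_natDegree _ _ (hδ0 j)]; exact hPZ)) (by omega)
    have h1 := congrArg (ev3 U Y W) hpq
    have h0 : ev3 U Y W P = 0 := by simpa using hj 0 (by omega)
    rw [map_add, map_mul, map_mul, h0, map_sum] at h1
    have h2 : ∀ j ∈ Finset.range (S + 1), ev3 U Y W (c j • t3h j (δ ^ j) P) = 0 := by
      intro j hjJ
      have e : c j • t3h j (δ ^ j) P = C (C (C (c j))) * t3h j (δ ^ j) P := by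
        rw [Algebra.smul_def]; rfl
      rw [e, map_mul, ev3_t3h, hj j (by simpa [Nat.lt_succ_iff] using hjJ), mul_zero]
    rw [Finset.sum_eq_zero h2] at h1
    have h3 : ∀ r : ℝ[X][X], ev3 U Y W (C r) = ev2 U Y r := by intro r; simp [ev3]
    rw [h3] at h1
    rw [← h1]; ring
open Polynomial

theorem zero_est_aux (P : ℝ[X][X][X]) (hP : P ≠ 0) (S T : ℕ) (hS : 0 < S) (hT : 0 < T)
    (hPZ : P.natDegree ≤ S) (hPY : ∀ i, (P.coeff i).natDegree ≤ T)
    (hPU : ∀ i, P.coeff i ∈ zLift (zDeg ℝ) T) (δ : ℝ) (hδ : 1 < δ)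
    (g x y β γ : ℝ) (hβ : 0 < β) (hγ : 0 < γ) (l₁ l₂ l₃ a₁ a₂ a₃ d : ℕ) (hd : d = 2 * S * T)
    (H : ∀ A B : ℝ, (A ≠ 0 ∨ B ≠ 0) → d < ((Finset.range a₁ ×ˢ Finset.range a₂ ×ˢ Finset.range a₃).image
      (fun j : ℕ × ℕ × ℕ => A * (j.1 - j.2.2 * x + g * (j.2.1 + j.2.2 * y)) + B * (j.2.1 + j.2.2 * y))).card)
    (hinj : Set.InjOn (fun j : ℕ × ℕ × ℕ => (j.1 - j.2.2 * x + g * (j.2.1 + j.2.2 * y) : ℝ))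
      (Finset.range l₁ ×ˢ Finset.range l₂ ×ˢ Finset.range l₃ : Finset (ℕ × ℕ × ℕ)))
    (hcard : 2 * d * d < l₁ * (l₂ * l₃))
    (ha : 0 < a₁ * a₂ * a₃)
    (hv : ∀ i j k : ℕ, i < l₁ + a₁ + S → j < l₂ + a₂ → k < l₃ + a₃ →
      ev3 (i - k * x + g * (j + k * y)) (j + k * y) (δ ^ i * (β ^ j * γ ^ k)) P = 0) : False := by
  classical
  obtain ⟨ha1, ha2, ha3⟩ : 0 < a₁ ∧ 0 < a₂ ∧ 0 < a₃ := by
    refine ⟨?_, ?_, ?_⟩ <;> (apply Nat.pos_of_ne_zero; rintro rfl; simp at ha)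
  obtain ⟨Q, hPQ, hQ⟩ := exists_eq_pow_rootMultiplicity_mul_and_not_dvd P hP 0
  set e := rootMultiplicity 0 P
  rw [C_0, sub_zero] at hPQ hQ
  have hco : ∀ i, Q.coeff i = P.coeff (i + e) := by
    intro i; rw [hPQ, coeff_X_pow_mul]
  have hQ0 : Q.coeff 0 ≠ 0 := by rwa [X_dvd_iff] at hQ
  have hQd : Q.natDegree ≤ S := by
    rw [natDegree_le_iff_coeff_eq_zero]
    intro N hN
    rw [hco]; exact coeff_eq_zero_of_natDegree_lt (by omega)
  obtain ⟨R, hR0, hRY, hRU, hRv⟩ := ze_step1 Q hQ0 S T hS hQd (fun i => by rw [hco]; exact hPY _)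
    (fun i => by rw [hco]; exact hPU _) δ hδ
  rw [← hd] at hRY hRU
  have hd0 : 0 < d := by rw [hd]; positivity
  obtain ⟨N, hN0, hNd, hNv⟩ := ze_step2 R hR0 d hd0 hRY hRU
    (Finset.range a₁ ×ˢ Finset.range a₂ ×ˢ Finset.range a₃)
    (fun j : ℕ × ℕ × ℕ => (j.1 - j.2.2 * x + g * (j.2.1 + j.2.2 * y) : ℝ))
    (fun j : ℕ × ℕ × ℕ => (j.2.1 + j.2.2 * y : ℝ)) H
  have hQv : ∀ i j k : ℕ, i < l₁ + a₁ + S → j < l₂ + a₂ → k < l₃ + a₃ →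
      ev3 (i - k * x + g * (j + k * y)) (j + k * y) (δ ^ i * (β ^ j * γ ^ k)) Q = 0 := by
    intro i j k hi hj hk
    have h1 := hv i j k hi hj hk
    rw [hPQ, map_mul, map_pow] at h1
    rcases mul_eq_zero.1 h1 with h | h
    · have h2 := eq_zero_of_pow_eq_zero h
      have : ev3 (i - k * x + g * (j + k * y)) (j + k * y) (δ ^ i * (β ^ j * γ ^ k)) X
          = δ ^ i * (β ^ j * γ ^ k) := by simp [ev3]
      rw [this] at h2
      have : 0 < δ ^ i * (β ^ j * γ ^ k) := by positivity
      linarith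
    · exact h
  have hR : ∀ i j k : ℕ, i + 1 < l₁ + a₁ → j < l₂ + a₂ → k < l₃ + a₃ →
      ev2 (i - k * x + g * (j + k * y)) (j + k * y) R = 0 := by
    intro i j k hi hj hk
    apply hRv _ _ (δ ^ i * (β ^ j * γ ^ k))
    intro s hs
    have := hQv (i + s) j k (by omega) hj hk
    convert this using 2
    rw [show ((i : ℝ) - k * x + g * (j + k * y) + s) = ((i + s : ℕ) : ℝ) - k * x + g * (j + k * y) by
      push_cast; ring, show δ ^ s * (δ ^ i * (β ^ j * γ ^ k)) = δ ^ (i + s) * (β ^ j * γ ^ k) by ring]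
  have hroots : ∀ j ∈ (Finset.range l₁ ×ˢ Finset.range l₂ ×ˢ Finset.range l₃).image
      (fun j : ℕ × ℕ × ℕ => (j.1 - j.2.2 * x + g * (j.2.1 + j.2.2 * y) : ℝ)), N.eval j = 0 := by
    intro j hj
    rw [Finset.mem_image] at hj
    obtain ⟨⟨i, j, k⟩, hm, rfl⟩ := hj
    simp only [Finset.mem_product, Finset.mem_range] at hm
    apply hNv _ (j + k * y)
    · exact hR i j k (by omega) (by omega) (by omega)
    · rintro ⟨i', j', k'⟩ hm'
      simp only [Finset.mem_product, Finset.mem_range] at hm'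
      have := hR (i + i') (j + j') (k + k') (by omega) (by omega) (by omega)
      convert this using 2
      push_cast
      congr 1 <;> ring
  have hc := Polynomial.card_le_degree_of_subset_roots (p := N)
    (Z := (Finset.range l₁ ×ˢ Finset.range l₂ ×ˢ Finset.range l₃).image
      (fun j : ℕ × ℕ × ℕ => (j.1 - j.2.2 * x + g * (j.2.1 + j.2.2 * y) : ℝ))) (by
      intro a ha
      rw [mem_roots hN0]
      exact hroots a ha)
  rw [Finset.card_image_of_injOn hinj] at hc
  simp at hc
  omega

theorem zero_est (p : ℕ → ℕ → ℕ → ℝ) (S T : ℕ) (t₁ t₂ s₀ : ℕ) (ht₁ : t₁ < T) (ht₂ : t₂ < T)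
    (hs₀ : s₀ < S) (hp : p t₁ t₂ s₀ ≠ 0) (δ : ℝ) (hδ : 1 < δ)
    (g x y β γ : ℝ) (hβ : 0 < β) (hγ : 0 < γ) (l₁ l₂ l₃ a₁ a₂ a₃ d : ℕ) (hd : d = 2 * S * T)
    (H : ∀ A B : ℝ, (A ≠ 0 ∨ B ≠ 0) → d < ((Finset.range a₁ ×ˢ Finset.range a₂ ×ˢ Finset.range a₃).image
      (fun j : ℕ × ℕ × ℕ => A * (j.1 - j.2.2 * x + g * (j.2.1 + j.2.2 * y)) + B * (j.2.1 + j.2.2 * y))).card)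
    (hinj : Set.InjOn (fun j : ℕ × ℕ × ℕ => (j.1 - j.2.2 * x + g * (j.2.1 + j.2.2 * y) : ℝ))
      (Finset.range l₁ ×ˢ Finset.range l₂ ×ˢ Finset.range l₃ : Finset (ℕ × ℕ × ℕ)))
    (hcard : 2 * d * d < l₁ * (l₂ * l₃))
    (ha : 0 < a₁ * a₂ * a₃)
    (hv : ∀ i j k : ℕ, i < l₁ + a₁ + S → j < l₂ + a₂ → k < l₃ + a₃ →
      ∑ s ∈ Finset.range S, ∑ t ∈ Finset.range T, ∑ r ∈ Finset.range T,
        p r t s * (i - k * x + g * (j + k * y)) ^ r * (j + k * y) ^ t *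
          (δ ^ i * (β ^ j * γ ^ k)) ^ s = 0) : False := by
  classical
  let P : ℝ[X][X][X] := ∑ s ∈ Finset.range S, monomial s (∑ t ∈ Finset.range T,
    monomial t (∑ r ∈ Finset.range T, monomial r (p r t s)))
  have hc3 : ∀ s, P.coeff s = if s < S then ∑ t ∈ Finset.range T,
    monomial t (∑ r ∈ Finset.range T, monomial r (p r t s)) else 0 := by
    intro s
    simp only [P, finsetSum_coeff, coeff_monomial, Finset.sum_ite_eq', Finset.mem_range]
  have hc2 : ∀ s t, (P.coeff s).coeff t = if s < S ∧ t < T then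
      ∑ r ∈ Finset.range T, monomial r (p r t s) else 0 := by
    intro s t
    rw [hc3]
    by_cases h : s < S
    · simp only [h, if_true, true_and, finsetSum_coeff, coeff_monomial, Finset.sum_ite_eq',
        Finset.mem_range]
    · simp [h]
  have hc1 : ∀ s t r, ((P.coeff s).coeff t).coeff r = if s < S ∧ t < T ∧ r < T then
      p r t s else 0 := by
    intro s t r
    rw [hc2]
    by_cases h : s < S ∧ t < T
    · simp only [h, if_true, true_and, finsetSum_coeff, coeff_monomial, Finset.sum_ite_eq',
        Finset.mem_range, and_self]
    · rw [if_neg h, if_neg (by tauto)]; simp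
  refine zero_est_aux P ?_ S T (by omega) (by omega) ?_ ?_ ?_ δ hδ g x y β γ hβ hγ l₁ l₂ l₃
    a₁ a₂ a₃ d hd H hinj hcard ha ?_
  · intro h0
    have := hc1 s₀ t₂ t₁
    rw [h0, if_pos ⟨hs₀, ht₂, ht₁⟩] at this
    simp at this
    exact hp this.symm
  · rw [natDegree_le_iff_coeff_eq_zero]
    intro N hN
    rw [hc3, if_neg (by omega)]
  · intro i
    rw [natDegree_le_iff_coeff_eq_zero]
    intro N hN
    rw [hc2, if_neg (by omega)]
  · intro i j
    change natDegree _ ≤ T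
    rw [natDegree_le_iff_coeff_eq_zero]
    intro N hN
    rw [hc1, if_neg (by omega)]
  · intro i j k hi hj hk
    rw [← hv i j k hi hj hk]
    simp only [P, map_sum, ev3, coe_eval₂RingHom, eval₂_monomial, ev2, coe_evalRingHom, eval_monomial]

end PolyPart

theorem count_lemma (x y L a q₀ a₃ d : ℕ) (g : ℝ) (haL : a ≤ L) (h1 : d < a * a₃) (h2 : d < L * L)
    (h3 : d < L * (q₀ + 1)) (hy : a ≤ y)
    (hnb : ∀ q : ℕ, 1 ≤ q → q ≤ q₀ → ∀ p : ℤ, (q * a : ℤ) ≤ |q * x - p * y|)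
    (A B : ℝ) (hAB : A ≠ 0 ∨ B ≠ 0) :
    d < ((Finset.range L ×ˢ Finset.range L ×ˢ Finset.range a₃).image
      (fun j : ℕ × ℕ × ℕ => A * (j.1 - j.2.2 * x + g * (j.2.1 + j.2.2 * y)) + B * (j.2.1 + j.2.2 * y))).card := by
  classical
  set f : ℕ × ℕ × ℕ → ℝ := fun j => A * (j.1 - j.2.2 * x + g * (j.2.1 + j.2.2 * y)) + B * (j.2.1 + j.2.2 * y) with hf
  have key : ∀ s : Finset (ℕ × ℕ × ℕ), s ⊆ Finset.range L ×ˢ Finset.range L ×ˢ Finset.range a₃ →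
      d < s.card → Set.InjOn f s → d < ((Finset.range L ×ˢ Finset.range L ×ˢ Finset.range a₃).image f).card := by
    intro s hs hc hinj
    calc d < s.card := hc
      _ = (s.image f).card := (Finset.card_image_of_injOn hinj).symm
      _ ≤ _ := Finset.card_le_card (Finset.image_subset_image hs)
  have hapos : 0 < a := by
    rcases Nat.eq_zero_or_pos a with h | h
    · subst h; simp at h1
    · exact h
  have ha3pos : 0 < a₃ := by
    rcases Nat.eq_zero_or_pos a₃ with h | h
    · subst h; simp at h1
    · exact h
  have hy0 : 0 < y := by omega
  by_cases hA : A = 0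
  · have hB : B ≠ 0 := by tauto
    refine key ({0} ×ˢ Finset.range a ×ˢ Finset.range a₃) ?_ ?_ ?_
    · intro j hj
      simp only [Finset.mem_product, Finset.mem_singleton, Finset.mem_range] at hj ⊢
      omega
    · simpa using h1
    · rintro ⟨i, j, k⟩ hj ⟨i', j', k'⟩ hj' hff
      simp only [Finset.coe_product, Set.mem_prod, Finset.mem_coe, Finset.mem_singleton,
        Finset.mem_range] at hj hj'
      simp only [hf, hA, zero_mul, zero_add] at hff
      have hff := mul_left_cancel₀ hB hff
      have hn : j + k * y = j' + k' * y := by exact_mod_cast hff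
      have hk : k = k' := by
        have e1 : (j + k * y) / y = k := by
          rw [Nat.add_mul_div_right _ _ hy0, Nat.div_eq_of_lt (by omega)]; simp
        have e2 : (j' + k' * y) / y = k' := by
          rw [Nat.add_mul_div_right _ _ hy0, Nat.div_eq_of_lt (by omega)]; simp
        rw [← e1, hn, e2]
      subst hk
      have : j = j' := by omega
      rw [hj.1, hj'.1, this]
  · by_contra hcon
    obtain ⟨⟨i, j, k⟩, hm, ⟨i', j', k'⟩, hm', hne, hff⟩ :=
      Finset.exists_ne_map_eq_of_card_lt_of_maps_to
      (s := Finset.range a ×ˢ {0} ×ˢ Finset.range a₃)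
      (t := (Finset.range L ×ˢ Finset.range L ×ˢ Finset.range a₃).image f) (f := f)
      (by simp only [Finset.card_product, Finset.card_range, Finset.card_singleton, one_mul]
          omega)
      (by
        intro j hj
        apply Finset.mem_coe.2
        apply Finset.mem_image_of_mem
        simp only [Finset.mem_coe, Finset.mem_product, Finset.mem_singleton, Finset.mem_range] at hj ⊢
        omega)
    simp only [Finset.mem_product, Finset.mem_singleton, Finset.mem_range] at hm hm'
    obtain ⟨hi, rfl, hk⟩ := hm
    obtain ⟨hi', rfl, hk'⟩ := hm'
    simp only [hf] at hff
    have hkk : k ≠ k' := by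
      rintro rfl
      have h5 : A * ((i : ℝ) - i') = 0 := by linear_combination hff
      rcases mul_eq_zero.1 h5 with h | h
      · exact hA h
      · have : i = i' := by
          have : (i : ℝ) = i' := by linarith
          exact_mod_cast this
        subst this
        exact hne rfl
    -- ratio
    set K : ℤ := (k : ℤ) - k' with hK
    set I : ℤ := (i : ℤ) - i' with hI
    have hK0 : K ≠ 0 := by omega
    have hIa : |I| < a := by rw [abs_lt]; constructor <;> omega
    set B' := A * g + B with hB'
    have e1 : B' * (K * y) = A * (x * K - I) := by
      simp only [hK, hI, hB']; push_cast; linear_combination hff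
    let ρ : ℚ := (x * K - I) / (K * y)
    have hρ : B' = A * (ρ : ℝ) := by
      have : (K : ℝ) * y ≠ 0 := by
        have : (K : ℝ) ≠ 0 := by exact_mod_cast hK0
        positivity
      simp only [ρ]; push_cast
      field_simp
      linear_combination e1
    have hρq : (ρ : ℝ) * ρ.den = ρ.num := by
      have := Rat.mul_den_eq_num ρ
      exact_mod_cast this
    have hq : ρ.den ≤ q₀ := by
      by_contra hq
      apply hcon
      refine key (Finset.range L ×ˢ Finset.range (min ρ.den L) ×ˢ {0}) ?_ ?_ ?_
      · intro j hj
        simp only [Finset.mem_product, Finset.mem_singleton, Finset.mem_range] at hj ⊢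
        omega
      · simp only [Finset.card_product, Finset.card_range, Finset.card_singleton, mul_one]
        rcases le_total ρ.den L with h | h
        · rw [min_eq_left h]
          exact h3.trans_le (Nat.mul_le_mul_left _ (by omega))
        · rw [min_eq_right h]; exact h2
      · rintro ⟨i, j, k⟩ hj ⟨i', j', k'⟩ hj' hff
        simp only [Finset.coe_product, Set.mem_prod, Finset.mem_coe, Finset.mem_singleton,
          Finset.mem_range] at hj hj'
        obtain ⟨hi, hj, rfl⟩ := hj
        obtain ⟨hi', hj', rfl⟩ := hj'
        simp only [hf] at hff
        have e2 : A * ((i : ℝ) - i' + ρ * (j - j')) = 0 := by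
          simp only [hB'] at hρ; push_cast at hff; linear_combination hff - ((j : ℝ) - j') * hρ
        have e3 := (mul_eq_zero.1 e2).resolve_left hA
        have e4 : (ρ.den : ℝ) * ((i : ℝ) - i') + ρ.num * (j - j') = 0 := by
          linear_combination (ρ.den : ℝ) * e3 - ((j : ℝ) - j') * hρq
        have e5 : (ρ.den : ℤ) * ((i : ℤ) - i') + ρ.num * (j - j') = 0 := by exact_mod_cast e4
        have e6 : (ρ.den : ℤ) ∣ ρ.num * ((j : ℤ) - j') := ⟨-((i : ℤ) - i'), by linear_combination e5⟩
        have hcop : IsCoprime (ρ.den : ℤ) ρ.num := by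
          rw [Int.isCoprime_iff_gcd_eq_one, Int.gcd_comm]
          simpa [Int.gcd] using ρ.reduced
        have e7 := hcop.dvd_of_dvd_mul_left e6
        have hjj : (j : ℤ) - j' = 0 := by
          apply Int.eq_zero_of_abs_lt_dvd e7
          rw [abs_lt]; constructor <;> omega
        have hjj' : j = j' := by omega
        rw [hjj, mul_zero, add_zero] at e5
        have := (mul_eq_zero.1 e5).resolve_left (by exact_mod_cast ρ.den_ne_zero)
        have : i = i' := by omega
        rw [this, hjj']
    have h7 := hnb ρ.den ρ.den_pos hq ρ.num
    have e8 : (ρ : ℚ) * (K * y) = x * K - I := by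
      have : (K : ℚ) * y ≠ 0 := by
        have : (K : ℚ) ≠ 0 := by exact_mod_cast hK0
        positivity
      simp only [ρ]; field_simp
    have e9 : (ρ.num : ℤ) * (K * y) = ρ.den * (x * K - I) := by
      have := Rat.mul_den_eq_num ρ
      have : (ρ.num : ℚ) * (K * y) = ρ.den * (x * K - I) := by rw [← this, ← e8]; ring
      exact_mod_cast this
    have e10 : K * ((ρ.den : ℤ) * x - ρ.num * y) = ρ.den * I := by linear_combination -e9
    have e11 := congrArg abs e10
    rw [abs_mul, abs_mul, Nat.abs_cast] at e11
    have hK1 : 1 ≤ |K| := Int.one_le_abs hK0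
    have hd : (0 : ℤ) < ρ.den := by exact_mod_cast ρ.den_pos
    nlinarith [abs_nonneg ((ρ.den : ℤ) * x - ρ.num * y)]

theorem liouville_nf (K : IntermediateField ℚ ℝ) [FiniteDimensional ℚ K]
    (hK : Module.finrank ℚ K ≤ 6) (z : K) (hz : IsIntegral ℤ z) (hz0 : z ≠ 0) (B : ℝ) (hB : 1 ≤ B)
    (hσ : ∀ σ : K →ₐ[ℚ] ℂ, ‖σ z‖ ≤ B) : 1 ≤ |(z : ℝ)| * B ^ 5 := by
  classical
  have h1 := Algebra.norm_eq_prod_embeddings ℚ ℂ z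
  have h2 : IsIntegral ℤ (Algebra.norm ℚ z) := Algebra.isIntegral_norm ℚ hz
  obtain ⟨N, hN⟩ := IsIntegrallyClosed.isIntegral_iff.1 h2
  have hN0 : N ≠ 0 := by
    rintro rfl
    rw [map_zero] at hN
    exact hz0 (Algebra.norm_eq_zero_iff.1 hN.symm)
  let σ₀ : K →ₐ[ℚ] ℂ := (Complex.ofRealAm.restrictScalars ℚ).comp K.val
  have h3 : ‖σ₀ z‖ = |(z : ℝ)| := by
    have : σ₀ z = ((z : ℝ) : ℂ) := rfl
    rw [this, Complex.norm_real, Real.norm_eq_abs]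
  have h4 : (1 : ℝ) ≤ ‖∏ σ : K →ₐ[ℚ] ℂ, σ z‖ := by
    rw [← h1, ← hN]
    simp only [algebraMap_int_eq, eq_intCast, map_intCast, Complex.norm_intCast]
    exact_mod_cast Int.one_le_abs hN0
  rw [norm_prod, ← Finset.mul_prod_erase _ _ (Finset.mem_univ σ₀), h3] at h4
  have hcard : (Finset.univ.erase σ₀).card ≤ 5 := by
    rw [Finset.card_erase_of_mem (Finset.mem_univ _), Finset.card_univ, AlgHom.card]
    omega
  have h5 : ∏ σ ∈ Finset.univ.erase σ₀, ‖σ z‖ ≤ B ^ 5 :=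
    calc ∏ σ ∈ Finset.univ.erase σ₀, ‖σ z‖ ≤ ∏ σ ∈ Finset.univ.erase σ₀, B :=
          Finset.prod_le_prod (fun _ _ => norm_nonneg _) (fun σ _ => hσ σ)
      _ = B ^ (Finset.univ.erase σ₀).card := by rw [Finset.prod_const]
      _ ≤ B ^ 5 := pow_le_pow_right₀ hB hcard
  exact h4.trans (mul_le_mul_of_nonneg_left h5 (abs_nonneg _))

/-- pigeonhole -/
theorem pigeon_forms {I E : Type*} [Fintype I] [Fintype E] (c : E → I → ℝ) (Cb : ℝ) (hCb : 0 < Cb)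
    (hc : ∀ e i, |c e i| ≤ Cb) (H : ℕ) (hH : 1 ≤ H) (hE : 0 < Fintype.card E)
    (hcard : 12 * Fintype.card E ≤ Fintype.card I) :
    ∃ p : I → ℤ, p ≠ 0 ∧ (∀ i, |p i| ≤ H) ∧
      ∀ e, |∑ i, c e i * p i| ≤ 2 * Fintype.card I * Cb / (H : ℝ) ^ 11 := by
  classical
  set N : ℝ := ((Fintype.card I : ℕ) : ℝ) with hN
  have hIpos : 0 < Fintype.card I := by omega
  have hN0 : 0 < N := by simpa [hN] using hIpos
  have hH0 : (0 : ℝ) < H := by exact_mod_cast hH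
  set V : ℝ := N * Cb * H with hV
  have hV0 : 0 < V := by positivity
  set K : ℕ := H ^ 12 with hKdef
  have hK0 : (0 : ℝ) < K := by simp only [hKdef]; positivity
  let v : (I → Fin (H + 1)) → E → ℝ := fun p e => ∑ i, c e i * ((p i : ℕ) : ℝ)
  have hv : ∀ p e, |v p e| ≤ V := by
    intro p e
    calc |v p e| ≤ ∑ i, |c e i * ((p i : ℕ) : ℝ)| := Finset.abs_sum_le_sum_abs _ _
      _ ≤ ∑ i : I, Cb * H := by
          refine Finset.sum_le_sum fun i _ => ?_
          rw [abs_mul, Nat.abs_cast]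
          have : ((p i : ℕ) : ℝ) ≤ H := by
            have := (p i).2
            exact_mod_cast (by omega : (p i : ℕ) ≤ H)
          exact mul_le_mul (hc e i) this (by positivity) hCb.le
      _ = V := by simp [hV, hN]; ring
  let φ : (I → Fin (H + 1)) → E → Fin (K + 1) := fun p e =>
    ⟨⌊(v p e + V) * K / (2 * V)⌋₊, by
      rw [Nat.lt_succ_iff]
      apply Nat.floor_le_of_le
      rw [div_le_iff₀ (by positivity)]
      have := (abs_le.1 (hv p e)).2
      nlinarith⟩
  have hlt : Fintype.card (E → Fin (K + 1)) < Fintype.card (I → Fin (H + 1)) := by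
    simp only [Fintype.card_fun, Fintype.card_fin]
    calc (K + 1) ^ Fintype.card E < ((H + 1) ^ 12) ^ Fintype.card E := by
          apply Nat.pow_lt_pow_left _ (by omega)
          simp only [hKdef]
          have : (H + 1) ^ 12 = H ^ 12 + 12 * H ^ 11 + 66 * H ^ 10 + 220 * H ^ 9 + 495 * H ^ 8
            + 792 * H ^ 7 + 924 * H ^ 6 + 792 * H ^ 5 + 495 * H ^ 4 + 220 * H ^ 3 + 66 * H ^ 2
            + 12 * H + 1 := by ring
          omega
      _ = (H + 1) ^ (12 * Fintype.card E) := by rw [← pow_mul]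
      _ ≤ (H + 1) ^ Fintype.card I := Nat.pow_le_pow_right (by omega) hcard
  obtain ⟨p, q, hpq, hφ⟩ := Fintype.exists_ne_map_eq_of_card_lt φ hlt
  refine ⟨fun i => ((p i : ℕ) : ℤ) - ((q i : ℕ) : ℤ), ?_, ?_, ?_⟩
  · intro h0
    apply hpq
    funext i
    have := congrFun h0 i
    simp only [Pi.zero_apply] at this
    exact Fin.ext (by omega)
  · intro i
    have h1 := (p i).2
    have h2 := (q i).2
    show |((p i : ℕ) : ℤ) - ((q i : ℕ) : ℤ)| ≤ H
    rw [abs_le]; constructor <;> omega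
  · intro e
    have h1 : ∑ i, c e i * ((((p i : ℕ) : ℤ) - ((q i : ℕ) : ℤ) : ℤ) : ℝ) = v p e - v q e := by
      simp only [v, ← Finset.sum_sub_distrib]
      refine Finset.sum_congr rfl fun i _ => ?_
      push_cast; ring
    rw [h1]
    have h2 := congrArg (fun x : Fin (K + 1) => (x : ℕ)) (congrFun hφ e)
    simp only [φ] at h2
    have hp0 : 0 ≤ (v p e + V) * K / (2 * V) := by
      have := (abs_le.1 (hv p e)).1
      apply div_nonneg (mul_nonneg (by linarith) hK0.le) (by positivity)
    have hq0 : 0 ≤ (v q e + V) * K / (2 * V) := by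
      have := (abs_le.1 (hv q e)).1
      apply div_nonneg (mul_nonneg (by linarith) hK0.le) (by positivity)
    have f1 := Nat.floor_le hp0
    have f2 := Nat.lt_floor_add_one ((v p e + V) * K / (2 * V))
    have f3 := Nat.floor_le hq0
    have f4 := Nat.lt_floor_add_one ((v q e + V) * K / (2 * V))
    rw [h2] at f1 f2
    have h3 : |(v p e + V) * K / (2 * V) - (v q e + V) * K / (2 * V)| ≤ 1 := by
      rw [abs_le]; constructor <;> linarith
    have h4 : (v p e + V) * K / (2 * V) - (v q e + V) * K / (2 * V) = (v p e - v q e) * (K / (2 * V)) := by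
      ring
    rw [h4, abs_mul, abs_of_pos (by positivity : 0 < (K : ℝ) / (2 * V))] at h3
    have h5 : |v p e - v q e| ≤ 2 * V / K := by
      rw [le_div_iff₀ hK0]
      have : |v p e - v q e| * (K / (2 * V)) * (2 * V) ≤ 1 * (2 * V) := by gcongr
      have e1 : |v p e - v q e| * (K / (2 * V)) * (2 * V) = |v p e - v q e| * K := by field_simp
      linarith
    refine h5.trans (le_of_eq ?_)
    simp only [hV, hKdef]
    push_cast
    field_simp

theorem binom_fin (T : ℕ) (t : ℕ) (ht : t < T) (a b : ℝ) :
    ∑ k : Fin T, (t.choose k : ℝ) * a ^ (k : ℕ) * b ^ (t - k) = (a + b) ^ t := by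
  rw [← Finset.sum_range (fun k => (t.choose k : ℝ) * a ^ k * b ^ (t - k)), add_pow]
  symm
  calc _ = ∑ m ∈ Finset.range (t + 1), (t.choose m : ℝ) * a ^ m * b ^ (t - m) :=
        Finset.sum_congr rfl fun _ _ => by ring
    _ = _ := by
      apply Finset.sum_subset
      · intro x hx; simp only [Finset.mem_range] at *; omega
      · intro x _ hx
        simp only [Finset.mem_range, not_lt] at hx
        rw [Nat.choose_eq_zero_of_lt (by omega)]; simp

theorem exp_tail_real (M : ℕ) (r ρ : ℝ) (hr : 0 ≤ r) (hρ : 1 ≤ ρ) :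
    Real.exp r - ∑ m ∈ Finset.range M, r ^ m / m.factorial ≤ Real.exp (ρ * r) / ρ ^ M := by
  have hexp : ∀ x : ℝ, HasSum (fun n : ℕ => x ^ n / n.factorial) (Real.exp x) := by
    intro x
    rw [Real.exp_eq_exp_ℝ]
    exact NormedSpace.expSeries_div_hasSum_exp x
  have h2 : HasSum (fun m : ℕ => if m ∈ Finset.range M then r ^ m / (m.factorial : ℝ) else 0)
      (∑ m ∈ Finset.range M, r ^ m / m.factorial) := by
    have := hasSum_sum_of_ne_finset_zero (L := SummationFilter.unconditional ℕ) (s := Finset.range M)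
      (f := fun m : ℕ => if m ∈ Finset.range M then r ^ m / (m.factorial : ℝ) else 0)
      (fun b hb => by simp [hb])
    rw [Finset.sum_ite_mem, Finset.inter_self] at this
    exact this
  refine hasSum_le (fun m => ?_) ((hexp r).sub h2) ((hexp (ρ * r)).div_const (ρ ^ M))
  have hρ0 : 0 < ρ := by linarith
  split_ifs with h
  · simp only [sub_self]; positivity
  · simp only [Finset.mem_range, not_lt] at h
    rw [sub_zero, le_div_iff₀ (by positivity), mul_pow, mul_comm (ρ ^ m), div_mul_eq_mul_div]
    have := pow_le_pow_right₀ hρ h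
    gcongr

theorem exp_tail (M : ℕ) (x B ρ : ℝ) (hx : |x| ≤ B) (hρ : 1 ≤ ρ) :
    |Real.exp x - ∑ m : Fin M, x ^ (m : ℕ) / (m : ℕ).factorial| ≤ Real.exp (ρ * B) / ρ ^ M := by
  have hB : 0 ≤ B := (abs_nonneg x).trans hx
  have h := Complex.norm_exp_sub_sum_le_exp_norm_sub_sum (x : ℂ) M
  have h0 : (Complex.exp x - ∑ m ∈ Finset.range M, (x : ℂ) ^ m / m.factorial) =
      ((Real.exp x - ∑ m ∈ Finset.range M, x ^ m / m.factorial : ℝ) : ℂ) := by push_cast; rfl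
  rw [← Finset.sum_range (fun m => x ^ m / (m.factorial : ℝ))]
  rw [h0, Complex.norm_real, Complex.norm_real, Real.norm_eq_abs, Real.norm_eq_abs] at h
  refine h.trans ((exp_tail_real M |x| ρ (abs_nonneg x) hρ).trans ?_)
  have hρ0 : 0 < ρ := by linarith
  gcongr

theorem exp_part_le (M : ℕ) (x : ℝ) (hx : 0 ≤ x) :
    ∑ m : Fin M, x ^ (m : ℕ) / (m : ℕ).factorial ≤ Real.exp x := by
  rw [← Finset.sum_range (fun m => x ^ m / (m.factorial : ℝ))]
  exact Real.sum_le_exp_of_nonneg hx M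


set_option maxHeartbeats 1000000 in
theorem aux_fn (T S M : ℕ) (l1 l2 g W Ym V ρ : ℝ) (D : ℕ) (hT : 0 < T) (hl1 : 0 < l1)
    (hW : 0 < W) (hYm : 1 ≤ Ym) (hG : 0 ≤ l1 * g - l2) (hV : (W + (l1 * g - l2) * Ym) / l1 ≤ V)
    (hV1 : 1 ≤ V) (hρ : 1 ≤ ρ)
    (hD : (T * T * S : ℝ) * (V ^ T * Ym ^ T * Real.exp (S * W)) ≤ D)
    (hcard : 12 * (2 * (T + M)) ≤ T * S) :
    ∃ p : ℕ → ℕ → ℕ → ℤ, (∃ t₁ t₂ s, t₁ < T ∧ t₂ < T ∧ s < S ∧ p t₁ t₂ s ≠ 0) ∧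
      (∀ r t s, |p r t s| ≤ (D : ℤ) ^ 2) ∧
      ∀ X Y : ℝ, |l1 * X + l2 * Y| ≤ W → |Y| ≤ Ym →
        |∑ s ∈ Finset.range S, ∑ t ∈ Finset.range T, ∑ r ∈ Finset.range T,
          (p r t s : ℝ) * (X + g * Y) ^ r * Y ^ t * Real.exp (l1 * X + l2 * Y) ^ s| ≤
        1 / (D : ℝ) ^ 20 + (D : ℝ) ^ 3 * (Real.exp (ρ * (S * W)) / ρ ^ M) := by
  classical
  set G := l1 * g - l2 with hGdef
  have hS : 0 < S := by
    rcases Nat.eq_zero_or_pos S with h | h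
    · subst h; omega
    · exact h
  have hYm0 : 0 < Ym := by linarith
  have hV0 : 0 < V := by linarith
  have hρ0 : 0 < ρ := by linarith
  let e0 : Fin T × Fin T × Fin S → Fin T → Fin M → Fin (T + M) × Fin (2 * T) :=
    fun i k m => (⟨k + m, by omega⟩, ⟨i.1 - k + i.2.1, by omega⟩)
  let co : Fin T × Fin T × Fin S → Fin T → Fin M → ℝ := fun i k m =>
    ((i.1 : ℕ).choose k : ℝ) * G ^ ((i.1 : ℕ) - k) / l1 ^ (i.1 : ℕ) *
      (((i.2.2 : ℕ) : ℝ) ^ (m : ℕ) / (m : ℕ).factorial)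
  have hco : ∀ i k m, 0 ≤ co i k m := fun i k m => by
    simp only [co]; positivity
  -- the truncated monomial evaluated
  have heval : ∀ (i : Fin T × Fin T × Fin S) (w Y : ℝ),
      ∑ k, ∑ m, co i k m * (w ^ ((e0 i k m).1 : ℕ) * Y ^ ((e0 i k m).2 : ℕ)) =
      ((w + G * Y) / l1) ^ (i.1 : ℕ) * Y ^ (i.2.1 : ℕ) *
        ∑ m : Fin M, (((i.2.2 : ℕ) : ℝ) * w) ^ (m : ℕ) / (m : ℕ).factorial := by
    intro i w Y
    rw [div_pow, ← binom_fin T i.1 i.1.2 w (G * Y), Finset.sum_div, Finset.sum_mul, Finset.sum_mul]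
    refine Finset.sum_congr rfl fun k _ => ?_
    rw [Finset.mul_sum]
    refine Finset.sum_congr rfl fun m _ => ?_
    simp only [co, e0, pow_add, mul_pow]
    ring
  let c : Fin (T + M) × Fin (2 * T) → Fin T × Fin T × Fin S → ℝ := fun e i =>
    ∑ k, ∑ m, if e0 i k m = e then co i k m * (W ^ (e.1 : ℕ) * Ym ^ (e.2 : ℕ)) else 0
  set Cb := V ^ T * Ym ^ T * Real.exp (S * W) with hCb
  have hCb1 : 1 ≤ Cb := by
    have h1 := one_le_pow₀ (n := T) hV1
    have h2 := one_le_pow₀ (n := T) hYm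
    have h3 : 1 ≤ Real.exp (S * W) := Real.one_le_exp (by positivity)
    have : 1 ≤ V ^ T * Ym ^ T := one_le_mul_of_one_le_of_one_le h1 h2
    exact one_le_mul_of_one_le_of_one_le this h3
  have hpolyb : ∀ (i : Fin T × Fin T × Fin S) , 
      V ^ (i.1 : ℕ) * Ym ^ (i.2.1 : ℕ) ≤ V ^ T * Ym ^ T := by
    intro i
    have h1 : V ^ (i.1 : ℕ) ≤ V ^ T := pow_le_pow_right₀ hV1 i.1.2.le
    have h2 : Ym ^ (i.2.1 : ℕ) ≤ Ym ^ T := pow_le_pow_right₀ hYm i.2.1.2.le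
    gcongr
  have hsS : ∀ (i : Fin T × Fin T × Fin S), (((i.2.2 : ℕ) : ℝ)) ≤ S := by
    intro i; exact_mod_cast i.2.2.2.le
  have hc : ∀ e i, |c e i| ≤ Cb := by
    intro e i
    have hnn : 0 ≤ c e i := Finset.sum_nonneg fun k _ => Finset.sum_nonneg fun m _ => by
      split_ifs
      · have := hco i k m; positivity
      · exact le_rfl
    rw [abs_of_nonneg hnn]
    calc c e i ≤ ∑ k, ∑ m, co i k m * (W ^ ((e0 i k m).1 : ℕ) * Ym ^ ((e0 i k m).2 : ℕ)) := by
          refine Finset.sum_le_sum fun k _ => Finset.sum_le_sum fun m _ => ?_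
          have := hco i k m
          split_ifs with h
          · rw [h]
          · positivity
      _ = ((W + G * Ym) / l1) ^ (i.1 : ℕ) * Ym ^ (i.2.1 : ℕ) *
        ∑ m : Fin M, (((i.2.2 : ℕ) : ℝ) * W) ^ (m : ℕ) / (m : ℕ).factorial := heval i W Ym
      _ ≤ V ^ (i.1 : ℕ) * Ym ^ (i.2.1 : ℕ) * Real.exp (((i.2.2 : ℕ) : ℝ) * W) := by
          have h1 := exp_part_le M (((i.2.2 : ℕ) : ℝ) * W) (by positivity)
          have h2 : ((W + G * Ym) / l1) ^ (i.1 : ℕ) ≤ V ^ (i.1 : ℕ) :=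
            pow_le_pow_left₀ (by positivity) hV _
          have h3 : 0 ≤ ∑ m : Fin M, (((i.2.2 : ℕ) : ℝ) * W) ^ (m : ℕ) / (m : ℕ).factorial :=
            Finset.sum_nonneg fun m _ => by positivity
          gcongr
      _ ≤ Cb := by
          have := hpolyb i
          have := hsS i
          rw [hCb]; gcongr
  have hN1 : (1 : ℝ) ≤ T * T * S := by
    have : 1 ≤ T * T * S := Nat.mul_pos (Nat.mul_pos hT hT) hS
    exact_mod_cast this
  have hDr : (1 : ℝ) ≤ D := by nlinarith
  have hD1 : 1 ≤ D := by exact_mod_cast hDr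
  have hND : (T * T * S : ℝ) ≤ D := by nlinarith
  have hcE : Fintype.card (Fin (T + M) × Fin (2 * T)) = (T + M) * (2 * T) := by simp
  have hcI : Fintype.card (Fin T × Fin T × Fin S) = T * (T * S) := by simp
  obtain ⟨p, hp0, hpb, hpe⟩ := pigeon_forms c Cb (by linarith) hc (D ^ 2) (Nat.one_le_pow _ _ hD1)
    (by rw [hcE]; positivity) (by rw [hcE, hcI]; nlinarith)
  rw [hcI] at hpe
  refine ⟨fun r t s => if h : r < T ∧ t < T ∧ s < S then p (⟨r, h.1⟩, ⟨t, h.2.1⟩, ⟨s, h.2.2⟩) else 0,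
    ?_, ?_, ?_⟩
  · obtain ⟨i, hi⟩ := Function.ne_iff.1 hp0
    refine ⟨i.1, i.2.1, i.2.2, i.1.2, i.2.1.2, i.2.2.2, ?_⟩
    simpa using hi
  · intro r t s
    dsimp only
    split_ifs with h
    · have := hpb (⟨r, h.1⟩, ⟨t, h.2.1⟩, ⟨s, h.2.2⟩)
      exact_mod_cast this
    · simp
  · intro X Y hw hY
    set w := l1 * X + l2 * Y with hwdef
    have hUw : X + g * Y = (w + G * Y) / l1 := by
      rw [hwdef, hGdef]; field_simp; ring
    have hconv : ∑ s ∈ Finset.range S, ∑ t ∈ Finset.range T, ∑ r ∈ Finset.range T,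
          (((if h : r < T ∧ t < T ∧ s < S then p (⟨r, h.1⟩, ⟨t, h.2.1⟩, ⟨s, h.2.2⟩) else 0 : ℤ)) : ℝ)
            * (X + g * Y) ^ r * Y ^ t * Real.exp w ^ s =
        ∑ i : Fin T × Fin T × Fin S, (p i : ℝ) * (((w + G * Y) / l1) ^ (i.1 : ℕ) * Y ^ (i.2.1 : ℕ) *
          Real.exp (((i.2.2 : ℕ) : ℝ) * w)) := by
      simp_rw [Finset.sum_range, Fintype.sum_prod_type]
      rw [Finset.sum_comm, Finset.sum_congr rfl fun t _ => Finset.sum_comm, Finset.sum_comm]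
      refine Finset.sum_congr rfl fun r _ => Finset.sum_congr rfl fun t _ =>
        Finset.sum_congr rfl fun s _ => ?_
      rw [dif_pos ⟨r.2, t.2, s.2⟩, hUw, Real.exp_nat_mul]
      ring
    rw [hconv]
    set tl := Real.exp (ρ * (S * W)) / ρ ^ M with htl
    have htl0 : 0 ≤ tl := by positivity
    have hUV : |(w + G * Y) / l1| ≤ V := by
      refine le_trans ?_ hV
      rw [abs_div, abs_of_pos hl1]
      gcongr
      calc |w + G * Y| ≤ |w| + |G * Y| := abs_add_le _ _
        _ ≤ W + G * Ym := by
          rw [abs_mul, abs_of_nonneg hG]; gcongr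
    have hmono : ∀ i : Fin T × Fin T × Fin S,
        |((w + G * Y) / l1) ^ (i.1 : ℕ) * Y ^ (i.2.1 : ℕ)| ≤ V ^ T * Ym ^ T := by
      intro i
      rw [abs_mul, abs_pow, abs_pow]
      refine le_trans ?_ (hpolyb i)
      gcongr
    have hsplit : ∑ i : Fin T × Fin T × Fin S, (p i : ℝ) * (((w + G * Y) / l1) ^ (i.1 : ℕ) *
          Y ^ (i.2.1 : ℕ) * Real.exp (((i.2.2 : ℕ) : ℝ) * w)) =
        (∑ i, (p i : ℝ) * ∑ k, ∑ m, co i k m * (w ^ ((e0 i k m).1 : ℕ) * Y ^ ((e0 i k m).2 : ℕ)))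
        + ∑ i : Fin T × Fin T × Fin S, (p i : ℝ) * (((w + G * Y) / l1) ^ (i.1 : ℕ) *
          Y ^ (i.2.1 : ℕ) * (Real.exp (((i.2.2 : ℕ) : ℝ) * w) -
            ∑ m : Fin M, (((i.2.2 : ℕ) : ℝ) * w) ^ (m : ℕ) / (m : ℕ).factorial)) := by
      rw [← Finset.sum_add_distrib]
      refine Finset.sum_congr rfl fun i _ => ?_
      rw [heval]; ring
    have hfirst : (∑ i, (p i : ℝ) * ∑ k, ∑ m, co i k m *
        (w ^ ((e0 i k m).1 : ℕ) * Y ^ ((e0 i k m).2 : ℕ))) =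
        ∑ e : Fin (T + M) × Fin (2 * T), ((w / W) ^ (e.1 : ℕ) * (Y / Ym) ^ (e.2 : ℕ)) *
          ∑ i, c e i * p i := by
      have : ∀ i k m, co i k m * (w ^ ((e0 i k m).1 : ℕ) * Y ^ ((e0 i k m).2 : ℕ)) =
          ∑ e : Fin (T + M) × Fin (2 * T), ((w / W) ^ (e.1 : ℕ) * (Y / Ym) ^ (e.2 : ℕ)) *
            if e0 i k m = e then co i k m * (W ^ (e.1 : ℕ) * Ym ^ (e.2 : ℕ)) else 0 := by
        intro i k m
        simp only [mul_ite, mul_zero]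
        rw [Finset.sum_ite_eq, if_pos (Finset.mem_univ _), div_pow, div_pow]
        field_simp
      have h2 : ∀ i, ∑ k, ∑ m, co i k m * (w ^ ((e0 i k m).1 : ℕ) * Y ^ ((e0 i k m).2 : ℕ)) =
          ∑ e : Fin (T + M) × Fin (2 * T), ((w / W) ^ (e.1 : ℕ) * (Y / Ym) ^ (e.2 : ℕ)) * c e i := by
        intro i
        simp_rw [this, c, Finset.mul_sum]
        rw [Finset.sum_comm (s := Finset.univ (α := Fin (T + M) × Fin (2 * T)))]
        exact Finset.sum_congr rfl fun k _ => Finset.sum_comm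
      simp_rw [h2, Finset.mul_sum]
      rw [Finset.sum_comm]
      exact Finset.sum_congr rfl fun e _ => Finset.sum_congr rfl fun i _ => by ring
    have hb1 : |∑ e : Fin (T + M) × Fin (2 * T), ((w / W) ^ (e.1 : ℕ) * (Y / Ym) ^ (e.2 : ℕ)) *
          ∑ i, c e i * p i| ≤ 1 / (D : ℝ) ^ 20 := by
      have hq1 : |w / W| ≤ 1 := by rw [abs_div, abs_of_pos hW]; exact div_le_one_of_le₀ hw hW.le
      have hq2 : |Y / Ym| ≤ 1 := by rw [abs_div, abs_of_pos hYm0]; exact div_le_one_of_le₀ hY hYm0.le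
      calc _ ≤ ∑ e : Fin (T + M) × Fin (2 * T), |((w / W) ^ (e.1 : ℕ) * (Y / Ym) ^ (e.2 : ℕ)) *
            ∑ i, c e i * p i| := Finset.abs_sum_le_sum_abs _ _
        _ ≤ ∑ e : Fin (T + M) × Fin (2 * T), 2 * ((T * (T * S) : ℕ) : ℝ) * Cb / ((D ^ 2 : ℕ) : ℝ) ^ 11 := by
          refine Finset.sum_le_sum fun e _ => ?_
          rw [abs_mul, abs_mul, abs_pow, abs_pow]
          have h1 : |w / W| ^ (e.1 : ℕ) ≤ 1 := pow_le_one₀ (abs_nonneg _) hq1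
          have h2 : |Y / Ym| ^ (e.2 : ℕ) ≤ 1 := pow_le_one₀ (abs_nonneg _) hq2
          have h3 : |w / W| ^ (e.1 : ℕ) * |Y / Ym| ^ (e.2 : ℕ) ≤ 1 := mul_le_one₀ h1 (by positivity) h2
          calc _ ≤ 1 * |∑ i, c e i * p i| := by gcongr
            _ ≤ _ := by rw [one_mul]; exact hpe e
        _ = (((T + M) * (2 * T) : ℕ) : ℝ) * (2 * ((T * (T * S) : ℕ) : ℝ) * Cb / ((D ^ 2 : ℕ) : ℝ) ^ 11) := by
          rw [Finset.sum_const, Finset.card_univ, hcE, nsmul_eq_mul]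
        _ ≤ 1 / (D : ℝ) ^ 20 := by
          have h1 : (12 : ℝ) * (((T + M) * (2 * T) : ℕ) : ℝ) ≤ T * T * S := by
            have : 12 * ((T + M) * (2 * T)) ≤ T * T * S := by nlinarith
            exact_mod_cast this
          have h2 : ((T * (T * S) : ℕ) : ℝ) * Cb ≤ D := by
            push_cast; rw [← mul_assoc (T : ℝ) T S]; exact hD
          have h3 : (((T + M) * (2 * T) : ℕ) : ℝ) * 2 ≤ D := by nlinarith
          have h4 : (((T + M) * (2 * T) : ℕ) : ℝ) * 2 * (((T * (T * S) : ℕ) : ℝ) * Cb) ≤ D * D :=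
            mul_le_mul h3 h2 (by positivity) (by positivity)
          generalize (((T + M) * (2 * T) : ℕ) : ℝ) = c1 at *
          generalize ((T * (T * S) : ℕ) : ℝ) = c2 at *
          have hD0 : (0 : ℝ) < D := by linarith
          calc c1 * (2 * c2 * Cb / ((D ^ 2 : ℕ) : ℝ) ^ 11) = (c1 * 2 * (c2 * Cb)) / ((D : ℝ) ^ 22) := by
                push_cast; ring
            _ ≤ (D * D) / ((D : ℝ) ^ 22) := by gcongr
            _ = _ := by field_simp
    have hb2 : |∑ i : Fin T × Fin T × Fin S, (p i : ℝ) * (((w + G * Y) / l1) ^ (i.1 : ℕ) *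
          Y ^ (i.2.1 : ℕ) * (Real.exp (((i.2.2 : ℕ) : ℝ) * w) -
            ∑ m : Fin M, (((i.2.2 : ℕ) : ℝ) * w) ^ (m : ℕ) / (m : ℕ).factorial))| ≤ (D : ℝ) ^ 3 * tl := by
      calc _ ≤ ∑ i : Fin T × Fin T × Fin S, |(p i : ℝ) * (((w + G * Y) / l1) ^ (i.1 : ℕ) *
          Y ^ (i.2.1 : ℕ) * (Real.exp (((i.2.2 : ℕ) : ℝ) * w) -
            ∑ m : Fin M, (((i.2.2 : ℕ) : ℝ) * w) ^ (m : ℕ) / (m : ℕ).factorial))| :=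
            Finset.abs_sum_le_sum_abs _ _
        _ ≤ ∑ i : Fin T × Fin T × Fin S, (D : ℝ) ^ 2 * (V ^ T * Ym ^ T * tl) := by
          refine Finset.sum_le_sum fun i _ => ?_
          rw [abs_mul, abs_mul]
          have h1 : |(p i : ℝ)| ≤ (D : ℝ) ^ 2 := by
            have := hpb i
            exact_mod_cast this
          have h2 := exp_tail M (((i.2.2 : ℕ) : ℝ) * w) (S * W) ρ (by
            rw [abs_mul, Nat.abs_cast]
            have := hsS i
            gcongr) hρ
          have h3 := hmono i
          gcongr
        _ = (T * T * S : ℝ) * ((D : ℝ) ^ 2 * (V ^ T * Ym ^ T * tl)) := by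
          rw [Finset.sum_const, Finset.card_univ, hcI, nsmul_eq_mul]; push_cast; ring
        _ ≤ (D : ℝ) ^ 3 * tl := by
          have h1 : V ^ T * Ym ^ T ≤ Cb := by
            rw [hCb]
            exact le_mul_of_one_le_right (by positivity) (Real.one_le_exp (by positivity))
          have h2 : (T * T * S : ℝ) * (V ^ T * Ym ^ T) ≤ D :=
            le_trans (by gcongr) hD
          calc _ = (T * T * S : ℝ) * (V ^ T * Ym ^ T) * ((D : ℝ) ^ 2 * tl) := by ring
            _ ≤ D * ((D : ℝ) ^ 2 * tl) := by gcongr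
            _ = _ := by ring
    rw [hsplit, hfirst]
    exact (abs_add_le _ _).trans (add_le_add hb1 hb2)

set_option maxHeartbeats 1000000 in
theorem A_vanish (K : IntermediateField ℚ ℝ) [FiniteDimensional ℚ K]
    (hK : Module.finrank ℚ K ≤ 6) (ad aa u v : K) (iad : IsIntegral ℤ ad) (iaa : IsIntegral ℤ aa)
    (iu : IsIntegral ℤ u) (iv : IsIntegral ℤ v) (h1d : 1 < (ad : ℝ)) (h1a : 1 < (aa : ℝ))
    (hu0 : 0 < (u : ℝ)) (hv0 : 0 < (v : ℝ)) (h : ℝ) (hh : 0 ≤ h)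
    (hσd : ∀ σ : K →ₐ[ℚ] ℂ, ‖σ ad‖ ≤ (ad : ℝ)) (hσa : ∀ σ : K →ₐ[ℚ] ℂ, ‖σ aa‖ ≤ (aa : ℝ))
    (hσu : ∀ σ : K →ₐ[ℚ] ℂ, ‖σ u‖ ≤ Real.exp h) (hσv : ∀ σ : K →ₐ[ℚ] ℂ, ‖σ v‖ ≤ Real.exp h)
    (huv : |Real.log u - Real.log v| ≤ h)
    (x y g S T M n1 n2 n3 D : ℕ) (W Ym V ρ Λ : ℝ)
    (hΛ : Λ = Real.log u - Real.log v + x * Real.log ad - y * Real.log aa)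
    (hT : 0 < T) (hS : 0 < S) (hYm : 1 ≤ Ym) (hG : 0 ≤ Real.log ad * g - Real.log aa)
    (hV : (W + (Real.log ad * g - Real.log aa) * Ym) / Real.log ad ≤ V)
    (hV1 : 1 ≤ V) (hρ : 1 ≤ ρ) (hW0 : 0 < W)
    (hW : n1 * Real.log ad + n2 * Real.log aa + n3 * h + n3 * |Λ| ≤ W)
    (hYmy : (n2 : ℝ) + n3 * y ≤ Ym)
    (hD : (T * T * S : ℝ) * (V ^ T * Ym ^ T * Real.exp (S * W)) ≤ D) (hD2 : 2 ≤ D)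
    (hcard : 12 * (2 * (T + M)) ≤ T * S)
    (htl : (D : ℝ) ^ 19 * (Real.exp (ρ * (S * W)) / ρ ^ M) ≤ 1 / 4)
    (hsm : (D : ℝ) ^ 19 * (2 * (S * n3 * |Λ|)) ≤ 1 / 4) :
    ∃ p : ℕ → ℕ → ℕ → ℝ, (∃ t₁ t₂ s, t₁ < T ∧ t₂ < T ∧ s < S ∧ p t₁ t₂ s ≠ 0) ∧
      ∀ i j k : ℕ, i < n1 → j < n2 → k < n3 →
        ∑ s ∈ Finset.range S, ∑ t ∈ Finset.range T, ∑ r ∈ Finset.range T,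
          p r t s * ((i : ℝ) - k * x + g * (j + k * y)) ^ r * ((j : ℝ) + k * y) ^ t *
            ((ad : ℝ) ^ i * ((aa : ℝ) ^ j * ((u : ℝ) / v) ^ k)) ^ s = 0 := by
  classical
  set l1 := Real.log ad with hl1
  set l2 := Real.log aa with hl2
  have l1pos : 0 < l1 := Real.log_pos h1d
  have l2pos : 0 < l2 := Real.log_pos h1a
  obtain ⟨p, hp0, hpb, hp⟩ := aux_fn T S M l1 l2 g W Ym V ρ D hT l1pos hW0 hYm hG hV hV1 hρ hD hcard
  refine ⟨fun r t s => (p r t s : ℝ), ?_, ?_⟩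
  · obtain ⟨t₁, t₂, s, h1, h2, h3, h4⟩ := hp0
    exact ⟨t₁, t₂, s, h1, h2, h3, Int.cast_ne_zero.2 h4⟩
  intro i j k hi hj hk
  have hDr : (2 : ℝ) ≤ D := by exact_mod_cast hD2
  have hD0 : (0 : ℝ) < D := by linarith
  set X : ℝ := (i : ℝ) - k * x with hX
  set Y : ℝ := (j : ℝ) + k * y with hY
  set w : ℝ := l1 * X + l2 * Y with hw
  have hir : (i : ℝ) ≤ n1 := by exact_mod_cast hi.le
  have hjr : (j : ℝ) ≤ n2 := by exact_mod_cast hj.le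
  have hkr : (k : ℝ) ≤ n3 := by exact_mod_cast hk.le
  have hwΛ : w = i * l1 + j * l2 + k * (Real.log u - Real.log v) - k * Λ := by
    rw [hw, hX, hY, hΛ]; ring
  have hwW : |w| ≤ W := by
    refine le_trans ?_ hW
    rw [hwΛ]
    calc |(i : ℝ) * l1 + j * l2 + k * (Real.log u - Real.log v) - k * Λ|
        ≤ |(i : ℝ) * l1 + j * l2 + k * (Real.log u - Real.log v)| + |(k : ℝ) * Λ| := abs_sub _ _
      _ ≤ (|(i : ℝ) * l1 + j * l2| + |(k : ℝ) * (Real.log u - Real.log v)|) + |(k : ℝ) * Λ| := by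
          gcongr; exact abs_add_le _ _
      _ = ((i : ℝ) * l1 + j * l2) + (k : ℝ) * |(Real.log u - Real.log v)| + (k : ℝ) * |Λ| := by
          rw [abs_mul, abs_mul, Nat.abs_cast, abs_of_nonneg (by positivity)]
      _ ≤ _ := by gcongr
  have hY0 : 0 ≤ Y := by positivity
  have hYb : |Y| ≤ Ym := by
    rw [abs_of_nonneg hY0]
    refine le_trans ?_ hYmy
    rw [hY]; gcongr
  have hUw : X + g * Y = (w + (l1 * g - l2) * Y) / l1 := by
    rw [hw]; field_simp; ring
  have hUV : |X + g * Y| ≤ V := by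
    rw [hUw]
    refine le_trans ?_ hV
    rw [abs_div, abs_of_pos l1pos]
    gcongr
    calc |w + (l1 * g - l2) * Y| ≤ |w| + |(l1 * g - l2) * Y| := abs_add_le _ _
      _ ≤ W + (l1 * g - l2) * Ym := by
        rw [abs_mul, abs_of_nonneg hG]; gcongr
  have hF := hp X Y hwW hYb
  set ω : ℝ := (ad : ℝ) ^ i * ((aa : ℝ) ^ j * ((u : ℝ) / v) ^ k) with hω
  have hωe : ω = Real.exp (w + k * Λ) := by
    rw [hwΛ, hω]
    have e1 : (ad : ℝ) ^ i = Real.exp (i * l1) := by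
      rw [Real.exp_nat_mul, hl1, Real.exp_log (by linarith)]
    have e2 : (aa : ℝ) ^ j = Real.exp (j * l2) := by
      rw [Real.exp_nat_mul, hl2, Real.exp_log (by linarith)]
    have e3 : ((u : ℝ) / v) ^ k = Real.exp (k * (Real.log u - Real.log v)) := by
      rw [Real.exp_nat_mul, Real.exp_sub, Real.exp_log hu0, Real.exp_log hv0]
    rw [e1, e2, e3, ← Real.exp_add, ← Real.exp_add]
    congr 1; ring
  set Cb := V ^ T * Ym ^ T * Real.exp (S * W) with hCb
  -- generic termwise bound
  have hgen : ∀ (E : Type) [NormedAddCommGroup E] (f : ℕ → ℕ → ℕ → E) (b : ℝ), 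
      (∀ s < S, ∀ t < T, ∀ r < T, ‖f s t r‖ ≤ b) →
      ‖∑ s ∈ Finset.range S, ∑ t ∈ Finset.range T, ∑ r ∈ Finset.range T, f s t r‖ ≤ (T * T * S : ℝ) * b := by
    intro E _ f b hb
    calc _ ≤ ∑ s ∈ Finset.range S, (∑ t ∈ Finset.range T, (∑ r ∈ Finset.range T, b)) := by
          refine norm_sum_le_of_le _ fun s hs => norm_sum_le_of_le _ fun t ht =>
            norm_sum_le_of_le _ fun r hr => ?_
          simp only [Finset.mem_range] at hs ht hr
          exact hb s hs t ht r hr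
      _ = _ := by simp only [Finset.sum_const, Finset.card_range, nsmul_eq_mul]; ring
  have hpr : ∀ r t s, |(p r t s : ℝ)| ≤ (D : ℝ) ^ 2 := fun r t s => by
    have := hpb r t s
    exact_mod_cast this
  have hUr : ∀ r < T, |X + g * Y| ^ r ≤ V ^ T := fun r hr =>
    (pow_le_pow_left₀ (abs_nonneg _) hUV r).trans (pow_le_pow_right₀ hV1 hr.le)
  have hYr : ∀ t < T, |Y| ^ t ≤ Ym ^ T := fun r hr =>
    (pow_le_pow_left₀ (abs_nonneg _) hYb r).trans (pow_le_pow_right₀ hYm hr.le)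
  have hV0 : 0 < V := by linarith
  have hYm0 : 0 < Ym := by linarith
  have hS1 : (1 : ℝ) ≤ S := by exact_mod_cast hS
  set A := ∑ s ∈ Finset.range S, ∑ t ∈ Finset.range T, ∑ r ∈ Finset.range T,
          (p r t s : ℝ) * (X + g * Y) ^ r * Y ^ t * ω ^ s with hA
  -- difference
  have hskΛ : S * n3 * |Λ| ≤ 1 := by
    have h1 : (1 : ℝ) ≤ (D : ℝ) ^ 19 := one_le_pow₀ (by linarith)
    have h2 : 0 ≤ S * n3 * |Λ| := by positivity
    nlinarith
  have hdiff : |A - ∑ s ∈ Finset.range S, ∑ t ∈ Finset.range T, ∑ r ∈ Finset.range T,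
          (p r t s : ℝ) * (X + g * Y) ^ r * Y ^ t * Real.exp w ^ s| ≤
      (D : ℝ) ^ 3 * (2 * (S * n3 * |Λ|)) := by
    rw [hA]
    simp_rw [← Finset.sum_sub_distrib]
    rw [← Real.norm_eq_abs]
    refine (hgen ℝ _ ((D : ℝ) ^ 2 * (V ^ T * Ym ^ T) * (Real.exp (S * W) * (2 * (S * n3 * |Λ|)))) ?_).trans ?_
    · intro s hs t ht r hr
      rw [← mul_sub, Real.norm_eq_abs, abs_mul, abs_mul, abs_mul, abs_pow, abs_pow]
      have h1 := hpr r t s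
      have h2 := hUr r hr
      have h3 := hYr t ht
      have hsr : (s : ℝ) ≤ S := by exact_mod_cast hs.le
      have h4 : |ω ^ s - Real.exp w ^ s| ≤ Real.exp (S * W) * (2 * (S * n3 * |Λ|)) := by
        rw [hωe, Real.exp_add, mul_pow]
        have e1 : Real.exp w ^ s * Real.exp (k * Λ) ^ s - Real.exp w ^ s =
          Real.exp (s * w) * (Real.exp (s * (k * Λ)) - 1) := by
          rw [Real.exp_nat_mul w s, Real.exp_nat_mul (k * Λ) s]; ring
        rw [e1, abs_mul, Real.abs_exp]
        have e2 : |(s : ℝ) * (k * Λ)| ≤ S * n3 * |Λ| := by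
          rw [abs_mul, abs_mul, Nat.abs_cast, Nat.abs_cast, ← mul_assoc]; gcongr
        have e3 : |Real.exp (s * (k * Λ)) - 1| ≤ 2 * |(s : ℝ) * (k * Λ)| :=
          Real.abs_exp_sub_one_le (e2.trans hskΛ)
        have e4 : (s : ℝ) * w ≤ S * W := by
          have := (le_abs_self w).trans hwW
          calc (s : ℝ) * w ≤ s * W := by gcongr
            _ ≤ S * W := by gcongr
        have e5 := Real.exp_le_exp.2 e4
        calc _ ≤ Real.exp (S * W) * (2 * |(s : ℝ) * (k * Λ)|) := by gcongr
          _ ≤ _ := by gcongr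
      calc _ ≤ (D : ℝ) ^ 2 * V ^ T * Ym ^ T * (Real.exp (S * W) * (2 * (S * n3 * |Λ|))) := by gcongr
        _ = _ := by ring
    · calc _ = ((T * T * S : ℝ) * Cb) * ((D : ℝ) ^ 2 * (2 * (S * n3 * |Λ|))) := by rw [hCb]; ring
        _ ≤ D * ((D : ℝ) ^ 2 * (2 * (S * n3 * |Λ|))) := by gcongr
        _ = _ := by ring
  have hAb : |A| ≤ 1 / (D : ℝ) ^ 20 + (D : ℝ) ^ 3 * (Real.exp (ρ * (S * W)) / ρ ^ M) +
      (D : ℝ) ^ 3 * (2 * (S * n3 * |Λ|)) := by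
    have := abs_add_le (∑ s ∈ Finset.range S, ∑ t ∈ Finset.range T, ∑ r ∈ Finset.range T,
          (p r t s : ℝ) * (X + g * Y) ^ r * Y ^ t * Real.exp w ^ s) (A - ∑ s ∈ Finset.range S, ∑ t ∈ Finset.range T, ∑ r ∈ Finset.range T,
          (p r t s : ℝ) * (X + g * Y) ^ r * Y ^ t * Real.exp w ^ s)
    rw [add_sub_cancel] at this
    linarith
  have hD16 : (D : ℝ) ^ 16 * |A| < 1 := by
    have h1 : (D : ℝ) ^ 16 * (1 / (D : ℝ) ^ 20) ≤ 1 / 4 := by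
      have : (D : ℝ) ^ 16 * (1 / (D : ℝ) ^ 20) = 1 / (D : ℝ) ^ 4 := by field_simp
      rw [this]
      have h2 : (4 : ℝ) ≤ (D : ℝ) ^ 4 := by
        calc (4 : ℝ) ≤ 2 ^ 4 := by norm_num
          _ ≤ _ := by gcongr
      exact one_div_le_one_div_of_le (by norm_num) h2
    have h3 : (D : ℝ) ^ 16 * |A| ≤ (D : ℝ) ^ 16 * (1 / (D : ℝ) ^ 20 + (D : ℝ) ^ 3 * (Real.exp (ρ * (S * W)) / ρ ^ M) +
      (D : ℝ) ^ 3 * (2 * (S * n3 * |Λ|))) := by gcongr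
    have e : (D : ℝ) ^ 16 * (1 / (D : ℝ) ^ 20 + (D : ℝ) ^ 3 * (Real.exp (ρ * (S * W)) / ρ ^ M) +
      (D : ℝ) ^ 3 * (2 * (S * n3 * |Λ|))) = (D : ℝ) ^ 16 * (1 / (D : ℝ) ^ 20) +
        (D : ℝ) ^ 19 * (Real.exp (ρ * (S * W)) / ρ ^ M) + (D : ℝ) ^ 19 * (2 * (S * n3 * |Λ|)) := by ring
    rw [e] at h3
    linarith
  -- the algebraic integer
  let Uz : ℤ := (i : ℤ) - k * x + g * (j + k * y)
  let Yz : ℤ := (j : ℤ) + k * y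
  have hUz : (Uz : ℝ) = X + g * Y := by simp only [Uz, hX, hY]; push_cast; ring
  have hYz : (Yz : ℝ) = Y := by simp only [Yz, hY]; push_cast; ring
  let f : ℕ → ℕ → ℕ → K := fun s t r =>
    (p r t s : K) * (Uz : K) ^ r * (Yz : K) ^ t * ((ad ^ i * aa ^ j) ^ s * u ^ (k * s) * v ^ (k * (S - 1 - s)))
  let z : K := ∑ s ∈ Finset.range S, ∑ t ∈ Finset.range T, ∑ r ∈ Finset.range T, f s t r
  have hzA : (z : ℝ) = (v : ℝ) ^ (k * (S - 1)) * A := by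
    simp only [z, f, hA, Finset.mul_sum]
    push_cast
    refine Finset.sum_congr rfl fun s hs => Finset.sum_congr rfl fun t _ => Finset.sum_congr rfl fun r _ => ?_
    simp only [Finset.mem_range] at hs
    have e1 : (v : ℝ) ^ (k * (S - 1)) = (v : ℝ) ^ (k * (S - 1 - s)) * (v : ℝ) ^ (k * s) := by
      rw [← pow_add, ← mul_add]; congr 2; omega
    rw [hUz, hYz, e1, hω, div_pow, mul_pow _ _ s, mul_pow _ _ s, mul_pow _ _ s, div_pow, ← pow_mul _ k s,
      ← pow_mul _ k s]
    have := hv0.ne'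
    field_simp
  have hint : ∀ q : ℤ, IsIntegral ℤ (q : K) := fun q => by
    simpa using (isIntegral_algebraMap (R := ℤ) (A := K) (x := q))
  have hzint : IsIntegral ℤ z := by
    refine IsIntegral.sum _ fun s _ => IsIntegral.sum _ fun t _ => IsIntegral.sum _ fun r _ => ?_
    exact (((hint _).mul ((hint _).pow _)).mul ((hint _).pow _)).mul
      (((((iad.pow _).mul (iaa.pow _)).pow _).mul (iu.pow _)).mul (iv.pow _))
  have hexpb : Real.exp (S * (n1 * l1 + n2 * l2 + n3 * h)) ≤ Real.exp (S * W) := by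
    apply Real.exp_le_exp.2
    have : 0 ≤ n3 * |Λ| := by positivity
    gcongr
    linarith
  by_cases hz0 : z = 0
  · have : (v : ℝ) ^ (k * (S - 1)) * A = 0 := by rw [← hzA, hz0]; simp
    rcases mul_eq_zero.1 this with h' | h'
    · exact absurd h' (pow_ne_zero _ hv0.ne')
    · exact h'
  exfalso
  have hL := liouville_nf K hK z hzint hz0 ((D : ℝ) ^ 3) (one_le_pow₀ (by linarith)) ?_
  · have hvle : (v : ℝ) ≤ Real.exp h := by
      let σ₀ : K →ₐ[ℚ] ℂ := (Complex.ofRealAm.restrictScalars ℚ).comp K.val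
      have h2 := hσv σ₀
      have h3 : σ₀ v = ((v : ℝ) : ℂ) := rfl
      rw [h3, Complex.norm_real, Real.norm_eq_abs, abs_of_pos hv0] at h2
      exact h2
    have hvp : (v : ℝ) ^ (k * (S - 1)) ≤ D := by
      calc (v : ℝ) ^ (k * (S - 1)) ≤ Real.exp h ^ (k * (S - 1)) := by gcongr
        _ = Real.exp (k * ((S - 1 : ℕ) : ℝ) * h) := by
            rw [← Real.exp_nat_mul]; push_cast; ring_nf
        _ ≤ Real.exp (S * (n1 * l1 + n2 * l2 + n3 * h)) := by
            apply Real.exp_le_exp.2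
            have e1 : ((S - 1 : ℕ) : ℝ) ≤ S := by exact_mod_cast Nat.sub_le _ _
            calc k * ((S - 1 : ℕ) : ℝ) * h ≤ n3 * S * h := by gcongr
              _ = S * (n3 * h) := by ring
              _ ≤ _ := by
                have : 0 ≤ n1 * l1 + n2 * l2 := by positivity
                gcongr; linarith
        _ ≤ Real.exp (S * W) := hexpb
        _ ≤ D := by
            refine le_trans ?_ hD
            have a1 := one_le_pow₀ (n := T) hV1
            have a2 := one_le_pow₀ (n := T) hYm
            have a3 : (1 : ℝ) ≤ T := by exact_mod_cast hT
            have a4 : (1 : ℝ) ≤ T * T * S :=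
              one_le_mul_of_one_le_of_one_le (one_le_mul_of_one_le_of_one_le a3 a3) hS1
            have a5 : 1 ≤ V ^ T * Ym ^ T := one_le_mul_of_one_le_of_one_le a1 a2
            have a6 := Real.exp_pos (S * W)
            calc Real.exp (S * W) ≤ V ^ T * Ym ^ T * Real.exp (S * W) := le_mul_of_one_le_left a6.le a5
              _ ≤ _ := le_mul_of_one_le_left (by positivity) a4
    rw [hzA, abs_mul, abs_of_pos (pow_pos hv0 _)] at hL
    have : (v : ℝ) ^ (k * (S - 1)) * |A| * ((D : ℝ) ^ 3) ^ 5 ≤ D * |A| * ((D : ℝ) ^ 3) ^ 5 := by gcongr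
    have e : D * |A| * ((D : ℝ) ^ 3) ^ 5 = (D : ℝ) ^ 16 * |A| := by ring
    linarith
  · intro σ
    simp only [z, map_sum]
    refine (hgen ℂ _ ((D : ℝ) ^ 2 * Cb) ?_).trans ?_
    · intro s hs t ht r hr
      have hsr : (s : ℝ) ≤ S := by exact_mod_cast hs.le
      simp only [f, map_mul, map_pow, map_intCast, norm_mul, norm_pow, Complex.norm_intCast]
      rw [hUz, hYz]
      have h1 := hpr r t s
      have h2 := hUr r hr
      have h3 := hYr t ht
      have h4 : (‖σ ad‖ ^ i * ‖σ aa‖ ^ j) ^ s * ‖σ u‖ ^ (k * s) * ‖σ v‖ ^ (k * (S - 1 - s)) ≤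
          Real.exp (S * W) := by
        refine le_trans ?_ hexpb
        have b1 : ‖σ ad‖ ≤ Real.exp l1 := by rw [hl1, Real.exp_log (by linarith)]; exact hσd σ
        have b2 : ‖σ aa‖ ≤ Real.exp l2 := by rw [hl2, Real.exp_log (by linarith)]; exact hσa σ
        have b3 := hσu σ
        have b4 := hσv σ
        calc _ ≤ (Real.exp l1 ^ i * Real.exp l2 ^ j) ^ s * Real.exp h ^ (k * s) * Real.exp h ^ (k * (S - 1 - s)) := by
              gcongr
          _ = Real.exp (s * (i * l1 + j * l2) + (k * (s + ((S - 1 - s : ℕ) : ℝ))) * h) := by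
              rw [← Real.exp_nat_mul, ← Real.exp_nat_mul, ← Real.exp_add, ← Real.exp_nat_mul,
                ← Real.exp_nat_mul, ← Real.exp_nat_mul, ← Real.exp_add, ← Real.exp_add]
              push_cast; ring_nf
          _ ≤ _ := by
              apply Real.exp_le_exp.2
              have e1 : (s : ℝ) + ((S - 1 - s : ℕ) : ℝ) ≤ S := by
                have : s + (S - 1 - s) ≤ S := by omega
                exact_mod_cast this
              have e2 : 0 ≤ (s : ℝ) + ((S - 1 - s : ℕ) : ℝ) := by positivity
              calc _ ≤ (S : ℝ) * (n1 * l1 + n2 * l2) + (n3 * S) * h := by gcongr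
                _ = _ := by ring
      calc _ ≤ (D : ℝ) ^ 2 * V ^ T * Ym ^ T * Real.exp (S * W) := by gcongr
        _ = _ := by rw [hCb]; ring
    · calc (T * T * S : ℝ) * ((D : ℝ) ^ 2 * Cb) = ((T * T * S : ℝ) * Cb) * (D : ℝ) ^ 2 := by ring
        _ ≤ D * (D : ℝ) ^ 2 := by gcongr
        _ = _ := by ring

theorem T_h1 (l1 l2 g E L : ℝ) (hE : 10 ^ 14 ≤ E) (h1 : 0.48 ≤ l1) (h2 : 0 ≤ l2) (hL : 4 * L ≤ E)
    (hg : g ≤ E ^ 2 / 2) : (3 * L + (l1 * g - l2) * E ^ 2) / l1 ≤ E ^ 4 := by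
  have hl : 0 < l1 := by linarith
  rw [div_le_iff₀ hl]
  have a1 : l1 * g ≤ l1 * (E ^ 2 / 2) := by gcongr
  have a2 : (l1 * g - l2) * E ^ 2 ≤ l1 * (E ^ 2 / 2) * E ^ 2 := by gcongr; linarith
  have a3 : (10 : ℝ) ^ 42 ≤ E ^ 3 := by
    calc (10 : ℝ) ^ 42 = (10 ^ 14) ^ 3 := by norm_num
      _ ≤ E ^ 3 := by gcongr
  have a4 : E ≤ E ^ 4 / 8 := by
    have : E * (10 : ℝ) ^ 42 ≤ E * E ^ 3 := by gcongr
    have e : E ^ 4 = E * E ^ 3 := by ring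
    rw [e]; linarith
  have a5 : 0.48 * E ^ 4 ≤ l1 * E ^ 4 := by gcongr
  have e2 : l1 * (E ^ 2 / 2) * E ^ 2 = l1 * E ^ 4 / 2 := by ring
  have e3 : E ^ 4 * l1 = l1 * E ^ 4 := by ring
  rw [e3]
  linarith

theorem T_h2 (E L L3 x : ℝ) (hE : 10 ^ 14 ≤ E) (hL : 4 * L ≤ E) (h3 : L3 ≤ L) (hx0 : 0 ≤ x) (hx : x ≤ E) :
    L + L3 * x + 1 ≤ E ^ 2 / 2 ∧ 3 * L + L3 * x ≤ E ^ 2 := by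
  have h1 : L3 * x ≤ E / 4 * E := by gcongr; linarith
  have h2 : 10 ^ 14 * E ≤ E * E := by gcongr
  have e : E ^ 2 = E * E := by ring
  rw [e]
  constructor <;> linarith

theorem T_h3 (l1 l2 L S ℓ t : ℝ) (h1 : l1 ≤ 0.4813) (h2 : l2 ≤ 0.2813) (hL : 2 * 10 ^ 14 * ℓ ≤ L)
    (hℓ : 1 ≤ ℓ) (hS : S = 2400 * ℓ) (ht : t ≤ 1) :
    (2 * L + S) * l1 + 3 * L * l2 + L + t ≤ 3 * L := by
  have a1 : (2 * L + S) * l1 ≤ (2 * L + S) * 0.4813 := by gcongr; linarith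
  have a2 : 3 * L * l2 ≤ 3 * L * 0.2813 := by gcongr; linarith
  linarith

theorem T_h4 (Q : ℝ) (hQ : 2 * 10 ^ 14 ≤ Q) (t : ℝ) (ht : t ≤ 10 ^ 11 * Q ^ 3) : t ≤ Real.exp Q := by
  have h1 := Real.pow_div_factorial_le_exp Q (by linarith) 4
  have h3 : (Nat.factorial 4 : ℝ) = 24 := by norm_num [Nat.factorial]
  rw [h3] at h1
  have h5 : (10 : ℝ) ^ 11 * Q ^ 3 ≤ Q ^ 4 / 24 := by
    have : 0 ≤ Q ^ 3 := by positivity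
    have e : Q ^ 4 = Q * Q ^ 3 := by ring
    have : 2 * 10 ^ 14 * Q ^ 3 ≤ Q * Q ^ 3 := by gcongr
    rw [e]; linarith
  linarith

theorem T_h5 (Q : ℝ) (hQ : 2 * 10 ^ 14 ≤ Q) : 4800 * Q * Real.exp (-(162 * Q)) ≤ 1 / 4 := by
  rw [Real.exp_neg, ← div_eq_mul_inv, div_le_iff₀ (Real.exp_pos _)]
  have h3 := Real.pow_div_factorial_le_exp (162 * Q) (by linarith) 2
  have h4 : (Nat.factorial 2 : ℝ) = 2 := by norm_num [Nat.factorial]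
  rw [h4] at h3
  have : 2 * 10 ^ 14 * Q ≤ Q * Q := by gcongr
  have e : (162 * Q) ^ 2 = 26244 * (Q * Q) := by ring
  rw [e] at h3
  linarith

theorem T_inj (L x y g c L3 : ℕ) (hg : g = L + L3 * x + 1) (hc : c ≤ L3) (hy : 2 * L ≤ y)
    (i j k i' j' k' : ℕ) (hi : i < L) (hj : j < 2 * L) (hk : k < c) (hi' : i' < L) (hj' : j' < 2 * L) (hk' : k' < c)
    (h : (i : ℤ) - k * x + g * (j + k * y) = (i' : ℤ) - k' * x + g * (j' + k' * y)) :
    i = i' ∧ j = j' ∧ k = k' := by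
  set Δ : ℤ := ((j : ℤ) + k * y) - (j' + k' * y) with hΔ
  have h1 : (g : ℤ) * Δ = ((i' : ℤ) - i) + ((k : ℤ) - k') * x := by rw [hΔ]; linarith
  have h2 : |(g : ℤ) * Δ| < g := by
    rw [h1]
    have a1 : |((i' : ℤ) - i)| ≤ L := by rw [abs_le]; constructor <;> omega
    have a2 : |((k : ℤ) - k')| ≤ L3 := by rw [abs_le]; constructor <;> omega
    have a3 : |((k : ℤ) - k') * x| ≤ L3 * x := by
      rw [abs_mul, Nat.abs_cast]; gcongr
    have := abs_add_le ((i' : ℤ) - i) (((k : ℤ) - k') * x)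
    rw [hg]; push_cast; linarith
  have h3 : Δ = 0 := by
    by_contra hne
    have : 1 ≤ |Δ| := Int.one_le_abs hne
    rw [abs_mul, Nat.abs_cast] at h2
    have h4 : (g : ℤ) * 1 ≤ g * |Δ| := by gcongr
    linarith
  have hkk : k = k' := by
    rcases lt_trichotomy k k' with hlt | heq | hgt
    · exfalso
      have : (k : ℤ) * y + y ≤ k' * y := by
        have : (k + 1) * y ≤ k' * y := Nat.mul_le_mul_right _ hlt
        have : k * y + y ≤ k' * y := by linarith
        exact_mod_cast this
      omega
    · exact heq
    · exfalso
      have : (k' : ℤ) * y + y ≤ k * y := by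
        have : (k' + 1) * y ≤ k * y := Nat.mul_le_mul_right _ hgt
        have : k' * y + y ≤ k * y := by linarith
        exact_mod_cast this
      omega
  subst hkk
  have hjj : j = j' := by
    have : (j : ℤ) = j' := by rw [hΔ] at h3; linarith
    exact_mod_cast this
  subst hjj
  have : (i : ℤ) = i' := by linarith
  exact ⟨by exact_mod_cast this, rfl, rfl⟩

theorem T_nb (l1 l2 Λ lu h ℓ x y q p : ℝ) (hh : 1 ≤ h) (hℓ : 1 ≤ ℓ) (hq : 1 ≤ q) (hy : 0 ≤ y) (h1 : 0 < l1) (h1b : l1 ≤ 0.4813)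
    (hΛ : Λ = lu + x * l1 - y * l2) (hΛ1 : |Λ| ≤ 1) (hlu : |lu| ≤ h)
    (hI : q * (10 ^ 7 * (h * ℓ)) ≤ y * |q * l2 - p * l1|) :
    q * (20000000 * (h * ℓ)) ≤ |q * x - p * y| := by
  set θ := x * l1 - y * l2 with hθ
  have hθb : |θ| ≤ h + 1 := by
    have : θ = Λ - lu := by rw [hΛ, hθ]; ring
    rw [this]
    calc _ ≤ |Λ| + |lu| := abs_sub _ _
      _ ≤ _ := by linarith
  have h2 : l1 * (q * x - p * y) = y * (q * l2 - p * l1) + q * θ := by rw [hθ]; ring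
  have h3 : l1 * |q * x - p * y| = |y * (q * l2 - p * l1) + q * θ| := by
    rw [← h2, abs_mul, abs_of_pos h1]
  have h4 : |y * (q * l2 - p * l1)| - |q * θ| ≤ |y * (q * l2 - p * l1) + q * θ| := by
    have := abs_sub_abs_le_abs_sub (y * (q * l2 - p * l1)) (-(q * θ))
    rw [abs_neg, sub_neg_eq_add] at this
    exact this
  rw [abs_mul, abs_mul, abs_of_nonneg hy, abs_of_pos (by linarith : 0 < q), ← h3] at h4
  have h5 : q * |θ| ≤ q * (h + 1) := by gcongr
  have h7 : l1 * |q * x - p * y| ≤ 0.4813 * |q * x - p * y| := by gcongr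
  have h0 : h ≤ h * ℓ := by nlinarith
  have h8 : q * (h + 1) ≤ q * (2 * (h * ℓ)) := by
    gcongr; linarith
  have h10 : 0 ≤ q * (h * ℓ) := by positivity
  have e1 : q * (10 ^ 7 * (h * ℓ)) = 10 ^ 7 * (q * (h * ℓ)) := by ring
  have e2 : q * (2 * (h * ℓ)) = 2 * (q * (h * ℓ)) := by ring
  have e3 : q * (20000000 * (h * ℓ)) = 20000000 * (q * (h * ℓ)) := by ring
  rw [e1] at hI
  rw [e2] at h8
  rw [e3]
  linarith

theorem T_k1 (h ℓ : ℝ) (hh : 1 ≤ h) (hℓ : 1 ≤ ℓ) : ℓ ≤ h * ℓ ^ 2 := by nlinarith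
theorem T_k2 (D a b : ℝ) {c : ℝ} (h1 : D < a + 1) (h2 : c = a * b) (h3 : 2 ≤ b) (h4 : 1 ≤ a) : D ≤ c := by
  nlinarith
theorem T_k3 (ℓ T : ℕ) (hℓ : 1 ≤ ℓ) : 12 * (2 * (T + 99 * ℓ * T)) ≤ T * (2400 * ℓ) := by nlinarith
theorem T_k4 (h ℓ : ℕ) (hℓ : 1 ≤ ℓ) : 20000000 * (h * ℓ) ≤ h * (2 * 10 ^ 14 * ℓ ^ 2) := by
  have : h * ℓ * 1 ≤ h * ℓ * ℓ := Nat.mul_le_mul_left _ hℓ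
  nlinarith
theorem T_k5 (h ℓ : ℕ) (hℓ : 0 < h * ℓ ^ 3) :
    9600000 * ℓ * (h * (2 * 10 ^ 14 * ℓ ^ 2)) < 20000000 * (h * ℓ) * (10 ^ 14 * ℓ ^ 2) := by nlinarith
theorem T_k6 (h ℓ : ℕ) (hh : 1 ≤ h) (hℓ : 1 ≤ ℓ) : 9600000 * ℓ < h * (2 * 10 ^ 14 * ℓ ^ 2) := by
  have : 1 * ℓ * 1 ≤ h * ℓ * ℓ := Nat.mul_le_mul (Nat.mul_le_mul_right _ hh) hℓ
  nlinarith
theorem T_k7 (h ℓ : ℕ) (hℓ : 1 ≤ ℓ) : 20000000 * (h * ℓ) ≤ 4 * 10 ^ 14 * (h * ℓ ^ 2) := by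
  have : h * ℓ * 1 ≤ h * ℓ * ℓ := Nat.mul_le_mul_left _ hℓ
  nlinarith
theorem T_k8 (ℓ L : ℕ) (h : 0 < (ℓ * L) ^ 2) :
    2 * (9600000 * ℓ * L) * (9600000 * ℓ * L) < L * (2 * L * (10 ^ 14 * ℓ ^ 2)) := by nlinarith

set_option maxHeartbeats 1000000 in
theorem thmT (K : IntermediateField ℚ ℝ) [FiniteDimensional ℚ K]
    (hK : Module.finrank ℚ K ≤ 6) (ad aa u v : K) (iad : IsIntegral ℤ ad) (iaa : IsIntegral ℤ aa)
    (iu : IsIntegral ℤ u) (iv : IsIntegral ℤ v) (h1d : 1 < (ad : ℝ)) (h1a : 1 < (aa : ℝ))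
    (hu0 : 0 < (u : ℝ)) (hv0 : 0 < (v : ℝ)) (h ℓ : ℕ) (hh : 1 ≤ h) (hℓ : 1 ≤ ℓ)
    (hσd : ∀ σ : K →ₐ[ℚ] ℂ, ‖σ ad‖ ≤ (ad : ℝ)) (hσa : ∀ σ : K →ₐ[ℚ] ℂ, ‖σ aa‖ ≤ (aa : ℝ))
    (hσu : ∀ σ : K →ₐ[ℚ] ℂ, ‖σ u‖ ≤ Real.exp h) (hσv : ∀ σ : K →ₐ[ℚ] ℂ, ‖σ v‖ ≤ Real.exp h)
    (huv : |Real.log u - Real.log v| ≤ h)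
    (hl1a : 0.48 ≤ Real.log ad) (hl1b : Real.log ad ≤ 0.4813)
    (hl2b : Real.log aa ≤ 0.2813)
    (x y : ℕ) (hx : (x : ℝ) ≤ Real.exp ℓ) (hy : (y : ℝ) ≤ Real.exp ℓ)
    (hL : 8 * 10 ^ 14 * (h * ℓ ^ 2 : ℝ) ≤ Real.exp ℓ) (hyL : 4 * 10 ^ 14 * (h * ℓ ^ 2) ≤ y)
    (hI : ∀ q : ℕ, 1 ≤ q → q ≤ 9600000 * ℓ → ∀ p : ℤ,
      q * (10 ^ 7 * (h * ℓ : ℝ)) ≤ y * |q * Real.log aa - p * Real.log ad|) :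
    Real.exp (-(7.3 * 10 ^ 19 * (h * ℓ ^ 3 : ℝ))) ≤
      |Real.log u - Real.log v + x * Real.log ad - y * Real.log aa| := by
  by_contra hcon
  rw [not_le] at hcon
  set Λ := Real.log u - Real.log v + x * Real.log ad - y * Real.log aa with hΛ
  set l1 := Real.log ad with hl1
  set l2 := Real.log aa with hl2
  have l2pos : 0 < l2 := Real.log_pos h1a
  obtain ⟨L3, hL3⟩ : ∃ L3 : ℕ, L3 = 2 * 10 ^ 14 * ℓ ^ 2 := ⟨_, rfl⟩
  obtain ⟨L, hLd⟩ : ∃ L : ℕ, L = h * L3 := ⟨_, rfl⟩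
  obtain ⟨S, hSd⟩ : ∃ S : ℕ, S = 2400 * ℓ := ⟨_, rfl⟩
  obtain ⟨T, hTd⟩ : ∃ T : ℕ, T = 2000 * L := ⟨_, rfl⟩
  obtain ⟨M, hMd⟩ : ∃ M : ℕ, M = 99 * ℓ * T := ⟨_, rfl⟩
  obtain ⟨c, hcd⟩ : ∃ c : ℕ, c = 10 ^ 14 * ℓ ^ 2 := ⟨_, rfl⟩
  have hL3pos : 1 ≤ L3 := by rw [hL3]; exact Nat.mul_pos (by norm_num) (Nat.pow_pos hℓ)
  have hLpos : 1 ≤ L := by rw [hLd]; exact Nat.mul_pos hh hL3pos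
  have hL3L : L3 ≤ L := by rw [hLd]; exact Nat.le_mul_of_pos_left _ hh
  have hhr : (1 : ℝ) ≤ h := by exact_mod_cast hh
  have hℓr : (1 : ℝ) ≤ ℓ := by exact_mod_cast hℓ
  have hLr : (L : ℝ) = 2 * 10 ^ 14 * (h * ℓ ^ 2) := by rw [hLd, hL3]; push_cast; ring
  have hL3r : (L3 : ℝ) = 2 * 10 ^ 14 * (ℓ : ℝ) ^ 2 := by rw [hL3]; push_cast; ring
  have hL3Lr : (L3 : ℝ) ≤ L := by exact_mod_cast hL3L
  have hLr1 : (1 : ℝ) ≤ L := by exact_mod_cast hLpos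
  set Q : ℝ := ℓ * L with hQ
  have hQL : (L : ℝ) ≤ Q := by rw [hQ]; exact le_mul_of_one_le_left (by linarith) hℓr
  have hLbig : 2 * 10 ^ 14 * (ℓ : ℝ) ≤ L := by
    rw [hLr]
    have : (ℓ : ℝ) ≤ h * ℓ ^ 2 := by exact T_k1 _ _ hhr hℓr
    linarith
  have hQ0 : 2 * 10 ^ 14 ≤ Q := by linarith
  have hQ1 : 7.3 * 10 ^ 19 * (h * ℓ ^ 3 : ℝ) = 365000 * Q := by rw [hQ, hLr]; ring
  rw [hQ1] at hcon
  have hΛ1 : |Λ| ≤ 1 := by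
    refine hcon.le.trans ?_
    rw [Real.exp_le_one_iff]; linarith
  have hSr : (S : ℝ) = 2400 * ℓ := by rw [hSd]; push_cast; ring
  have hTr : (T : ℝ) = 2000 * L := by rw [hTd]; push_cast; ring
  have hMr : (M : ℝ) = 198000 * Q := by rw [hMd, hQ]; push_cast; rw [hTr]; ring
  set E := Real.exp ℓ with hE
  have h4L : 4 * (L : ℝ) ≤ E := by rw [hLr]; linarith
  have hE4 : 10 ^ 14 ≤ E := by linarith
  obtain ⟨D, hDd⟩ : ∃ D : ℕ, D = ⌈Real.exp (19201 * Q)⌉₊ := ⟨_, rfl⟩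
  have hDlo : Real.exp (19201 * Q) ≤ D := by rw [hDd]; exact Nat.le_ceil _
  have hDhi : (D : ℝ) ≤ Real.exp (19202 * Q) := by
    have h1 : (D : ℝ) < Real.exp (19201 * Q) + 1 := by
      rw [hDd]; exact Nat.ceil_lt_add_one (Real.exp_pos _).le
    have h2 : Real.exp (19202 * Q) = Real.exp (19201 * Q) * Real.exp Q := by
      rw [← Real.exp_add]; ring_nf
    have h3 : 2 ≤ Real.exp Q := by linarith [Real.add_one_le_exp Q]
    have h4 : 1 ≤ Real.exp (19201 * Q) := Real.one_le_exp (by linarith)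
    exact T_k2 _ _ _ h1 h2 h3 h4
  have hD19 : (D : ℝ) ^ 19 ≤ Real.exp (364838 * Q) := by
    calc (D : ℝ) ^ 19 ≤ Real.exp (19202 * Q) ^ 19 := by gcongr
      _ = _ := by rw [← Real.exp_nat_mul]; push_cast; ring_nf
  have hexp3 : (T * T * S : ℝ) ≤ Real.exp Q := by
    apply T_h4 Q hQ0
    have e : (T * T * S : ℝ) = 9600000000 * (L * Q) * 1 := by rw [hTr, hSr, hQ]; ring
    rw [e]
    have : L * Q * 1 ≤ Q * Q * Q := by gcongr; linarith
    have e2 : Q ^ 3 = Q * Q * Q := by ring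
    have e3 : 0 ≤ Q * Q * Q := by positivity
    rw [e2]; linarith
  have hg0 : ((L + L3 * x + 1 : ℕ) : ℝ) ≤ E ^ 2 / 2 := by
    push_cast
    exact (T_h2 E L L3 x hE4 h4L hL3Lr (by positivity) hx).1
  have hg1 : (1 : ℝ) ≤ ((L + L3 * x + 1 : ℕ) : ℝ) := by
    push_cast
    have : (0 : ℝ) ≤ L3 * x := by positivity
    linarith
  obtain ⟨g, hg⟩ : ∃ g : ℕ, g = L + L3 * x + 1 := ⟨_, rfl⟩
  rw [← hg] at hg0 hg1
  obtain ⟨p, ⟨t₁, t₂, s₀, ht₁, ht₂, hs₀, hp⟩, hpv⟩ := A_vanish K hK ad aa u v iad iaa iu iv h1d h1a hu0 hv0 h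
    (by positivity) hσd hσa hσu hσv huv x y g S T M (2 * L + S) (3 * L) L3 D
    (3 * L) (E ^ 2) (E ^ 4) (Real.exp 3) Λ hΛ (by omega) (by omega)
    (one_le_pow₀ (by linarith)) (by
      have : l1 * 1 ≤ l1 * g := by gcongr
      linarith)
    (T_h1 l1 l2 g E L hE4 hl1a l2pos.le h4L hg0)
    (one_le_pow₀ (by linarith)) (Real.one_le_exp (by norm_num)) (by linarith)
    (by
      push_cast
      have h1 : (L3 : ℝ) * h = L := by rw [hLd]; push_cast; ring
      have h2 : (L3 : ℝ) * |Λ| ≤ 1 := by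
        have h3 : (L3 : ℝ) * |Λ| ≤ L3 * Real.exp (-(365000 * Q)) := by gcongr
        have h4 : (L3 : ℝ) ≤ Real.exp (365000 * Q) := by
          linarith [Real.add_one_le_exp (365000 * Q)]
        rw [Real.exp_neg] at h3
        refine h3.trans ?_
        rw [← div_eq_mul_inv]
        exact div_le_one_of_le₀ h4 (Real.exp_pos _).le
      rw [h1]
      exact T_h3 l1 l2 L S ℓ _ hl1b hl2b hLbig hℓr hSr h2)
    (by
      push_cast
      exact (T_h2 E L L3 y hE4 h4L hL3Lr (by positivity) hy).2)
    (by
      refine le_trans ?_ hDlo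
      have h1 : (E ^ 4) ^ T * (E ^ 2) ^ T * Real.exp (S * (3 * L)) = Real.exp (19200 * Q) := by
        rw [hE, ← Real.exp_nat_mul, ← Real.exp_nat_mul, ← Real.exp_nat_mul, ← Real.exp_nat_mul,
          ← Real.exp_add, ← Real.exp_add]
        congr 1
        rw [hTr, hSr, hQ]; push_cast; ring
      rw [h1]
      calc (T * T * S : ℝ) * Real.exp (19200 * Q) ≤ Real.exp Q * Real.exp (19200 * Q) := by gcongr
        _ = _ := by rw [← Real.exp_add]; ring_nf)
    (by
      have : (2 : ℝ) ≤ D := by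
        refine le_trans ?_ hDlo
        linarith [Real.add_one_le_exp (19201 * Q)]
      exact_mod_cast this)
    (by rw [hMd, hSd]; exact T_k3 ℓ T hℓ)
    (by
      have h1 : Real.exp 3 ≤ 20.1 := by
        have := Real.exp_one_lt_d9
        calc Real.exp 3 = Real.exp 1 ^ 3 := by rw [← Real.exp_nat_mul]; norm_num
          _ ≤ 2.7182818286 ^ 3 := by gcongr
          _ ≤ _ := by norm_num
      have h2 : Real.exp 3 ^ M = Real.exp (594000 * Q) := by
        rw [← Real.exp_nat_mul, hMr]; ring_nf
      have h3 : Real.exp (Real.exp 3 * (S * (3 * L))) ≤ Real.exp (144720 * Q) := by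
        apply Real.exp_le_exp.2
        have : (S * (3 * L) : ℝ) = 7200 * Q := by rw [hSr, hQ]; ring
        rw [this]
        have : Real.exp 3 * (7200 * Q) ≤ 20.1 * (7200 * Q) := by gcongr
        linarith
      calc _ ≤ Real.exp (364838 * Q) * (Real.exp (144720 * Q) / Real.exp (594000 * Q)) := by
            rw [h2]; gcongr
        _ = Real.exp (-(84442 * Q)) := by
            rw [← Real.exp_sub, ← Real.exp_add]; ring_nf
        _ ≤ 1 / 4 := by
            rw [Real.exp_neg, ← one_div]
            apply one_div_le_one_div_of_le (by norm_num)
            linarith [Real.add_one_le_exp (84442 * Q)])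
    (by
      have h1 : (2 * (S * L3 * |Λ|) : ℝ) ≤ 2 * (S * L3 * Real.exp (-(365000 * Q))) := by gcongr
      have h2 : (S * L3 : ℝ) ≤ 2400 * Q := by rw [hSr, hQ, mul_assoc]; gcongr
      calc _ ≤ Real.exp (364838 * Q) * (2 * (2400 * Q * Real.exp (-(365000 * Q)))) := by
            refine mul_le_mul hD19 (h1.trans (by gcongr)) (by positivity) (by positivity)
        _ = 4800 * Q * Real.exp (-(162 * Q)) := by
            have : Real.exp (-(162 * Q)) = Real.exp (364838 * Q) * Real.exp (-(365000 * Q)) := by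
              rw [← Real.exp_add]; ring_nf
            rw [this]; ring
        _ ≤ 1 / 4 := T_h5 Q hQ0)
  have hdd : 2 * S * T = 9600000 * ℓ * L := by rw [hSd, hTd]; ring
  refine zero_est p S T t₁ t₂ s₀ ht₁ ht₂ hs₀ hp ad h1d g x y aa ((u : ℝ) / v) (by linarith) (by positivity)
    L (2 * L) c L L c (9600000 * ℓ * L) hdd.symm ?_ ?_ ?_ ?_ ?_
  · intro A B hAB
    refine count_lemma x y L (20000000 * (h * ℓ)) (9600000 * ℓ) c (9600000 * ℓ * L) g ?_ ?_ ?_ ?_ ?_ ?_ A B hAB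
    · rw [hLd, hL3]; exact T_k4 h ℓ hℓ
    · rw [hLd, hL3, hcd]
      have : 0 < h * ℓ ^ 3 := by positivity
      exact T_k5 h ℓ this
    · have : 9600000 * ℓ < L := by
        rw [hLd, hL3]; exact T_k6 h ℓ hh hℓ
      exact Nat.mul_lt_mul_of_pos_right this hLpos
    · rw [mul_comm]; exact Nat.mul_lt_mul_of_pos_left (Nat.lt_succ_self _) hLpos
    · exact (T_k7 h ℓ hℓ).trans hyL
    · intro q hq1 hq2 p
      have h9 := T_nb l1 l2 Λ (Real.log u - Real.log v) h ℓ x y q p hhr hℓr (by exact_mod_cast hq1)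
        (by positivity) (by linarith) hl1b hΛ hΛ1 huv (hI q hq1 hq2 p)
      exact_mod_cast h9
  · intro j hj j' hj' hjj
    simp only [Finset.coe_product, Set.mem_prod, Finset.mem_coe, Finset.mem_range] at hj hj'
    simp only at hjj
    have hz : ((j.1 : ℤ) - j.2.2 * x + g * (j.2.1 + j.2.2 * y)) = ((j'.1 : ℤ) - j'.2.2 * x + g * (j'.2.1 + j'.2.2 * y)) := by
      exact_mod_cast hjj
    obtain ⟨e1, e2, e3⟩ := T_inj L x y g c L3 hg (by omega) (by rw [hLd, hL3]; linarith) _ _ _ _ _ _ hj.1 hj.2.1 hj.2.2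
      hj'.1 hj'.2.1 hj'.2.2 hz
    exact Prod.ext e1 (Prod.ext e2 e3)
  · rw [hcd]
    have : 0 < (ℓ * L) ^ 2 := by positivity
    exact T_k8 ℓ L this
  · rw [hcd]; positivity
  · intro i j k hi hj hk
    exact hpv i j k (by omega) (by omega) (by rw [hL3]; omega)

noncomputable abbrev gdel : ℝ := (1 + Real.sqrt 5) / 2

theorem gdel_sq : gdel ^ 2 = gdel + 1 := by
  have : Real.sqrt 5 ^ 2 = 5 := Real.sq_sqrt (by norm_num)
  unfold gdel
  linear_combination this / 4

theorem gdel_lo : 1.618 < gdel := by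
  have : (2.236 : ℝ) < Real.sqrt 5 := Real.lt_sqrt_of_sq_lt (by norm_num)
  unfold gdel; linarith

theorem gdel_hi : gdel < 1.6181 := by
  have : Real.sqrt 5 < 2.2362 := by
    rw [Real.sqrt_lt' (by norm_num)]; norm_num
  unfold gdel; linarith

theorem al_lo (α : ℝ) (hα : α ^ 3 = α + 1) : 1.3247 < α := by
  by_contra h
  push Not at h
  have h1 : -1.3247 ≤ α ∨ α < -1.3247 := le_or_gt _ _
  have e1 : α = α ^ 3 - 1 := by linarith
  nlinarith [sq_nonneg (α - 1.3247), sq_nonneg (α + 0.66)]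

theorem al_hi (α : ℝ) (hα : α ^ 3 = α + 1) : α < 1.3248 := by
  by_contra h
  push Not at h
  nlinarith [mul_nonneg (sub_nonneg.2 h) (sq_nonneg α), mul_nonneg (sub_nonneg.2 h) (sub_nonneg.2 h)]

noncomputable abbrev KK (α : ℝ) : IntermediateField ℚ ℝ :=
  IntermediateField.adjoin ℚ {α} ⊔ IntermediateField.adjoin ℚ {gdel}

theorem int_of_cubic {R : Type*} [CommRing R] (r : R) (h : r ^ 3 = r + 1) : IsIntegral ℤ r := by
  refine ⟨Polynomial.X ^ 3 - (Polynomial.X + 1), ?_, ?_⟩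
  · apply Polynomial.monic_X_pow_sub
    compute_degree
    norm_num
  · simp [h]

theorem int_of_quad {R : Type*} [CommRing R] (r : R) (h : r ^ 2 = r + 1) : IsIntegral ℤ r := by
  refine ⟨Polynomial.X ^ 2 - (Polynomial.X + 1), ?_, ?_⟩
  · apply Polynomial.monic_X_pow_sub
    compute_degree
    norm_num
  · simp [h]

theorem fr_le (α : ℝ) (p : Polynomial ℚ) (hp : p.Monic) (h : Polynomial.aeval α p = 0) :
    FiniteDimensional ℚ (IntermediateField.adjoin ℚ {α}) ∧
    Module.finrank ℚ (IntermediateField.adjoin ℚ {α}) ≤ p.natDegree := by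
  have hi : IsIntegral ℚ α := ⟨p, hp, by simpa [Polynomial.aeval_def] using h⟩
  refine ⟨IntermediateField.adjoin.finiteDimensional hi, ?_⟩
  rw [IntermediateField.adjoin.finrank hi]
  exact Polynomial.natDegree_le_of_dvd (minpoly.dvd ℚ α h) hp.ne_zero

theorem KK_fin (α : ℝ) (hα : α ^ 3 = α + 1) :
    FiniteDimensional ℚ (KK α) ∧ Module.finrank ℚ (KK α) ≤ 6 := by
  obtain ⟨a1, a2⟩ := fr_le α (Polynomial.X ^ 3 - (Polynomial.X + 1))
    (by apply Polynomial.monic_X_pow_sub; compute_degree; norm_num) (by simp [hα])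
  obtain ⟨b1, b2⟩ := fr_le gdel (Polynomial.X ^ 2 - (Polynomial.X + 1))
    (by apply Polynomial.monic_X_pow_sub; compute_degree; norm_num) (by simp only [map_sub, map_pow, Polynomial.aeval_X, map_add, map_one]; rw [gdel_sq, sub_self])
  have d1 : (Polynomial.X ^ 3 - (Polynomial.X + 1) : Polynomial ℚ).natDegree = 3 := by
    compute_degree!
  have d2 : (Polynomial.X ^ 2 - (Polynomial.X + 1) : Polynomial ℚ).natDegree = 2 := by
    compute_degree!
  rw [d1] at a2
  rw [d2] at b2
  refine ⟨inferInstance, ?_⟩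
  refine (IntermediateField.finrank_sup_le _ _).trans ?_
  calc _ ≤ 3 * 2 := Nat.mul_le_mul a2 b2
    _ = 6 := rfl

noncomputable def kd (α : ℝ) : KK α :=
  ⟨gdel, (le_sup_right : IntermediateField.adjoin ℚ {gdel} ≤ KK α)
    (IntermediateField.mem_adjoin_simple_self ℚ gdel)⟩

noncomputable def ka (α : ℝ) : KK α :=
  ⟨α, (le_sup_left : IntermediateField.adjoin ℚ {α} ≤ KK α)
    (IntermediateField.mem_adjoin_simple_self ℚ α)⟩

theorem kd_coe (α : ℝ) : ((kd α : KK α) : ℝ) = gdel := rfl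
theorem ka_coe (α : ℝ) : ((ka α : KK α) : ℝ) = α := rfl

theorem kd_sq (α : ℝ) : kd α ^ 2 = kd α + 1 := by
  apply Subtype.ext
  push_cast
  rw [kd_coe]; exact gdel_sq

theorem ka_cu (α : ℝ) (hα : α ^ 3 = α + 1) : ka α ^ 3 = ka α + 1 := by
  apply Subtype.ext
  push_cast
  rw [ka_coe]; exact hα

theorem sig_d (α : ℝ) (σ : KK α →ₐ[ℚ] ℂ) : ‖σ (kd α)‖ ≤ gdel := by
  have h : σ (kd α) ^ 2 = σ (kd α) + 1 := by rw [← map_pow, kd_sq]; simp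
  have h2 : ‖σ (kd α)‖ ^ 2 ≤ ‖σ (kd α)‖ + 1 := by
    rw [← norm_pow, h]; exact (norm_add_le _ _).trans (by simp)
  have := gdel_sq
  have := gdel_lo
  by_contra hc
  push Not at hc
  nlinarith [norm_nonneg (σ (kd α))]

theorem sig_a (α : ℝ) (hα : α ^ 3 = α + 1) (σ : KK α →ₐ[ℚ] ℂ) : ‖σ (ka α)‖ ≤ α := by
  have h : σ (ka α) ^ 3 = σ (ka α) + 1 := by rw [← map_pow, ka_cu α hα]; simp
  have h2 : ‖σ (ka α)‖ ^ 3 ≤ ‖σ (ka α)‖ + 1 := by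
    rw [← norm_pow, h]; exact (norm_add_le _ _).trans (by simp)
  have := al_lo α hα
  by_contra hc
  push Not at hc
  generalize ‖σ (ka α)‖ = r at *
  have : (r - α) * (r ^ 2 + r * α + α ^ 2 - 1) ≤ 0 := by ring_nf; linarith
  have : 0 < (r - α) * (r ^ 2 + r * α + α ^ 2 - 1) := by
    apply mul_pos (by linarith); nlinarith
  linarith

def Pk (α U h : ℝ) : Prop :=
  ∃ u : KK α, (u : ℝ) = U ∧ IsIntegral ℤ u ∧ ∀ σ : KK α →ₐ[ℚ] ℂ, ‖σ u‖ ≤ Real.exp h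

theorem Pk_one (α : ℝ) : Pk α 1 0 := ⟨1, by simp, isIntegral_one, by simp⟩

theorem Pk_mono {α U h h' : ℝ} (H : Pk α U h) (hh : h ≤ h') : Pk α U h' := by
  obtain ⟨u, a, b, c⟩ := H
  exact ⟨u, a, b, fun σ => (c σ).trans (Real.exp_le_exp.2 hh)⟩

theorem Pk_mul {α U V h h' : ℝ} (H : Pk α U h) (H' : Pk α V h') : Pk α (U * V) (h + h') := by
  obtain ⟨u, a, b, c⟩ := H
  obtain ⟨v, a', b', c'⟩ := H'
  refine ⟨u * v, by push_cast; rw [a, a'], b.mul b', fun σ => ?_⟩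
  rw [map_mul, norm_mul, Real.exp_add]
  exact mul_le_mul (c σ) (c' σ) (norm_nonneg _) (Real.exp_pos _).le

theorem exp2_lo : (7 : ℝ) ≤ Real.exp 2 := by
  have := Real.exp_one_gt_d9
  have e : Real.exp 2 = Real.exp 1 ^ 2 := by rw [← Real.exp_nat_mul]; norm_num
  rw [e]; nlinarith

theorem Pk_w (α : ℝ) (hα : α ^ 3 = α + 1) : Pk α (2 * α + 3) 2 := by
  refine ⟨2 * ka α + 3, by push_cast; rw [ka_coe]; rfl, ?_, fun σ => ?_⟩
  · have := int_of_cubic (ka α) (ka_cu α hα)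
    have h2 : IsIntegral ℤ (2 : KK α) := by
      simpa using isIntegral_algebraMap (R := ℤ) (A := KK α) (x := 2)
    have h3 : IsIntegral ℤ (3 : KK α) := by
      simpa using isIntegral_algebraMap (R := ℤ) (A := KK α) (x := 3)
    exact (h2.mul this).add h3
  · refine le_trans ?_ exp2_lo
    have := sig_a α hα σ
    have := al_hi α hα
    simp only [map_add, map_mul, map_ofNat]
    refine (norm_add_le _ _).trans ?_
    rw [norm_mul]
    simp only [Complex.norm_ofNat]
    linarith

theorem Pk_pow (α : ℝ) (r : KK α) (c : ℝ) (hr : (r : ℝ) = c) (hc : 1 < c) (ir : IsIntegral ℤ r)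
    (hs : ∀ σ : KK α →ₐ[ℚ] ℂ, ‖σ r‖ ≤ c) (k : ℕ) :
    Pk α (c ^ k - 1) (k * Real.log c + 1) := by
  refine ⟨r ^ k - 1, by push_cast; rw [hr], (ir.pow k).sub isIntegral_one, fun σ => ?_⟩
  rw [Real.exp_add, Real.exp_nat_mul, Real.exp_log (by linarith)]
  have h1 : (1 : ℝ) ≤ c ^ k := one_le_pow₀ hc.le
  have := Real.exp_one_gt_d9
  calc ‖σ (r ^ k - 1)‖ ≤ ‖σ r‖ ^ k + 1 := by
        rw [map_sub, map_pow, map_one]; exact (norm_sub_le _ _).trans (by simp)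
    _ ≤ c ^ k + 1 := by gcongr; exact hs σ
    _ ≤ c ^ k * Real.exp 1 := by nlinarith

theorem Pk_d (α : ℝ) (k : ℕ) : Pk α (gdel ^ k - 1) (k * Real.log gdel + 1) :=
  Pk_pow α (kd α) gdel rfl (by linarith [gdel_lo]) (int_of_quad _ (kd_sq α)) (sig_d α) k

theorem Pk_a (α : ℝ) (hα : α ^ 3 = α + 1) (k : ℕ) : Pk α (α ^ k - 1) (k * Real.log α + 1) :=
  Pk_pow α (ka α) α rfl (by linarith [al_lo α hα]) (int_of_cubic _ (ka_cu α hα)) (sig_a α hα) k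

theorem T_app (α : ℝ) (hα : α ^ 3 = α + 1) (U V : ℝ) (hU0 : 0 < U) (hV0 : 0 < V)
    (h ℓ : ℕ) (hh : 1 ≤ h) (hℓ : 1 ≤ ℓ) (hU : Pk α U h) (hV : Pk α V h)
    (huv : |Real.log U - Real.log V| ≤ h)
    (hl1a : 0.48 ≤ Real.log gdel) (hl1b : Real.log gdel ≤ 0.4813)
    (hl2b : Real.log α ≤ 0.2813)
    (x y : ℕ) (hx : (x : ℝ) ≤ Real.exp ℓ) (hy : (y : ℝ) ≤ Real.exp ℓ)
    (hL : 8 * 10 ^ 14 * (h * ℓ ^ 2 : ℝ) ≤ Real.exp ℓ) (hyL : 4 * 10 ^ 14 * (h * ℓ ^ 2) ≤ y)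
    (hI : ∀ q : ℕ, 1 ≤ q → q ≤ 9600000 * ℓ → ∀ p : ℤ,
      q * (10 ^ 7 * (h * ℓ : ℝ)) ≤ y * |q * Real.log α - p * Real.log gdel|) :
    Real.exp (-(7.3 * 10 ^ 19 * (h * ℓ ^ 3 : ℝ))) ≤
      |Real.log U - Real.log V + x * Real.log gdel - y * Real.log α| := by
  obtain ⟨u, rfl, iu, su⟩ := hU
  obtain ⟨v, rfl, iv, sv⟩ := hV
  obtain ⟨hf, hK⟩ := KK_fin α hα
  exact thmT (KK α) hK (kd α) (ka α) u v (int_of_quad _ (kd_sq α)) (int_of_cubic _ (ka_cu α hα))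
    iu iv (by rw [kd_coe]; linarith [gdel_lo]) (by rw [ka_coe]; linarith [al_lo α hα]) hU0 hV0
    h ℓ hh hℓ (sig_d α) (sig_a α hα) su sv huv hl1a hl1b hl2b x y hx hy hL hyL hI

def tay (X D : ℕ) : ℕ → ℕ
  | 0 => 1
  | j + 1 => tay X D j * (D * (j + 1)) + X ^ (j + 1)

theorem tay_eq (X D : ℕ) (hD : 0 < D) (j : ℕ) :
    ∑ i ∈ Finset.range (j + 1), ((X : ℝ) / D) ^ i / (i.factorial : ℝ) =
      (tay X D j : ℝ) / ((D : ℝ) ^ j * (j.factorial : ℝ)) := by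
  have hd : (D : ℝ) ≠ 0 := by positivity
  induction j with
  | zero => simp [tay]
  | succ j ih =>
    rw [Finset.sum_range_succ, ih, tay, Nat.factorial_succ]
    push_cast
    have : (j.factorial : ℝ) ≠ 0 := by positivity
    have : (j : ℝ) + 1 ≠ 0 := by positivity
    rw [div_pow]
    field_simp
    ring

theorem log_ge_cert (X D A j : ℕ) (r : ℝ) (hD : 0 < D) (hX : X ≤ D) (hr : (A : ℝ) / D ≤ r)
    (hr0 : 0 < r)
    (h : tay X D j * (D * (j + 1) * (j + 1)) + X ^ (j + 1) * (j + 2) ≤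
      A * (D ^ j * ((j + 1).factorial * (j + 1)))) : (X : ℝ) / D ≤ Real.log r := by
  rw [Real.le_log_iff_exp_le hr0]
  refine le_trans ?_ hr
  have hd : (0 : ℝ) < D := by exact_mod_cast hD
  have h1 : (X : ℝ) / D ≤ 1 := by
    rw [div_le_one hd]; exact_mod_cast hX
  refine (Real.exp_bound' (by positivity) h1 (Nat.succ_pos j)).trans ?_
  rw [Nat.succ_eq_add_one, tay_eq X D hD j]
  have h' : (tay X D j : ℝ) * (D * (j + 1) * (j + 1)) + (X : ℝ) ^ (j + 1) * (j + 2) ≤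
      A * ((D : ℝ) ^ j * (((j + 1).factorial : ℝ) * (j + 1))) := by exact_mod_cast h
  have hf : (0 : ℝ) < (j.factorial : ℝ) := by positivity
  rw [Nat.factorial_succ] at h' ⊢
  push_cast at h' ⊢
  rw [le_div_iff₀ hd, div_pow]
  have hj : (0 : ℝ) < (j : ℝ) + 1 := by positivity
  rw [← mul_le_mul_iff_left₀ (by positivity : (0 : ℝ) < (D : ℝ) ^ j * (((j : ℝ) + 1) * (j.factorial : ℝ) * (j + 1)))]
  refine le_trans (le_of_eq ?_) h'
  field_simp
  ring

theorem log_le_cert (X D A j : ℕ) (r : ℝ) (hD : 0 < D) (hr : r ≤ (A : ℝ) / D) (hr0 : 0 < r)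
    (h : A * (D ^ j * j.factorial) ≤ tay X D j * D) : Real.log r ≤ (X : ℝ) / D := by
  rw [Real.log_le_iff_le_exp hr0]
  refine hr.trans ?_
  have hd : (0 : ℝ) < D := by exact_mod_cast hD
  refine le_trans ?_ (Real.sum_le_exp_of_nonneg (by positivity) (j + 1))
  rw [tay_eq X D hD j]
  have hf : (0 : ℝ) < (j.factorial : ℝ) := by positivity
  rw [div_le_div_iff₀ hd (by positivity)]
  exact_mod_cast h

theorem gdel_ge (c : ℝ) (h : c ^ 2 ≤ c + 1) : c ≤ gdel := by
  by_contra hc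
  push Not at hc
  nlinarith [gdel_sq, gdel_lo]

theorem gdel_le (c : ℝ) (h0 : 1 ≤ c) (h : c + 1 ≤ c ^ 2) : gdel ≤ c := by
  by_contra hc
  push Not at hc
  nlinarith [gdel_sq, gdel_lo]

theorem al_ge (α : ℝ) (hα : α ^ 3 = α + 1) (c : ℝ) (h : c ^ 3 ≤ c + 1) : c ≤ α := by
  by_contra hc
  push Not at hc
  have := al_lo α hα
  have : 0 < (c - α) * (c ^ 2 + c * α + α ^ 2 - 1) := by
    apply mul_pos (by linarith); nlinarith
  have e : (c - α) * (c ^ 2 + c * α + α ^ 2 - 1) = c ^ 3 - c - (α ^ 3 - α) := by ring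
  linarith

theorem al_le (α : ℝ) (hα : α ^ 3 = α + 1) (c : ℝ) (h0 : 1 ≤ c) (h : c + 1 ≤ c ^ 3) : α ≤ c := by
  by_contra hc
  push Not at hc
  have : 0 < (α - c) * (c ^ 2 + c * α + α ^ 2 - 1) := by
    apply mul_pos (by linarith); nlinarith
  have e : (α - c) * (c ^ 2 + c * α + α ^ 2 - 1) = α ^ 3 - α - (c ^ 3 - c) := by ring
  linarith


theorem l1_bd : 48121182505960344749775891342436842313518433438566051966101816884016386760822177441200942912272347499723183995829365641127256832372673762275305924186440975418241700721183715022382393746918727524327918 / 10 ^ 200 ≤ Real.log gdel ∧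
    Real.log gdel ≤ 48121182505960344749775891342436842313518433438566051966101816884016386760822177441200942912272347499723183995829365641127256832372673762275305924186440975418241700721183715022382393746918727524327920 / 10 ^ 200 := by
  constructor
  · have := log_ge_cert 48121182505960344749775891342436842313518433438566051966101816884016386760822177441200942912272347499723183995829365641127256832372673762275305924186440975418241700721183715022382393746918727524327918 (10 ^ 200) 161803398874989484820458683436563811772030917980576286213544862270526046281890244970720720418939113748475408807538689175212663386222353693179318006076672635443338908659593958290563832266131992829026788 130 gdel (by norm_num) (by norm_num)
      (by apply gdel_ge; norm_num) (by linarith [gdel_lo]) (by decide +kernel)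
    exact le_trans (le_of_eq (by norm_num)) this
  · have := log_le_cert 48121182505960344749775891342436842313518433438566051966101816884016386760822177441200942912272347499723183995829365641127256832372673762275305924186440975418241700721183715022382393746918727524327920 (10 ^ 200) 161803398874989484820458683436563811772030917980576286213544862270526046281890244970720720418939113748475408807538689175212663386222353693179318006076672635443338908659593958290563832266131992829026789 130 gdel (by norm_num)
      (by apply gdel_le <;> norm_num) (by linarith [gdel_lo]) (by decide +kernel)
    exact le_trans this (le_of_eq (by norm_num))

theorem l2_bd (α : ℝ) (hα : α ^ 3 = α + 1) : 28119957432296184651205076406787829979202322574406646267573033431803845306212089132298770747549405479252531873352200522893894670797653822873740174932897332557530484634607076884026430840295974114340948 / 10 ^ 200 ≤ Real.log α ∧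
    Real.log α ≤ 28119957432296184651205076406787829979202322574406646267573033431803845306212089132298770747549405479252531873352200522893894670797653822873740174932897332557530484634607076884026430840295974114340950 / 10 ^ 200 := by
  constructor
  · have := log_ge_cert 28119957432296184651205076406787829979202322574406646267573033431803845306212089132298770747549405479252531873352200522893894670797653822873740174932897332557530484634607076884026430840295974114340948 (10 ^ 200) 132471795724474602596090885447809734073440405690173336453401505030282785124554759405469934798178728032991092099474220742510890263904589779559431475709672347175416683903886741875173693158425354990824662 130 α (by norm_num) (by norm_num)
      (by apply al_ge α hα; norm_num) (by linarith [al_lo α hα]) (by decide +kernel)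
    exact le_trans (le_of_eq (by norm_num)) this
  · have := log_le_cert 28119957432296184651205076406787829979202322574406646267573033431803845306212089132298770747549405479252531873352200522893894670797653822873740174932897332557530484634607076884026430840295974114340950 (10 ^ 200) 132471795724474602596090885447809734073440405690173336453401505030282785124554759405469934798178728032991092099474220742510890263904589779559431475709672347175416683903886741875173693158425354990824663 130 α (by norm_num)
      (by apply al_le α hα <;> norm_num) (by linarith [al_lo α hα]) (by decide +kernel)
    exact le_trans this (le_of_eq (by norm_num))

theorem mu_lo (α A B : ℝ) (h0 : 1 < α) (hA : A ≤ α) (hB : α ≤ B) (c : ℝ) (hc : 0 ≤ c) (h : c * (B ^ 2 + B + 1) ≤ 2 * A + 3) :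
    c ≤ (2 * α + 3) / (α ^ 2 + α + 1) := by
  rw [le_div_iff₀ (by positivity)]
  have : c * (α ^ 2 + α + 1) ≤ c * (B ^ 2 + B + 1) := by gcongr
  linarith

theorem mu_hi (α A B : ℝ) (hA0 : 1 < A) (hA : A ≤ α) (hB : α ≤ B) (c : ℝ) (hc : 0 ≤ c) (h : 2 * B + 3 ≤ c * (A ^ 2 + A + 1)) :
    (2 * α + 3) / (α ^ 2 + α + 1) ≤ c := by
  rw [div_le_iff₀ (by nlinarith)]
  have : c * (A ^ 2 + A + 1) ≤ c * (α ^ 2 + α + 1) := by gcongr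
  linarith


theorem mu_bd (α : ℝ) (hα : α ^ 3 = α + 1) : 32555783041592842214243929419394226700413145151242225258654066782578127462819213073670394726901960328474006499347929549448476087728102815932388308341832085013098439349124933474242726158013658308825973 / 10 ^ 200 ≤ Real.log ((2 * α + 3) / (α ^ 2 + α + 1)) ∧
    Real.log ((2 * α + 3) / (α ^ 2 + α + 1)) ≤ 32555783041592842214243929419394226700413145151242225258654066782578127462819213073670394726901960328474006499347929549448476087728102815932388308341832085013098439349124933474242726158013658308825975 / 10 ^ 200 := by
  constructor
  · have := log_ge_cert 32555783041592842214243929419394226700413145151242225258654066782578127462819213073670394726901960328474006499347929549448476087728102815932388308341832085013098439349124933474242726158013658308825973 (10 ^ 200) 138480291574941377177329101988060860578498826048508729710017818866741373710685191589471741743682364971468973825104414603532501393127296803474422952677801192938699756526714415796945651870359457314609438 130 ((2 * α + 3) / (α ^ 2 + α + 1)) (by norm_num) (by norm_num)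
      (by apply mu_lo α _ _ (by linarith [al_lo α hα]) (al_ge α hα (13247179572447460259609088544780973407344040569017333645340150503028278512455475940546993479817872803299109209947422074251089026390458977955943147570967234717541668390388674187517369315842535499082466223545 / 10 ^ 205) (by norm_num)) (al_le α hα (13247179572447460259609088544780973407344040569017333645340150503028278512455475940546993479817872803299109209947422074251089026390458977955943147570967234717541668390388674187517369315842535499082466223546 / 10 ^ 205) (by norm_num) (by norm_num)) <;> norm_num) (by have := al_lo α hα; positivity) (by decide +kernel)
    exact le_trans (le_of_eq (by norm_num)) this
  · have := log_le_cert 32555783041592842214243929419394226700413145151242225258654066782578127462819213073670394726901960328474006499347929549448476087728102815932388308341832085013098439349124933474242726158013658308825975 (10 ^ 200) 138480291574941377177329101988060860578498826048508729710017818866741373710685191589471741743682364971468973825104414603532501393127296803474422952677801192938699756526714415796945651870359457314609439 130 ((2 * α + 3) / (α ^ 2 + α + 1)) (by norm_num)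
      (by apply mu_hi α _ _ _ (al_ge α hα (13247179572447460259609088544780973407344040569017333645340150503028278512455475940546993479817872803299109209947422074251089026390458977955943147570967234717541668390388674187517369315842535499082466223545 / 10 ^ 205) (by norm_num)) (al_le α hα (13247179572447460259609088544780973407344040569017333645340150503028278512455475940546993479817872803299109209947422074251089026390458977955943147570967234717541668390388674187517369315842535499082466223546 / 10 ^ 205) (by norm_num) (by norm_num)) <;> norm_num) (by have := al_lo α hα; positivity) (by decide +kernel)
    exact le_trans this (le_of_eq (by norm_num))

theorem irr_gen (l1 l2 ε : ℝ) (a b q : ℕ) (p : ℤ) (hl : 0 < l1) (hab : Nat.Coprime b a)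
    (he : |b * l2 - a * l1| ≤ ε) (h1 : 1 ≤ q) (hq : q < b) :
    (l1 - q * ε) / b ≤ |q * l2 - p * l1| := by
  have hb : (0 : ℝ) < b := by exact_mod_cast (by omega : 0 < b)
  have hne : (q : ℤ) * a - p * b ≠ 0 := by
    intro h
    have h2 : (b : ℤ) ∣ (q : ℤ) * a := ⟨p, by linarith⟩
    have h3 : b ∣ q * a := by exact_mod_cast h2
    have h4 : b ∣ q := hab.dvd_of_dvd_mul_right h3
    exact absurd (Nat.le_of_dvd h1 h4) (by omega)
  have h5 : (1 : ℝ) ≤ |((q : ℤ) * a - p * b : ℤ)| := by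
    exact_mod_cast Int.one_le_abs hne
  have h6 : |(b : ℝ) * (q * l2 - p * l1)| = b * |q * l2 - p * l1| := by
    rw [abs_mul, abs_of_pos hb]
  have h7 : (b : ℝ) * (q * l2 - p * l1) = l1 * ((q : ℤ) * a - p * b : ℤ) - (-(q * (b * l2 - a * l1))) := by
    push_cast; ring
  have h8 : |l1 * (((q : ℤ) * a - p * b : ℤ) : ℝ)| ≥ l1 := by
    rw [abs_mul, abs_of_pos hl]
    exact le_mul_of_one_le_right hl.le (by exact_mod_cast h5)
  have h9 : |-((q : ℝ) * (b * l2 - a * l1))| ≤ q * ε := by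
    rw [abs_neg, abs_mul, Nat.abs_cast]; gcongr
  have h10 := abs_sub_abs_le_abs_sub (l1 * (((q : ℤ) * a - p * b : ℤ) : ℝ)) (-(q * (b * l2 - a * l1)))
  rw [← h7, h6] at h10
  rw [div_le_iff₀ hb]
  linarith

theorem l1_rough : 0.4812 ≤ Real.log gdel ∧ Real.log gdel ≤ 0.48122 := by
  obtain ⟨h1, h2⟩ := l1_bd
  constructor
  · refine le_trans ?_ h1; norm_num
  · refine le_trans h2 ?_; norm_num

theorem l2_rough (α : ℝ) (hα : α ^ 3 = α + 1) : 0.28119 ≤ Real.log α ∧ Real.log α ≤ 0.2812 := by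
  obtain ⟨h1, h2⟩ := l2_bd α hα
  constructor
  · refine le_trans ?_ h1; norm_num
  · refine le_trans h2 ?_; norm_num

theorem tier1 (α : ℝ) (hα : α ^ 3 = α + 1) (q : ℕ) (h1 : 1 ≤ q) (hq : q ≤ 16320000000) (p : ℤ) :
    2.5 / 10 ^ 11 ≤ |q * Real.log α - p * Real.log gdel| ∧
    (q ≤ 2200000000 → 2.89 / 10 ^ 11 ≤ |q * Real.log α - p * Real.log gdel|) := by
  obtain ⟨a1, a2⟩ := l1_bd
  obtain ⟨b1, b2⟩ := l2_bd α hα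
  obtain ⟨c1, c2⟩ := l1_rough
  have h := irr_gen (Real.log gdel) (Real.log α) (3.71 / 10 ^ 12) 9541602758 16328374921 q p
    (by linarith) (by norm_num) (by rw [abs_le]; norm_num at *; constructor <;> linarith) h1 (by omega)
  have hqr : (q : ℝ) ≤ 16320000000 := by exact_mod_cast hq
  constructor
  · refine le_trans ?_ h
    rw [div_le_div_iff₀ (by norm_num) (by norm_num)]
    norm_num
    linarith
  · intro hq2
    have hqr : (q : ℝ) ≤ 2200000000 := by exact_mod_cast hq2
    refine le_trans ?_ h
    rw [div_le_div_iff₀ (by norm_num) (by norm_num)]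
    norm_num
    linarith

theorem tier2 (α : ℝ) (hα : α ^ 3 = α + 1) (q : ℕ) (h1 : 1 ≤ q) (hq : q ≤ 10 ^ 44) (p : ℤ) :
    1 / 10 ^ 46 ≤ |q * Real.log α - p * Real.log gdel| := by
  obtain ⟨a1, a2⟩ := l1_bd
  obtain ⟨b1, b2⟩ := l2_bd α hα
  obtain ⟨c1, c2⟩ := l1_rough
  have h := irr_gen (Real.log gdel) (Real.log α) (2 / 10 ^ 46) 863325538411649316991076849417511604487833957 1477393623229645344014985989169632464398849669 q p
    (by linarith) (by norm_num) (by rw [abs_le]; norm_num at *; constructor <;> linarith) h1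
    (lt_of_le_of_lt hq (by norm_num))
  have hqr : (q : ℝ) ≤ 10 ^ 44 := by exact_mod_cast hq
  refine le_trans ?_ h
  rw [div_le_div_iff₀ (by norm_num) (by norm_num)]
  norm_num1 at h ⊢
  linarith

theorem red_gen (l1 l2 lm e s Λ : ℝ) (q p r n m : ℤ) (hl : 0 < l2) (hq : 0 < q)
    (he : q * l1 = p * l2 + e) (hs : q * lm = r * l2 + s) (hs2 : s ≤ l2 / 2)
    (hΛ : Λ = lm + n * l1 - m * l2) : s - |(n : ℝ)| * |e| ≤ q * |Λ| := by
  have hq' : (0 : ℝ) < q := by exact_mod_cast hq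
  have h1 : (q : ℝ) * Λ = (((n * p - q * m + r : ℤ) : ℝ) * l2 + s) - (-(n * e)) := by
    rw [hΛ]; push_cast; linear_combination n * he + hs
  have h2 : |(q : ℝ) * Λ| = q * |Λ| := by rw [abs_mul, abs_of_pos hq']
  have h3 : s ≤ |((n * p - q * m + r : ℤ) : ℝ) * l2 + s| := by
    generalize (n * p - q * m + r : ℤ) = N
    rcases le_or_gt 0 N with h | h
    · have : (0 : ℝ) ≤ N := by exact_mod_cast h
      refine le_trans ?_ (le_abs_self _)
      have := mul_nonneg this hl.le
      linarith
    · have h' : N ≤ -1 := by omega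
      have : (N : ℝ) ≤ -1 := by exact_mod_cast h'
      refine le_trans ?_ (neg_le_abs _)
      nlinarith
  have h4 := abs_sub_abs_le_abs_sub (((n * p - q * m + r : ℤ) : ℝ) * l2 + s) (-(n * e))
  rw [← h1, h2, abs_neg, abs_mul] at h4
  linarith

theorem red_num (α : ℝ) (hα : α ^ 3 = α + 1) (n m : ℕ) (hn : n ≤ 10 ^ 95) :
    3 / 10 ^ 97 ≤ |Real.log (2 * α + 3) + n * Real.log gdel - m * Real.log α| := by
  have a0 := al_lo α hα
  have hm : Real.log ((2 * α + 3) / (α ^ 2 + α + 1)) = Real.log (2 * α + 3) - 5 * Real.log α := by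
    have e : α ^ 2 + α + 1 = α ^ 5 := by
      have : α ^ 5 = α ^ 3 * α ^ 2 := by ring
      rw [this, hα]; linear_combination -hα
    rw [e, Real.log_div (by positivity) (by positivity), Real.log_pow]
    norm_num
  obtain ⟨d1, d2⟩ := mu_bd α hα
  obtain ⟨a1, a2⟩ := l1_bd
  obtain ⟨b1, b2⟩ := l2_bd α hα
  obtain ⟨c1, c2⟩ := l2_rough α hα
  rw [hm] at d1 d2
  have hnr : (n : ℝ) ≤ 10 ^ 95 := by exact_mod_cast hn
  generalize hl1 : Real.log gdel = l1 at *
  generalize hl2 : Real.log α = l2 at *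
  generalize hlw : Real.log (2 * α + 3) = lw at *
  clear hl1 hl2 hlw hm
  obtain ⟨e, he⟩ : ∃ e : ℝ, e = 212952332387585910928193207848890932133582802528335305710742809438209616829815104809447003659593 * l1 - 364421535009989968368336736212765571783674766203574763463504381062749966681045201477280615503381 * l2 := ⟨_, rfl⟩
  obtain ⟨s, hs⟩ : ∃ s : ℝ, s = 212952332387585910928193207848890932133582802528335305710742809438209616829815104809447003659593 * (lw - 5 * l2) - 246544823124410367626055584864355438364794895116891889147414301657912211278343617744297199042751 * l2 := ⟨_, rfl⟩
  have he2 : |e| ≤ 3 / 10 ^ 98 := by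
    rw [abs_le, he]; norm_num at *; constructor <;> linarith
  have hs1 : 0.08 ≤ s := by
    rw [hs]; norm_num at *; linarith
  have hs2 : s ≤ 0.12 := by
    rw [hs]; norm_num at *; linarith
  have h := red_gen l1 l2 (lw - 5 * l2) e s (lw + n * l1 - m * l2) 212952332387585910928193207848890932133582802528335305710742809438209616829815104809447003659593 364421535009989968368336736212765571783674766203574763463504381062749966681045201477280615503381
    246544823124410367626055584864355438364794895116891889147414301657912211278343617744297199042751 n (m - 5) (by linarith) (by norm_num) (by push_cast; rw [he]; ring)
    (by push_cast; rw [hs]; ring) (by linarith) (by push_cast; ring)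
  have h5 : |((n : ℤ) : ℝ)| * |e| ≤ 10 ^ 95 * (3 / 10 ^ 98) := by
    rw [Int.cast_natCast, Nat.abs_cast]; gcongr
  generalize |lw + n * l1 - m * l2| = z at *
  push_cast at h
  norm_num at h5 h ⊢
  linarith

def JJ (α : ℝ) (ℓ : ℕ) : Prop := ∀ q : ℕ, 1 ≤ q → q ≤ 9600000 * ℓ → ∀ p : ℤ,
  Real.exp (-(26 + (ℓ : ℝ) / 20)) ≤ |q * Real.log α - p * Real.log gdel|

theorem exp_nat_ge (k : ℕ) (x : ℝ) (hx : (k : ℝ) ≤ x) : (2.7 : ℝ) ^ k ≤ Real.exp x := by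
  refine le_trans ?_ (Real.exp_le_exp.2 hx)
  have : Real.exp (k : ℝ) = Real.exp 1 ^ k := by rw [← Real.exp_nat_mul]; norm_num
  rw [this]
  have := Real.exp_one_gt_d9
  gcongr
  linarith

theorem J_of (α : ℝ) (hα : α ^ 3 = α + 1) (ℓ : ℕ)
    (IH : ∀ q : ℕ, 10 ^ 44 < q → q ≤ 9600000 * ℓ → ∀ p : ℤ, ∃ ℓ' : ℕ, Real.exp ℓ' ≤ 3 * q ∧
      Real.exp (-(7.3 * 10 ^ 19 * (ℓ' ^ 3 : ℝ))) ≤ |q * Real.log α - p * Real.log gdel|) :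
    JJ α ℓ := by
  intro q h1 hq p
  have hℓ0 : (0 : ℝ) ≤ ℓ := Nat.cast_nonneg _
  rcases le_or_gt q 16320000000 with h | h
  · refine le_trans ?_ (tier1 α hα q h1 h p).1
    rw [Real.exp_neg, inv_eq_one_div, div_le_div_iff₀ (Real.exp_pos _) (by norm_num)]
    have := exp_nat_ge 26 (26 + (ℓ : ℝ) / 20) (by push_cast; linarith)
    norm_num at this ⊢
    linarith
  rcases le_or_gt q (10 ^ 44) with h' | h'
  · refine le_trans ?_ (tier2 α hα q h1 h' p)
    have hl : 1700 ≤ ℓ := by omega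
    have hl' : (1700 : ℝ) ≤ ℓ := by exact_mod_cast hl
    rw [Real.exp_neg, inv_eq_one_div, div_le_div_iff₀ (Real.exp_pos _) (by norm_num)]
    have := exp_nat_ge 111 (26 + (ℓ : ℝ) / 20) (by push_cast; linarith)
    norm_num at this ⊢
    linarith
  · obtain ⟨k, hk, hb⟩ := IH q h' hq p
    refine le_trans (Real.exp_le_exp.2 (neg_le_neg ?_)) hb
    have hqr : (q : ℝ) ≤ 9600000 * ℓ := by exact_mod_cast hq
    have hq44 : (10 : ℝ) ^ 44 ≤ q := by exact_mod_cast h'.le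
    have hl : (10 : ℝ) ^ 37 ≤ ℓ := by norm_num at hq44 ⊢; linarith
    have h12 := Real.pow_div_factorial_le_exp (k : ℝ) (Nat.cast_nonneg _) 12
    rw [div_le_iff₀ (by positivity)] at h12
    have hf : ((Nat.factorial 12 : ℕ) : ℝ) = 479001600 := by norm_num [Nat.factorial]
    rw [hf] at h12
    have h13 : (k : ℝ) ^ 12 ≤ 1.38 * 10 ^ 16 * ℓ := by norm_num; nlinarith
    have h14 : 1.46 * 10 ^ 21 * (k : ℝ) ^ 3 ≤ ℓ := by
      refine le_of_pow_le_pow_left₀ (n := 4) (by norm_num) hℓ0 ?_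
      have e : (1.46 * 10 ^ 21 * (k : ℝ) ^ 3) ^ 4 = (1.46 * 10 ^ 21) ^ 4 * (k : ℝ) ^ 12 := by ring
      rw [e]
      have h3 : ((10 : ℝ) ^ 37) ^ 3 ≤ (ℓ : ℝ) ^ 3 := by gcongr
      have e2 : (ℓ : ℝ) ^ 4 = ℓ ^ 3 * ℓ := by ring
      rw [e2]
      have h4 : ((10 : ℝ) ^ 37) ^ 3 * ℓ ≤ (ℓ : ℝ) ^ 3 * ℓ := by gcongr
      norm_num at h4 h13 ⊢
      linarith
    norm_num at h14 ⊢
    linarith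

theorem T2 (α : ℝ) (hα : α ^ 3 = α + 1) (U V : ℝ) (hU0 : 0 < U) (hV0 : 0 < V)
    (h ℓ : ℕ) (hh : 1 ≤ h) (hℓ : 1 ≤ ℓ) (hJ : JJ α ℓ) (hU : Pk α U h) (hV : Pk α V h)
    (huv : |Real.log U - Real.log V| ≤ h)
    (x y : ℕ) (hx : (x : ℝ) ≤ Real.exp ℓ) (hy : (y : ℝ) ≤ Real.exp ℓ)
    (hyl : 9.6 * 10 ^ 13 * (h * ℓ ^ 2 : ℝ) * Real.exp (26 + (ℓ : ℝ) / 20) ≤ y) :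
    Real.exp (-(7.3 * 10 ^ 19 * (h * ℓ ^ 3 : ℝ))) ≤
      |Real.log U - Real.log V + x * Real.log gdel - y * Real.log α| := by
  obtain ⟨a1, a2⟩ := l1_rough
  obtain ⟨b1, b2⟩ := l2_rough α hα
  have hE : (10 : ℝ) ≤ Real.exp (26 + (ℓ : ℝ) / 20) := by
    have hℓ0 : (0 : ℝ) ≤ ℓ := Nat.cast_nonneg _
    have := exp_nat_ge 26 (26 + (ℓ : ℝ) / 20) (by push_cast; linarith)
    norm_num at this
    linarith
  have hhl : (0 : ℝ) ≤ h * ℓ ^ 2 := by positivity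
  have hY : 8 * 10 ^ 14 * (h * ℓ ^ 2 : ℝ) ≤ y := by
    refine le_trans ?_ hyl
    calc _ ≤ 9.6 * 10 ^ 13 * (h * ℓ ^ 2 : ℝ) * 10 := by linarith
      _ ≤ _ := by gcongr
  refine T_app α hα U V hU0 hV0 h ℓ hh hℓ hU hV huv (by linarith) (by linarith) (by linarith)
    x y hx hy (hY.trans hy) ?_ ?_
  · have : 4 * 10 ^ 14 * (h * ℓ ^ 2 : ℝ) ≤ y := by linarith
    exact_mod_cast this
  · intro q h1 hq p
    have hqr : (q : ℝ) ≤ 9600000 * ℓ := by exact_mod_cast hq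
    calc (q : ℝ) * (10 ^ 7 * (h * ℓ : ℝ)) ≤ 9600000 * ℓ * (10 ^ 7 * (h * ℓ : ℝ)) := by gcongr
      _ = (9.6 * 10 ^ 13 * (h * ℓ ^ 2 : ℝ) * Real.exp (26 + (ℓ : ℝ) / 20)) * Real.exp (-(26 + (ℓ : ℝ) / 20)) := by
          rw [mul_assoc _ (Real.exp _), ← Real.exp_add, add_neg_cancel, Real.exp_zero]; ring
      _ ≤ y * |q * Real.log α - p * Real.log gdel| := by
          gcongr
          exact hJ q h1 hq p

theorem sq_le_exp20 (x : ℝ) (hx : 0 ≤ x) : x ^ 2 ≤ 800 * Real.exp (x / 20) := by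
  have := Real.pow_div_factorial_le_exp (x / 20) (by positivity) 2
  norm_num [Nat.factorial] at this
  have e : (x / 20) ^ 2 / 2 = x ^ 2 / 800 := by ring
  rw [e] at this
  linarith

theorem t3_num (x : ℝ) (hx : 101 ≤ x) :
    2.88 * 10 ^ 14 * x ^ 2 * Real.exp (26 + x / 20) ≤ Real.exp x := by
  have h1 := sq_le_exp20 x (by linarith)
  have h2 := exp_nat_ge 64 (x - 26 - x / 20 - x / 20) (by push_cast; linarith)
  have e : Real.exp x = Real.exp (x - 26 - x / 20 - x / 20) * (Real.exp (x / 20) * Real.exp (26 + x / 20)) := by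
    rw [← Real.exp_add, ← Real.exp_add]; ring_nf
  rw [e]
  calc _ ≤ 2.88 * 10 ^ 14 * (800 * Real.exp (x / 20)) * Real.exp (26 + x / 20) := by gcongr
    _ = (2.88 * 10 ^ 14 * 800) * (Real.exp (x / 20) * Real.exp (26 + x / 20)) := by ring
    _ ≤ _ := by
      gcongr
      refine le_trans ?_ h2
      norm_num

theorem ceil_log (z : ℝ) (hz : 1 ≤ z) :
    z ≤ Real.exp (⌈Real.log z⌉₊ : ℝ) ∧ Real.exp (⌈Real.log z⌉₊ : ℝ) ≤ 3 * z := by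
  have hz0 : 0 < z := by linarith
  constructor
  · calc z = Real.exp (Real.log z) := (Real.exp_log hz0).symm
      _ ≤ _ := Real.exp_le_exp.2 (Nat.le_ceil _)
  · have := (Nat.ceil_lt_add_one (Real.log_nonneg hz)).le
    calc _ ≤ Real.exp (Real.log z + 1) := Real.exp_le_exp.2 this
      _ = z * Real.exp 1 := by rw [Real.exp_add, Real.exp_log hz0]
      _ ≤ 3 * z := by nlinarith [Real.exp_one_lt_d9]

theorem tier3 (α : ℝ) (hα : α ^ 3 = α + 1) : ∀ q : ℕ, 10 ^ 44 < q → ∀ p : ℤ,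
    ∃ ℓ' : ℕ, Real.exp ℓ' ≤ 3 * q ∧
      Real.exp (-(7.3 * 10 ^ 19 * (ℓ' ^ 3 : ℝ))) ≤ |q * Real.log α - p * Real.log gdel| := by
  intro q
  induction q using Nat.strong_induction_on with
  | _ q IH =>
  intro hq p
  obtain ⟨a1, a2⟩ := l1_rough
  obtain ⟨b1, b2⟩ := l2_rough α hα
  have hqr : (10 : ℝ) ^ 44 ≤ q := by exact_mod_cast hq.le
  obtain ⟨c1, c2⟩ := ceil_log q (by linarith [hqr, (by norm_num : (1 : ℝ) ≤ 10 ^ 44)])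
  generalize ⌈Real.log (q : ℝ)⌉₊ = ℓ at c1 c2
  refine ⟨ℓ, c2, ?_⟩
  have hone : Real.exp (-(7.3 * 10 ^ 19 * (ℓ ^ 3 : ℝ))) ≤ 1 := by
    rw [Real.exp_le_one_iff]
    have : (0 : ℝ) ≤ 7.3 * 10 ^ 19 * (ℓ ^ 3 : ℝ) := by positivity
    linarith
  rcases le_or_gt 1 |q * Real.log α - p * Real.log gdel| with h | h
  · exact hone.trans h
  rw [abs_lt] at h
  have hq0 : (0 : ℝ) ≤ q := Nat.cast_nonneg _
  have hℓ : 101 ≤ ℓ := by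
    by_contra hc
    have : (ℓ : ℝ) ≤ 100 := by exact_mod_cast (by omega : ℓ ≤ 100)
    have h2 : Real.exp ℓ ≤ 2.7182818286 ^ 100 := by
      calc Real.exp ℓ ≤ Real.exp ((100 : ℕ) * 1) := Real.exp_le_exp.2 (by push_cast; linarith)
        _ = Real.exp 1 ^ 100 := Real.exp_nat_mul _ _
        _ ≤ _ := by gcongr; exact Real.exp_one_lt_d9.le
    have h3 := hqr.trans (c1.trans h2)
    norm_num at h3
  have hℓr : (101 : ℝ) ≤ ℓ := by exact_mod_cast hℓ
  have hn := t3_num ℓ hℓr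
  have hE : (1 : ℝ) ≤ Real.exp (26 + (ℓ : ℝ) / 20) := Real.one_le_exp (by positivity)
  have hsm : 9600000 * ℓ < q := by
    have h4 : 2.88 * 10 ^ 14 * (ℓ : ℝ) ^ 2 * 1 ≤ 2.88 * 10 ^ 14 * (ℓ : ℝ) ^ 2 * Real.exp (26 + (ℓ : ℝ) / 20) := by
      gcongr
    have h5 : (9600000 * ℓ : ℝ) < q := by norm_num at h4 hn; nlinarith
    exact_mod_cast h5
  have hJ : JJ α ℓ := J_of α hα ℓ (fun q' hq' hl p => IH q' (by omega) hq' p)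
  have hp0 : 0 ≤ p := by
    by_contra hc
    have : (p : ℝ) ≤ 0 := by exact_mod_cast (by omega : p ≤ 0)
    norm_num at hqr
    nlinarith
  obtain ⟨x, rfl⟩ := Int.eq_ofNat_of_zero_le hp0
  have hxq : (x : ℝ) ≤ q := by
    have hx0 : (0 : ℝ) ≤ x := Nat.cast_nonneg _
    push_cast at h
    norm_num at hqr
    nlinarith
  have hT := T2 α hα 1 1 one_pos one_pos 1 ℓ le_rfl (by omega) hJ (Pk_mono (Pk_one α) (by norm_num))
    (Pk_mono (Pk_one α) (by norm_num)) (by norm_num) x q (hxq.trans c1) c1 (by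
      have : 2.88 * 10 ^ 14 * (ℓ : ℝ) ^ 2 * Real.exp (26 + (ℓ : ℝ) / 20) ≤ 3 * q := hn.trans c2
      push_cast
      linarith)
  have e : |Real.log 1 - Real.log 1 + x * Real.log gdel - q * Real.log α| =
      |q * Real.log α - ((x : ℤ) : ℝ) * Real.log gdel| := by
    rw [abs_sub_comm]; push_cast; simp
  rw [e] at hT
  simpa using hT

theorem JJ_all (α : ℝ) (hα : α ^ 3 = α + 1) (ℓ : ℕ) : JJ α ℓ :=
  J_of α hα ℓ (fun q hq _ p => tier3 α hα q hq p)

theorem lucas_bd (n : ℕ) : (lucasSeq n : ℝ) = gdel ^ n + (1 - gdel) ^ n := by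
  have h := gdel_sq
  induction n using Nat.twoStepInduction with
  | zero => simp [lucasSeq]; norm_num
  | one => simp [lucasSeq]
  | more n h1 h2 =>
    rw [lucasSeq]; push_cast; rw [h1, h2]
    linear_combination (-(gdel ^ n) - (1 - gdel) ^ n) * h

theorem lucas_abs (n : ℕ) : |(lucasSeq n : ℝ) - gdel ^ n| ≤ 1 := by
  rw [lucas_bd, add_sub_cancel_left, abs_pow]
  apply pow_le_one₀ (abs_nonneg _)
  rw [abs_le]; constructor <;> linarith [gdel_lo, gdel_hi]

noncomputable def pA (α : ℝ) (m : ℕ) : ℝ := α ^ (m + 5) / (2 * α + 3)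

noncomputable def pe (α : ℝ) (m : ℕ) : ℝ := padovan m - pA α m

theorem pA_rec (α : ℝ) (hα : α ^ 3 = α + 1) (m : ℕ) : pA α (m + 3) = pA α (m + 1) + pA α m := by
  unfold pA
  rw [← add_div]
  congr 1
  linear_combination α ^ (m + 5) * hα

theorem pe_rec (α : ℝ) (hα : α ^ 3 = α + 1) (m : ℕ) : pe α (m + 3) = pe α (m + 1) + pe α m := by
  unfold pe
  rw [pA_rec α hα, padovan]; push_cast; ring

theorem pe_rec2 (α : ℝ) (hα : α ^ 3 = α + 1) (m : ℕ) :
    pe α (m + 2) + α * pe α (m + 1) + (α ^ 2 - 1) * pe α m = 0 := by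
  have hl := al_lo α hα
  induction m with
  | zero =>
    have hw : (2 * α + 3) ≠ 0 := by positivity
    simp only [pe, pA, padovan]
    field_simp
    have h4 : α ^ 4 = α ^ 2 + α := by linear_combination α * hα
    have h5 : α ^ 5 = α ^ 2 + α + 1 := by linear_combination (α ^ 2 + 1) * hα
    have h7 : α ^ 7 = 2 * α ^ 2 + 2 * α + 1 := by linear_combination (α ^ 4 + α ^ 2 + α + 1) * hα
    norm_num
    ring_nf
    try rw [h7]
    try rw [h5]
    try rw [hα]
    try ring
  | succ m ih =>
    have := pe_rec α hα m
    rw [show m + 1 + 2 = m + 3 by ring, this, show m + 1 + 1 = m + 2 by ring]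
    linear_combination α * ih - pe α m * hα

theorem pe_q (α : ℝ) (hα : α ^ 3 = α + 1) (m : ℕ) :
    pe α (m + 1) ^ 2 + α * pe α (m + 1) * pe α m + (α ^ 2 - 1) * pe α m ^ 2 ≤ 0.1 := by
  have hl := al_lo α hα
  have hh := al_hi α hα
  induction m with
  | zero =>
    have h5 : α ^ 5 = α ^ 2 + α + 1 := by linear_combination (α ^ 2 + 1) * hα
    have h6 : α ^ 6 = α ^ 2 + 2 * α + 1 := by linear_combination (α ^ 3 + α + 1) * hα
    have e0 : pe α 0 = 1 - (α ^ 2 + α + 1) / (2 * α + 3) := by simp [pe, pA, padovan, h5]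
    have e1 : pe α 1 = 1 - (α ^ 2 + 2 * α + 1) / (2 * α + 3) := by simp [pe, pA, padovan, h6]
    have a0 : 0.27 ≤ pe α 0 ∧ pe α 0 ≤ 0.28 := by
      rw [e0, one_sub_div (by positivity), le_div_iff₀ (by positivity), div_le_iff₀ (by positivity)]
      constructor <;> nlinarith
    have a1 : 0.04 ≤ pe α 1 ∧ pe α 1 ≤ 0.05 := by
      rw [e1, one_sub_div (by positivity), le_div_iff₀ (by positivity), div_le_iff₀ (by positivity)]
      constructor <;> nlinarith
    obtain ⟨a0, b0⟩ := a0
    obtain ⟨a1, b1⟩ := a1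
    rw [zero_add]
    have : pe α 1 ^ 2 ≤ 0.05 ^ 2 := by gcongr
    have : α * pe α 1 * pe α 0 ≤ 1.3248 * 0.05 * 0.28 := by gcongr
    have : (α ^ 2 - 1) * pe α 0 ^ 2 ≤ (1.3248 ^ 2 - 1) * 0.28 ^ 2 := by gcongr
    norm_num at *
    linarith
  | succ m ih =>
    have h := pe_rec2 α hα m
    rw [show m + 1 + 1 = m + 2 by ring]
    have e : pe α (m + 2) = -(α * pe α (m + 1)) - (α ^ 2 - 1) * pe α m := by linarith
    have e2 : pe α (m + 2) ^ 2 + α * pe α (m + 2) * pe α (m + 1) + (α ^ 2 - 1) * pe α (m + 1) ^ 2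
       = (α ^ 2 - 1) * (pe α (m + 1) ^ 2 + α * pe α (m + 1) * pe α m + (α ^ 2 - 1) * pe α m ^ 2) := by
      rw [e]; ring
    rw [e2]
    have : α ^ 2 - 1 ≤ 1 := by nlinarith
    have : 0 ≤ α ^ 2 - 1 := by nlinarith
    nlinarith

theorem pe_abs (α : ℝ) (hα : α ^ 3 = α + 1) (m : ℕ) : |pe α m| ≤ 1 := by
  have h := pe_q α hα m
  have hl := al_lo α hα
  have hh := al_hi α hα
  rw [abs_le_one_iff_mul_self_le_one]
  have : 0.3 ≤ α ^ 2 - 1 - α ^ 2 / 4 := by nlinarith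
  nlinarith [sq_nonneg (pe α (m + 1) + α / 2 * pe α m), sq_nonneg (pe α m)]

theorem log_diff (X Y b c : ℝ) (hc : 0 < c) (hX : c ≤ X) (hY : c ≤ Y) (h : |X - Y| ≤ b * c) :
    |Real.log X - Real.log Y| ≤ b := by
  have hX0 : 0 < X := by linarith
  have hY0 : 0 < Y := by linarith
  rw [abs_le] at h
  have hb : 0 ≤ b := by
    by_contra hb
    have := mul_neg_of_neg_of_pos (not_le.1 hb) hc
    linarith
  have key : ∀ X Y : ℝ, 0 < X → c ≤ Y → X - Y ≤ b * c → Real.log X - Real.log Y ≤ b := by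
    intro X Y hX hY hh
    have hY0 : 0 < Y := by linarith
    rw [← Real.log_div hX.ne' hY0.ne']
    have h1 := Real.log_le_sub_one_of_pos (div_pos hX hY0)
    refine h1.trans ?_
    rw [sub_le_iff_le_add, div_le_iff₀ hY0]
    nlinarith
  rw [abs_le]
  constructor
  · have := key Y X hY0 hX (by linarith)
    linarith
  · exact key X Y hX0 hY (by linarith)

theorem base_eq (α : ℝ) (hα : α ^ 3 = α + 1) (n n₁ m m₁ : ℕ)
    (heq : (lucasSeq n : ℤ) - (lucasSeq n₁ : ℤ) = (padovan m : ℤ) - (padovan m₁ : ℤ)) :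
    |(gdel ^ n - gdel ^ n₁) - (pA α m - pA α m₁)| ≤ 4 := by
  have h : (lucasSeq n : ℝ) - (lucasSeq n₁ : ℝ) = (padovan m : ℝ) - (padovan m₁ : ℝ) := by
    exact_mod_cast heq
  have a1 := abs_le.1 (lucas_abs n)
  have a2 := abs_le.1 (lucas_abs n₁)
  have a3 := abs_le.1 (pe_abs α hα m)
  have a4 := abs_le.1 (pe_abs α hα m₁)
  unfold pe at a3 a4
  rw [abs_le]; constructor <;> linarith [a1.1, a1.2, a2.1, a2.2, a3.1, a3.2, a4.1, a4.2]

theorem cmp_aux (D d A c : ℝ) (hD : 1 ≤ D) (hA : 0.95 ≤ A) (hd : 1.618 ≤ d) (hc : 1.3247 ≤ c)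
    (hbig : 1000 ≤ D * d) (h : |(D * d - D) - (A * c - A)| ≤ 4) :
    D * d ≤ 5 * (A * c) ∧ A * c ≤ 5 * (D * d) ∧ D * d - D ≥ D * d / 25 ∧ A * c - A ≥ D * d / 25 := by
  have h1 : D * 1.618 ≤ D * d := by gcongr
  have h2 : A * 1.3247 ≤ A * c := by gcongr
  rw [abs_le] at h
  obtain ⟨h3, h4⟩ := h
  refine ⟨?_, ?_, ?_, ?_⟩ <;> linarith

theorem gpow_big (n : ℕ) (hn : 300 ≤ n) : 1000 ≤ gdel ^ n := by
  calc (1000 : ℝ) ≤ 1.618 ^ 30 := by norm_num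
    _ ≤ gdel ^ 30 := by gcongr; exact gdel_lo.le
    _ ≤ gdel ^ n := pow_le_pow_right₀ (by linarith [gdel_lo]) (by omega)

theorem pA_ge (α : ℝ) (hα : α ^ 3 = α + 1) (m : ℕ) (hm : 1 ≤ m) : 0.95 ≤ pA α m := by
  have hl := al_lo α hα
  unfold pA
  rw [le_div_iff₀ (by positivity)]
  have h6 : α ^ 6 = α ^ 2 + 2 * α + 1 := by linear_combination (α ^ 3 + α + 1) * hα
  have : α ^ 6 ≤ α ^ (m + 5) := pow_le_pow_right₀ (by linarith) (by omega)
  nlinarith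

theorem log_pA (α : ℝ) (hα : α ^ 3 = α + 1) (m : ℕ) :
    Real.log (pA α m) = (m + 5) * Real.log α - Real.log (2 * α + 3) := by
  have hl := al_lo α hα
  unfold pA
  rw [Real.log_div (by positivity) (by positivity), Real.log_pow]; push_cast; ring

structure Setup (α : ℝ) (n₁ k m₁ l : ℕ) : Prop where
  hα : α ^ 3 = α + 1
  hn1 : 1 ≤ n₁
  hk : 1 ≤ k
  hm1 : 1 ≤ m₁
  hl : 1 ≤ l
  hn : 300 ≤ n₁ + k
  hB : |(gdel ^ (n₁ + k) - gdel ^ n₁) - (pA α (m₁ + l) - pA α m₁)| ≤ 4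

theorem pA_add (α : ℝ) (m l : ℕ) : pA α (m + l) = pA α m * α ^ l := by
  unfold pA; rw [show m + l + 5 = (m + 5) + l by ring, pow_add]; ring

theorem Setup.cmp {α : ℝ} {n₁ k m₁ l : ℕ} (S : Setup α n₁ k m₁ l) :
    1 ≤ gdel ^ n₁ ∧ 0.95 ≤ pA α m₁ ∧ 1.618 ≤ gdel ^ k ∧ 1.3247 ≤ α ^ l ∧
    1000 ≤ gdel ^ n₁ * gdel ^ k ∧
    |(gdel ^ n₁ * gdel ^ k - gdel ^ n₁) - (pA α m₁ * α ^ l - pA α m₁)| ≤ 4 := by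
  have hl := al_lo α S.hα
  have hg := gdel_lo
  refine ⟨one_le_pow₀ (by linarith), pA_ge α S.hα m₁ S.hm1, ?_, ?_, ?_, ?_⟩
  · exact hg.le.trans (le_self_pow₀ (by linarith) (by have := S.hk; omega))
  · exact hl.le.trans (le_self_pow₀ (by linarith) (by have := S.hl; omega))
  · rw [← pow_add]; exact gpow_big _ S.hn
  · rw [← pow_add, ← pA_add]; exact S.hB

theorem pow_exp (c : ℝ) (hc : 0 < c) (k : ℕ) : c ^ k * Real.exp (-(k * Real.log c)) = 1 := by
  rw [Real.exp_neg, Real.exp_nat_mul, Real.exp_log hc]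
  exact mul_inv_cancel₀ (by positivity)

theorem exp6 (c t : ℝ) (hc : c ≤ 200) : c * Real.exp (-t) ≤ Real.exp (6 - t) := by
  have := exp_nat_ge 6 6 (by norm_num)
  rw [sub_eq_add_neg, Real.exp_add]
  gcongr
  norm_num at this; linarith

theorem Setup.F1 {α : ℝ} {n₁ k m₁ l : ℕ} (S : Setup α n₁ k m₁ l) (M : ℝ)
    (h1 : M ≤ k * Real.log gdel) (h2 : M ≤ l * Real.log α) :
    |Real.log (2 * α + 3) + ((n₁ + k : ℕ) : ℝ) * Real.log gdel - ((m₁ + l + 5 : ℕ) : ℝ) * Real.log α| ≤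
      50 * Real.exp (-M) := by
  obtain ⟨c1, c2, c3, c4, c5, c6⟩ := S.cmp
  obtain ⟨d1, d2, d3, d4⟩ := cmp_aux _ _ _ _ c1 c2 c3 c4 c5 c6
  have hl := al_lo α S.hα
  have hg := gdel_lo
  have p1 := pow_exp gdel (by linarith) k
  have p2 := pow_exp α (by linarith) l
  have e : Real.log (2 * α + 3) + ((n₁ + k : ℕ) : ℝ) * Real.log gdel - ((m₁ + l + 5 : ℕ) : ℝ) * Real.log α
      = Real.log (gdel ^ n₁ * gdel ^ k) - Real.log (pA α m₁ * α ^ l) := by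
    rw [← pow_add, ← pA_add, log_pA α S.hα, Real.log_pow]; push_cast; ring
  rw [e]
  generalize gdel ^ n₁ = D at *
  generalize gdel ^ k = d at *
  generalize pA α m₁ = A at *
  generalize α ^ l = c at *
  refine log_diff _ _ _ (D * d / 5) (by linarith) (by linarith) (by linarith) ?_
  have q1 : D ≤ D * d * Real.exp (-M) := by
    calc D = D * (d * Real.exp (-(k * Real.log gdel))) := by rw [p1, mul_one]
      _ ≤ D * (d * Real.exp (-M)) := by gcongr
      _ = _ := by ring
  have q2 : A ≤ A * c * Real.exp (-M) := by
    calc A = A * (c * Real.exp (-(l * Real.log α))) := by rw [p2, mul_one]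
      _ ≤ A * (c * Real.exp (-M)) := by gcongr
      _ = _ := by ring
  have q3 : A * c * Real.exp (-M) ≤ 5 * (D * d) * Real.exp (-M) := by gcongr
  have e3 : 50 * Real.exp (-M) * (D * d / 5) = 10 * (D * d * Real.exp (-M)) := by ring
  rw [e3]
  rw [abs_le] at c6 ⊢
  constructor <;> linarith [c6.1, c6.2]

theorem Setup.F2a {α : ℝ} {n₁ k m₁ l : ℕ} (S : Setup α n₁ k m₁ l) :
    |Real.log ((gdel ^ k - 1) * (2 * α + 3)) - Real.log 1 + n₁ * Real.log gdel - ((m₁ + l + 5 : ℕ) : ℝ) * Real.log α| ≤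
      Real.exp (6 - l * Real.log α) := by
  obtain ⟨c1, c2, c3, c4, c5, c6⟩ := S.cmp
  obtain ⟨d1, d2, d3, d4⟩ := cmp_aux _ _ _ _ c1 c2 c3 c4 c5 c6
  have hl := al_lo α S.hα
  have hg := gdel_lo
  have p2 := pow_exp α (by linarith) l
  have e : Real.log ((gdel ^ k - 1) * (2 * α + 3)) - Real.log 1 + n₁ * Real.log gdel - ((m₁ + l + 5 : ℕ) : ℝ) * Real.log α
      = Real.log (gdel ^ n₁ * (gdel ^ k - 1)) - Real.log (pA α m₁ * α ^ l) := by
    rw [← pA_add, log_pA α S.hα, Real.log_mul (by linarith) (by linarith),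
      Real.log_mul (by positivity) (by linarith), Real.log_pow]; push_cast; rw [Real.log_one]; ring
  rw [e]
  refine le_trans ?_ (exp6 150 _ (by norm_num))
  generalize gdel ^ n₁ = D at *
  generalize gdel ^ k = d at *
  generalize pA α m₁ = A at *
  generalize α ^ l = c at *
  have e2 : D * (d - 1) = D * d - D := by ring
  have q0 : D * 1.618 ≤ D * d := by gcongr
  refine log_diff _ _ _ (D * d / 5) (by linarith) (by rw [e2]; linarith) (by linarith) ?_
  have q2 : A = A * c * Real.exp (-(l * Real.log α)) := by rw [mul_assoc, p2, mul_one]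
  have q3 : A * c * Real.exp (-(l * Real.log α)) ≤ 5 * (D * d) * Real.exp (-(l * Real.log α)) := by gcongr
  have e3 : 150 * Real.exp (-(l * Real.log α)) * (D * d / 5) = 30 * (D * d * Real.exp (-(l * Real.log α))) := by ring
  rw [e3, e2]
  rw [abs_le] at c6 ⊢
  constructor <;> linarith [c6.1, c6.2]

theorem Setup.F2b {α : ℝ} {n₁ k m₁ l : ℕ} (S : Setup α n₁ k m₁ l) :
    |Real.log (2 * α + 3) - Real.log (α ^ l - 1) + ((n₁ + k : ℕ) : ℝ) * Real.log gdel - ((m₁ + 5 : ℕ) : ℝ) * Real.log α| ≤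
      Real.exp (6 - k * Real.log gdel) := by
  obtain ⟨c1, c2, c3, c4, c5, c6⟩ := S.cmp
  obtain ⟨d1, d2, d3, d4⟩ := cmp_aux _ _ _ _ c1 c2 c3 c4 c5 c6
  have hl := al_lo α S.hα
  have hg := gdel_lo
  have p1 := pow_exp gdel (by linarith) k
  have e : Real.log (2 * α + 3) - Real.log (α ^ l - 1) + ((n₁ + k : ℕ) : ℝ) * Real.log gdel - ((m₁ + 5 : ℕ) : ℝ) * Real.log α
      = Real.log (gdel ^ n₁ * gdel ^ k) - Real.log (pA α m₁ * (α ^ l - 1)) := by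
    rw [← pow_add, Real.log_mul (by linarith) (by linarith), log_pA α S.hα, Real.log_pow]; push_cast; ring
  rw [e]
  refine le_trans ?_ (exp6 125 _ (by norm_num))
  generalize gdel ^ n₁ = D at *
  generalize gdel ^ k = d at *
  generalize pA α m₁ = A at *
  generalize α ^ l = c at *
  have e2 : A * (c - 1) = A * c - A := by ring
  refine log_diff _ _ _ (D * d / 25) (by linarith) (by linarith) (by rw [e2]; linarith) ?_
  have q2 : D = D * d * Real.exp (-(k * Real.log gdel)) := by rw [mul_assoc, p1, mul_one]
  have e3 : 125 * Real.exp (-(k * Real.log gdel)) * (D * d / 25) = 5 * (D * d * Real.exp (-(k * Real.log gdel))) := by ring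
  rw [e3, e2]
  rw [abs_le] at c6 ⊢
  constructor <;> linarith [c6.1, c6.2]

theorem Setup.F3 {α : ℝ} {n₁ k m₁ l : ℕ} (S : Setup α n₁ k m₁ l) :
    |Real.log ((gdel ^ k - 1) * (2 * α + 3)) - Real.log (α ^ l - 1) + n₁ * Real.log gdel - ((m₁ + 5 : ℕ) : ℝ) * Real.log α| ≤
      Real.exp (6 - ((n₁ + k : ℕ) : ℝ) * Real.log gdel) := by
  obtain ⟨c1, c2, c3, c4, c5, c6⟩ := S.cmp
  obtain ⟨d1, d2, d3, d4⟩ := cmp_aux _ _ _ _ c1 c2 c3 c4 c5 c6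
  have hl := al_lo α S.hα
  have hg := gdel_lo
  have p1 := pow_exp gdel (by linarith) (n₁ + k)
  rw [pow_add] at p1
  have e : Real.log ((gdel ^ k - 1) * (2 * α + 3)) - Real.log (α ^ l - 1) + n₁ * Real.log gdel - ((m₁ + 5 : ℕ) : ℝ) * Real.log α
      = Real.log (gdel ^ n₁ * (gdel ^ k - 1)) - Real.log (pA α m₁ * (α ^ l - 1)) := by
    rw [Real.log_mul (by linarith : pA α m₁ ≠ 0) (by linarith), log_pA α S.hα, Real.log_mul (by linarith) (by linarith),
      Real.log_mul (by positivity) (by linarith), Real.log_pow]; push_cast; ring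
  rw [e]
  refine le_trans ?_ (exp6 100 _ (by norm_num))
  generalize gdel ^ n₁ = D at *
  generalize gdel ^ k = d at *
  generalize pA α m₁ = A at *
  generalize α ^ l = c at *
  have e1 : D * (d - 1) = D * d - D := by ring
  have e2 : A * (c - 1) = A * c - A := by ring
  refine log_diff _ _ _ (D * d / 25) (by linarith) (by rw [e1]; linarith) (by rw [e2]; linarith) ?_
  have e3 : 100 * Real.exp (-(((n₁ + k : ℕ) : ℝ) * Real.log gdel)) * (D * d / 25) = 4 := by
    calc _ = 4 * (D * d * Real.exp (-(((n₁ + k : ℕ) : ℝ) * Real.log gdel))) := by ring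
      _ = 4 := by rw [p1]; ring
  rw [e1, e2, e3]
  exact c6

/-- size comparison -/
theorem Setup.size {α : ℝ} {n₁ k m₁ l : ℕ} (S : Setup α n₁ k m₁ l) :
    |Real.log (2 * α + 3) + ((n₁ + k : ℕ) : ℝ) * Real.log gdel - ((m₁ + l + 5 : ℕ) : ℝ) * Real.log α| ≤ 25 := by
  obtain ⟨c1, c2, c3, c4, c5, c6⟩ := S.cmp
  obtain ⟨d1, d2, d3, d4⟩ := cmp_aux _ _ _ _ c1 c2 c3 c4 c5 c6
  have hl := al_lo α S.hα
  have hg := gdel_lo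
  have e : Real.log (2 * α + 3) + ((n₁ + k : ℕ) : ℝ) * Real.log gdel - ((m₁ + l + 5 : ℕ) : ℝ) * Real.log α
      = Real.log (gdel ^ n₁ * gdel ^ k) - Real.log (pA α m₁ * α ^ l) := by
    rw [← pow_add, ← pA_add, log_pA α S.hα, Real.log_pow]; push_cast; ring
  rw [e]
  refine log_diff _ _ _ (gdel ^ n₁ * gdel ^ k / 5) (by linarith) (by linarith) (by linarith) ?_
  rw [abs_le]; constructor <;> linarith

theorem lw_bd (α : ℝ) (hα : α ^ 3 = α + 1) : 0 ≤ Real.log (2 * α + 3) ∧ Real.log (2 * α + 3) ≤ 2 := by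
  have hl := al_lo α hα
  have hh := al_hi α hα
  constructor
  · apply Real.log_nonneg; linarith
  · rw [Real.log_le_iff_le_exp (by linarith)]
    linarith [exp2_lo]

theorem lpow_bd (c b : ℝ) (hb : 1 < b) (hc : 1.3 ≤ c) (k : ℕ) (e : c = b ^ k) :
    -2 ≤ Real.log (c - 1) ∧ Real.log (c - 1) ≤ k * Real.log b := by
  constructor
  · rw [Real.le_log_iff_exp_le (by linarith), Real.exp_neg]
    have := exp2_lo
    calc (Real.exp 2)⁻¹ ≤ (7 : ℝ)⁻¹ := by gcongr
      _ ≤ 0.3 := by norm_num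
      _ ≤ c - 1 := by linarith
  · rw [← Real.log_pow, ← e]
    apply Real.log_le_log <;> linarith

/-- Package of hypotheses for the three kinds of pairs. -/
def Good (α U V : ℝ) (h : ℕ) : Prop :=
  0 < U ∧ 0 < V ∧ Pk α U h ∧ Pk α V h ∧ |Real.log U - Real.log V| ≤ h

theorem good1 (α : ℝ) (hα : α ^ 3 = α + 1) : Good α (2 * α + 3) 1 2 := by
  obtain ⟨a, b⟩ := lw_bd α hα
  have hl := al_lo α hα
  refine ⟨by linarith, one_pos, Pk_mono (Pk_w α hα) (by norm_num), Pk_mono (Pk_one α) (by norm_num), ?_⟩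
  rw [Real.log_one, abs_le]; push_cast; constructor <;> linarith

theorem Setup.pows {α : ℝ} {n₁ k m₁ l : ℕ} (S : Setup α n₁ k m₁ l) :
    (0 < gdel ^ k - 1 ∧ -2 ≤ Real.log (gdel ^ k - 1) ∧ Real.log (gdel ^ k - 1) ≤ k * Real.log gdel) ∧
    (0 < α ^ l - 1 ∧ -2 ≤ Real.log (α ^ l - 1) ∧ Real.log (α ^ l - 1) ≤ l * Real.log α) := by
  obtain ⟨c1, c2, c3, c4, c5, c6⟩ := S.cmp
  refine ⟨⟨by linarith, lpow_bd _ gdel (by linarith [gdel_lo]) (by linarith) k rfl⟩,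
    ⟨by linarith, lpow_bd _ α (by linarith [al_lo α S.hα]) (by linarith) l rfl⟩⟩

theorem Setup.good2a {α : ℝ} {n₁ k m₁ l : ℕ} (S : Setup α n₁ k m₁ l) (h : ℕ)
    (hk : k * Real.log gdel + 6 ≤ h) : Good α ((gdel ^ k - 1) * (2 * α + 3)) 1 h := by
  obtain ⟨⟨a1, a2, a3⟩, -⟩ := S.pows
  obtain ⟨b1, b2⟩ := lw_bd α S.hα
  have hl := al_lo α S.hα
  have hg : 0 ≤ Real.log gdel := by linarith [l1_rough.1]
  have hk0 : 0 ≤ k * Real.log gdel := by positivity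
  refine ⟨mul_pos a1 (by linarith), one_pos, Pk_mono (Pk_mul (Pk_d α k) (Pk_w α S.hα)) (by linarith),
    Pk_mono (Pk_one α) (by linarith), ?_⟩
  rw [Real.log_one, Real.log_mul a1.ne' (by linarith), abs_le]
  constructor <;> linarith

theorem Setup.good2b {α : ℝ} {n₁ k m₁ l : ℕ} (S : Setup α n₁ k m₁ l) (h : ℕ)
    (hk : l * Real.log α + 6 ≤ h) : Good α (2 * α + 3) (α ^ l - 1) h := by
  obtain ⟨-, ⟨a1, a2, a3⟩⟩ := S.pows
  obtain ⟨b1, b2⟩ := lw_bd α S.hα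
  have hl := al_lo α S.hα
  have hg : 0 ≤ Real.log α := by linarith [(l2_rough α S.hα).1]
  have hk0 : 0 ≤ l * Real.log α := by positivity
  refine ⟨by linarith, a1, Pk_mono (Pk_w α S.hα) (by linarith), Pk_mono (Pk_a α S.hα l) (by linarith), ?_⟩
  rw [abs_le]
  constructor <;> linarith

theorem Setup.good3 {α : ℝ} {n₁ k m₁ l : ℕ} (S : Setup α n₁ k m₁ l) (h : ℕ)
    (hk : k * Real.log gdel + 6 ≤ h) (hk' : l * Real.log α + 6 ≤ h) :
    Good α ((gdel ^ k - 1) * (2 * α + 3)) (α ^ l - 1) h := by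
  obtain ⟨⟨a1, a2, a3⟩, ⟨d1, d2, d3⟩⟩ := S.pows
  obtain ⟨b1, b2⟩ := lw_bd α S.hα
  obtain ⟨e1, e2, e3, e4, e5⟩ := S.good2a h hk
  obtain ⟨f1, f2, f3, f4, f5⟩ := S.good2b h hk'
  refine ⟨e1, f2, e3, f4, ?_⟩
  have hl := al_lo α S.hα
  rw [Real.log_mul a1.ne' (by linarith), abs_le]
  constructor <;> linarith

theorem Setup.sizes {α : ℝ} {n₁ k m₁ l : ℕ} (S : Setup α n₁ k m₁ l) :
    ((m₁ + l + 5 : ℕ) : ℝ) * Real.log α ≤ ((n₁ + k : ℕ) : ℝ) * Real.log gdel + 27 ∧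
    ((n₁ + k : ℕ) : ℝ) * Real.log gdel - 25 ≤ ((m₁ + l + 5 : ℕ) : ℝ) * Real.log α := by
  have h := abs_le.1 S.size
  obtain ⟨b1, b2⟩ := lw_bd α S.hα
  constructor <;> linarith [h.1, h.2]

theorem Tgood (α : ℝ) (hα : α ^ 3 = α + 1) (U V : ℝ) (h ℓ : ℕ) (hh : 1 ≤ h) (hℓ : 1 ≤ ℓ)
    (G : Good α U V h) (x y : ℕ) (N : ℝ) (hN : 2 * N ≤ Real.exp ℓ) (hN2 : Real.exp ℓ ≤ 6 * N)
    (hx : (x : ℝ) ≤ 2 * N) (hy : (y : ℝ) ≤ 2 * N) (hyN : N / 2 ≤ y)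
    (hyl : 1.2 * 10 ^ 15 * (h * ℓ ^ 2 : ℝ) * Real.exp (26 + (ℓ : ℝ) / 20) ≤ Real.exp ℓ)
    (t : ℝ) (ht : |Real.log U - Real.log V + x * Real.log gdel - y * Real.log α| ≤ Real.exp (6 - t)) :
    t ≤ 6 + 7.3 * 10 ^ 19 * (h * ℓ ^ 3 : ℝ) := by
  obtain ⟨g1, g2, g3, g4, g5⟩ := G
  have := T2 α hα U V g1 g2 h ℓ hh hℓ (JJ_all α hα ℓ) g3 g4 g5 x y (hx.trans hN) (hy.trans hN)
    (by linarith)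
  have := Real.exp_le_exp.1 (this.trans ht)
  linarith

theorem cond_num (x : ℝ) (hx : 219 ≤ x) :
    1.3 * 10 ^ 55 * x ^ 8 * Real.exp (26 + x / 20) ≤ Real.exp x := by
  have h1 : x ≤ 219 * Real.exp (x / 219 - 1) := by
    have := Real.add_one_le_exp (x / 219 - 1)
    linarith
  have h2 : x ^ 8 ≤ 219 ^ 8 * Real.exp (8 * (x / 219 - 1)) := by
    calc x ^ 8 ≤ (219 * Real.exp (x / 219 - 1)) ^ 8 := by gcongr
      _ = _ := by rw [mul_pow, ← Real.exp_nat_mul]; norm_num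
  have h3 := exp_nat_ge 182 (x - 8 * (x / 219 - 1) - (26 + x / 20)) (by push_cast; linarith)
  have e : Real.exp x = Real.exp (x - 8 * (x / 219 - 1) - (26 + x / 20)) *
      (Real.exp (8 * (x / 219 - 1)) * Real.exp (26 + x / 20)) := by
    rw [← Real.exp_add, ← Real.exp_add]; ring_nf
  rw [e]
  calc _ ≤ 1.3 * 10 ^ 55 * (219 ^ 8 * Real.exp (8 * (x / 219 - 1))) * Real.exp (26 + x / 20) := by gcongr
    _ = (1.3 * 10 ^ 55 * 219 ^ 8) * (Real.exp (8 * (x / 219 - 1)) * Real.exp (26 + x / 20)) := by ring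
    _ ≤ _ := by
      gcongr
      refine le_trans ?_ h3
      norm_num

theorem big_h (ℓ h2 h3 : ℕ) (hℓ : 219 ≤ ℓ) (e2 : h2 = 146 * 10 ^ 18 * ℓ ^ 3 + 20)
    (e3 : h3 = 73 * 10 ^ 18 * h2 * ℓ ^ 3 + 20) : 2 ≤ h2 ∧ h2 ≤ h3 ∧ (h3 : ℝ) ≤ 1.08 * 10 ^ 40 * (ℓ : ℝ) ^ 6 := by
  have hl1 : (219 : ℝ) ≤ ℓ := by exact_mod_cast hℓ
  have hl3 : (1 : ℝ) ≤ (ℓ : ℝ) ^ 3 := one_le_pow₀ (by linarith)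
  have hl3n : 1 ≤ ℓ ^ 3 := Nat.one_le_pow _ _ (by omega)
  refine ⟨by omega, ?_, ?_⟩
  · rw [e3, mul_assoc]
    nlinarith
  · have a2 : (h2 : ℝ) = 1.46 * 10 ^ 20 * (ℓ : ℝ) ^ 3 + 20 := by rw [e2]; push_cast; ring
    have a3 : (h3 : ℝ) = 7.3 * 10 ^ 19 * h2 * (ℓ : ℝ) ^ 3 + 20 := by rw [e3]; push_cast; ring
    have e6 : (ℓ : ℝ) ^ 6 = ℓ ^ 3 * ℓ ^ 3 := by ring
    rw [a3, a2, e6]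
    generalize (ℓ : ℝ) ^ 3 = z at *
    norm_num
    nlinarith

theorem big_case {α : ℝ} {n₁ k m₁ l : ℕ} (S : Setup α n₁ k m₁ l) (hn : 10 ^ 95 < n₁ + k) : False := by
  obtain ⟨a1, a2⟩ := l1_rough
  obtain ⟨b1, b2⟩ := l2_rough α S.hα
  obtain ⟨s1, s2⟩ := S.sizes
  obtain ⟨N, hN⟩ : ∃ N : ℝ, N = ((n₁ + k : ℕ) : ℝ) := ⟨_, rfl⟩
  have hNb : (10 : ℝ) ^ 95 ≤ N := by rw [hN]; exact_mod_cast hn.le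
  have hNb' : (10 : ℝ) ^ 10 ≤ N := le_trans (by norm_num) hNb
  obtain ⟨c1, c2⟩ := ceil_log (2 * N) (by linarith)
  generalize ⌈Real.log (2 * N)⌉₊ = ℓ at c1 c2
  have c2' : Real.exp ℓ ≤ 6 * N := by linarith
  have hℓ : 219 ≤ ℓ := by
    by_contra hc
    have : (ℓ : ℝ) ≤ 218 := by exact_mod_cast (by omega : ℓ ≤ 218)
    have h2 : Real.exp ℓ ≤ 2.7182818286 ^ 218 := by
      calc Real.exp ℓ ≤ Real.exp ((218 : ℕ) * 1) := Real.exp_le_exp.2 (by push_cast; linarith)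
        _ = Real.exp 1 ^ 218 := Real.exp_nat_mul _ _
        _ ≤ _ := by gcongr; exact Real.exp_one_lt_d9.le
    have h3 := (mul_le_mul_of_nonneg_left hNb (by norm_num : (0 : ℝ) ≤ 2)).trans (c1.trans h2)
    norm_num at h3
  have hℓr : (219 : ℝ) ≤ ℓ := by exact_mod_cast hℓ
  obtain ⟨h2, e2⟩ : ∃ h2 : ℕ, h2 = 146 * 10 ^ 18 * ℓ ^ 3 + 20 := ⟨_, rfl⟩
  obtain ⟨h3, e3⟩ : ∃ h3 : ℕ, h3 = 73 * 10 ^ 18 * h2 * ℓ ^ 3 + 20 := ⟨_, rfl⟩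
  obtain ⟨i1, i2, i3⟩ := big_h ℓ h2 h3 hℓ e2 e3
  have e2r : (h2 : ℝ) = 1.46 * 10 ^ 20 * (ℓ : ℝ) ^ 3 + 20 := by rw [e2]; push_cast; ring
  have e3r : (h3 : ℝ) = 7.3 * 10 ^ 19 * (h2 * (ℓ : ℝ) ^ 3) + 20 := by rw [e3]; push_cast; ring
  have C3 : 1.2 * 10 ^ 15 * (h3 * ℓ ^ 2 : ℝ) * Real.exp (26 + (ℓ : ℝ) / 20) ≤ Real.exp ℓ := by
    refine le_trans ?_ (cond_num ℓ hℓr)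
    calc _ ≤ 1.2 * 10 ^ 15 * (1.08 * 10 ^ 40 * (ℓ : ℝ) ^ 6 * ℓ ^ 2 : ℝ) * Real.exp (26 + (ℓ : ℝ) / 20) := by gcongr
      _ = (1.2 * 10 ^ 15 * (1.08 * 10 ^ 40)) * (ℓ : ℝ) ^ 8 * Real.exp (26 + (ℓ : ℝ) / 20) := by ring
      _ ≤ _ := by
        have : (1.2 * 10 ^ 15 * (1.08 * 10 ^ 40) : ℝ) ≤ 1.3 * 10 ^ 55 := by norm_num
        exact mul_le_mul_of_nonneg_right (mul_le_mul_of_nonneg_right this (by positivity)) (Real.exp_pos _).le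
  have C : ∀ h : ℕ, h ≤ h3 → 1.2 * 10 ^ 15 * (h * ℓ ^ 2 : ℝ) * Real.exp (26 + (ℓ : ℝ) / 20) ≤ Real.exp ℓ := by
    intro h hh
    refine le_trans ?_ C3
    have : (h : ℝ) ≤ h3 := by exact_mod_cast hh
    gcongr
  have hfin : 10 ^ 21 * (h3 * (ℓ : ℝ) ^ 3) ≤ Real.exp ℓ := by
    refine le_trans ?_ C3
    have x1 : Real.exp (26 + (ℓ : ℝ) / 20) ≥ 10 ^ 11 * (ℓ / 20) := by
      rw [Real.exp_add]
      have y1 := exp_nat_ge 26 26 (by norm_num)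
      have y2 := Real.add_one_le_exp ((ℓ : ℝ) / 20)
      have y3 : (10 : ℝ) ^ 11 ≤ Real.exp 26 := le_trans (by norm_num) y1
      gcongr
      linarith
    calc 10 ^ 21 * (h3 * (ℓ : ℝ) ^ 3) ≤ 6 * 10 ^ 24 * (h3 * (ℓ : ℝ) ^ 3) := by gcongr; norm_num
      _ = 1.2 * 10 ^ 15 * (h3 * ℓ ^ 2 : ℝ) * (10 ^ 11 * (ℓ / 20)) := by ring
      _ ≤ _ := by gcongr
  have hh3 : (h3 : ℝ) ≤ N / 100 := by
    have : (1 : ℝ) ≤ (ℓ : ℝ) ^ 3 := one_le_pow₀ (by linarith)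
    have x2 : (h3 : ℝ) * 1 ≤ h3 * (ℓ : ℝ) ^ 3 := by gcongr
    norm_num at hfin
    linarith
  -- sizes
  rw [← hN] at s1 s2
  have ym : ((m₁ + l + 5 : ℕ) : ℝ) ≤ 2 * N := by
    by_contra hc
    push Not at hc
    have : 2 * N * 0.28119 ≤ ((m₁ + l + 5 : ℕ) : ℝ) * Real.log α := by gcongr
    have : N * Real.log gdel ≤ N * 0.48122 := by gcongr
    linarith
  have ym2 : N ≤ ((m₁ + l + 5 : ℕ) : ℝ) := by
    by_contra hc
    push Not at hc
    have : ((m₁ + l + 5 : ℕ) : ℝ) * Real.log α ≤ N * 0.2812 := by gcongr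
    have : N * 0.4812 ≤ N * Real.log gdel := by gcongr
    linarith
  have xn : ((n₁ + k : ℕ) : ℝ) ≤ 2 * N := by rw [← hN]; linarith
  have xn1 : (n₁ : ℝ) ≤ 2 * N := le_trans (by push_cast; linarith [Nat.cast_nonneg (α := ℝ) k]) xn
  have ym1 : ((m₁ + 5 : ℕ) : ℝ) ≤ 2 * N := le_trans (by push_cast; linarith [Nat.cast_nonneg (α := ℝ) l]) ym
  have ylow : l * Real.log α ≤ h3 → N / 2 ≤ ((m₁ + 5 : ℕ) : ℝ) := by
    intro h
    have x1 : (l : ℝ) * 0.28119 ≤ l * Real.log α := by gcongr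
    push_cast at ym2 ⊢
    linarith
  have h23 : (h2 : ℝ) ≤ h3 := by exact_mod_cast i2
  -- step 1
  have st1 : min (k * Real.log gdel) (l * Real.log α) + 6 ≤ h2 := by
    have := Tgood α S.hα _ _ 2 ℓ (by norm_num) (by omega) (good1 α S.hα) (n₁ + k) (m₁ + l + 5) N c1 c2'
      xn ym (by linarith) (C 2 (by omega)) (min (k * Real.log gdel) (l * Real.log α)) (by
        rw [Real.log_one, sub_zero]
        exact (S.F1 _ (min_le_left _ _) (min_le_right _ _)).trans (exp6 50 _ (by norm_num)))
    push_cast at this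
    rw [e2r]
    generalize min (k * Real.log gdel) (l * Real.log α) = M at this ⊢
    linarith
  have st2 : k * Real.log gdel + 6 ≤ h3 ∧ l * Real.log α + 6 ≤ h3 := by
    rcases min_choice (k * Real.log gdel) (l * Real.log α) with hm | hm
    · rw [hm] at st1
      have := Tgood α S.hα _ _ h2 ℓ (by omega) (by omega) (S.good2a h2 st1) n₁ (m₁ + l + 5) N c1 c2'
        xn1 ym (by linarith) (C h2 i2) (l * Real.log α) S.F2a
      exact ⟨by linarith, by rw [e3r]; linarith⟩
    · rw [hm] at st1
      have := Tgood α S.hα _ _ h2 ℓ (by omega) (by omega) (S.good2b h2 st1) (n₁ + k) (m₁ + 5) N c1 c2'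
        xn ym1 (ylow (by linarith)) (C h2 i2) (k * Real.log gdel) S.F2b
      exact ⟨by rw [e3r]; linarith, by linarith⟩
  have st3 := Tgood α S.hα _ _ h3 ℓ (by omega) (by omega) (S.good3 h3 st2.1 st2.2) n₁ (m₁ + 5) N c1 c2'
    xn1 ym1 (ylow (by linarith [st2.2])) C3 _ S.F3
  rw [← hN] at st3
  have : N * 0.4812 ≤ N * Real.log gdel := by gcongr
  norm_num at hfin st3
  linarith

theorem exp_nat_le (r : ℕ) : Real.exp r ≤ 2.7182818286 ^ r := by
  calc Real.exp r = Real.exp 1 ^ r := by rw [← Real.exp_nat_mul]; norm_num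
    _ ≤ _ := by gcongr; exact Real.exp_one_lt_d9.le

theorem log_ge (r : ℕ) (z : ℝ) (hz : 0 < z) (h : 2.7182818286 ^ r ≤ z) : (r : ℝ) ≤ Real.log z :=
  (Real.le_log_iff_exp_le hz).2 ((exp_nat_le r).trans h)

theorem case_min {α : ℝ} {n₁ k m₁ l : ℕ} (S : Setup α n₁ k m₁ l) (hn : n₁ + k ≤ 10 ^ 95) :
    min (k * Real.log gdel) (l * Real.log α) ≤ 230 := by
  have h1 := S.F1 _ (min_le_left _ _) (min_le_right _ _)
  have h2 := (red_num α S.hα (n₁ + k) (m₁ + l + 5) hn).trans h1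
  generalize min (k * Real.log gdel) (l * Real.log α) = M at h2 ⊢
  by_contra hc
  push Not at hc
  have h3 := exp_nat_ge 230 M (by push_cast; linarith)
  have h4 : Real.exp M * Real.exp (-M) = 1 := by rw [← Real.exp_add]; simp
  have h5 : (2.7 : ℝ) ^ 230 * (3 / (50 * 10 ^ 97)) ≤ Real.exp M * Real.exp (-M) := by
    apply mul_le_mul h3 _ (by norm_num) (Real.exp_pos _).le
    norm_num at h2 ⊢
    linarith
  rw [h4] at h5
  norm_num at h5

theorem case_max {α : ℝ} {n₁ k m₁ l : ℕ} (S : Setup α n₁ k m₁ l) (hn : n₁ + k ≤ 10 ^ 95)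
    (N : ℝ) (hN : N = ((n₁ + k : ℕ) : ℝ)) (hb : 2.8 * 10 ^ 31 ≤ N) :
    max (k * Real.log gdel) (l * Real.log α) ≤ 2 * 10 ^ 29 := by
  obtain ⟨a1, a2⟩ := l1_rough
  obtain ⟨b1, b2⟩ := l2_rough α S.hα
  obtain ⟨s1, s2⟩ := S.sizes
  have hmin := case_min S hn
  have hN95 : N ≤ 10 ^ 95 := by rw [hN]; exact_mod_cast hn
  have hb' : (10 : ℝ) ^ 10 ≤ N := le_trans (by norm_num) hb
  have hE : (2 : ℝ) * 10 ^ 95 ≤ Real.exp (220 : ℕ) := by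
    have : Real.exp ((220 : ℕ) : ℝ) = Real.exp 1 ^ 220 := by rw [← Real.exp_nat_mul]; norm_num
    rw [this]
    have h9 := Real.exp_one_gt_d9
    calc (2 : ℝ) * 10 ^ 95 ≤ 2.718 ^ 220 := by norm_num
      _ ≤ _ := by gcongr; linarith
  have hNE : 2 * N ≤ Real.exp (220 : ℕ) := by linarith
  rw [← hN] at s1 s2
  have ym : ((m₁ + l + 5 : ℕ) : ℝ) ≤ 2 * N := by
    by_contra hc
    push Not at hc
    have : 2 * N * 0.28119 ≤ ((m₁ + l + 5 : ℕ) : ℝ) * Real.log α := by gcongr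
    have : N * Real.log gdel ≤ N * 0.48122 := by gcongr
    linarith
  have ym2 : 1.4 * N + 1000 ≤ ((m₁ + l + 5 : ℕ) : ℝ) := by
    by_contra hc
    push Not at hc
    have : ((m₁ + l + 5 : ℕ) : ℝ) * Real.log α ≤ (1.4 * N + 1000) * 0.2812 := by gcongr
    have : N * 0.4812 ≤ N * Real.log gdel := by gcongr
    linarith
  have xn : ((n₁ + k : ℕ) : ℝ) ≤ 2 * N := by rw [← hN]; linarith
  have xn1 : (n₁ : ℝ) ≤ 2 * N := le_trans (by push_cast; linarith [Nat.cast_nonneg (α := ℝ) k]) xn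
  have ym1 : ((m₁ + 5 : ℕ) : ℝ) ≤ 2 * N := le_trans (by push_cast; linarith [Nat.cast_nonneg (α := ℝ) l]) ym
  have key : ∀ U V : ℝ, Good α U V 240 → ∀ x y : ℕ, (x : ℝ) ≤ 2 * N → (y : ℝ) ≤ 2 * N →
      1.4 * N ≤ y → ∀ t : ℝ,
      |Real.log U - Real.log V + x * Real.log gdel - y * Real.log α| ≤ Real.exp (6 - t) →
      t ≤ 2 * 10 ^ 29 := by
    intro U V G x y hx hy hyl t ht
    obtain ⟨g1, g2, g3, g4, g5⟩ := G
    have hyl' : (3.9 : ℝ) * 10 ^ 31 ≤ y := by linarith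
    have := T_app α S.hα U V g1 g2 240 220 (by norm_num) (by norm_num) g3 g4 g5
      (by linarith) (by linarith) (by linarith) x y (hx.trans hNE) (hy.trans hNE)
      (le_trans (by norm_num) hE) (by
        have : ((4 * 10 ^ 14 * (240 * 220 ^ 2) : ℕ) : ℝ) ≤ y := by
          refine le_trans ?_ hyl'
          norm_num
        exact_mod_cast this) (by
        intro q h1 hq p
        have hqr : (q : ℝ) ≤ 9600000 * 220 := by exact_mod_cast hq
        have ht := (tier1 α S.hα q h1 (by omega) p).2 (by omega)
        calc (q : ℝ) * (10 ^ 7 * ((240 : ℕ) * (220 : ℕ) : ℝ))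
            ≤ 9600000 * 220 * (10 ^ 7 * ((240 : ℕ) * (220 : ℕ) : ℝ)) := by gcongr
          _ ≤ 3.9 * 10 ^ 31 * (2.89 / 10 ^ 11) := by norm_num
          _ ≤ _ := by gcongr)
    have h2 := Real.exp_le_exp.1 (this.trans ht)
    norm_num at h2 ⊢
    linarith
  rcases min_choice (k * Real.log gdel) (l * Real.log α) with hm | hm
  · rw [hm] at hmin
    have hh := key _ _ (S.good2a 240 (by push_cast; linarith)) n₁ (m₁ + l + 5) xn1 ym (by linarith)
      (l * Real.log α) S.F2a
    refine max_le (hmin.trans (by norm_num)) hh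
  · rw [hm] at hmin
    have x1 : (l : ℝ) * 0.28119 ≤ l * Real.log α := by gcongr
    have hh := key _ _ (S.good2b 240 (by push_cast; linarith)) (n₁ + k) (m₁ + 5) xn ym1 (by
        push_cast at ym2 ⊢; linarith)
      (k * Real.log gdel) S.F2b
    refine max_le hh (hmin.trans (by norm_num))

theorem all_case {α : ℝ} {n₁ k m₁ l : ℕ} (S : Setup α n₁ k m₁ l) :
    min (k * Real.log gdel) (l * Real.log α) <
      7.33 * 10 ^ 13 * (1 + Real.log (2 * ((n₁ + k : ℕ) : ℝ))) ∧
    max (k * Real.log gdel) (l * Real.log α) <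
      2.57 * 10 ^ 27 * (1 + Real.log (2 * ((n₁ + k : ℕ) : ℝ))) ^ 2 := by
  have hn : n₁ + k ≤ 10 ^ 95 := by
    by_contra hc
    exact big_case S (by omega)
  obtain ⟨a1, a2⟩ := l1_rough
  obtain ⟨b1, b2⟩ := l2_rough α S.hα
  obtain ⟨s1, s2⟩ := S.sizes
  have hmin := case_min S hn
  have hmax := case_max S hn
  obtain ⟨N, hN⟩ : ∃ N : ℝ, N = ((n₁ + k : ℕ) : ℝ) := ⟨_, rfl⟩
  have hN300 : (300 : ℝ) ≤ N := by rw [hN]; exact_mod_cast S.hn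
  have hmax' : max (k * Real.log gdel) (l * Real.log α) ≤ 0.48122 * N + 27 := by
    have x2 : N * Real.log gdel ≤ N * 0.48122 := by gcongr
    rw [← hN] at s1
    apply max_le
    · have x1 : k * Real.log gdel ≤ N * Real.log gdel := by
        have : (k : ℝ) ≤ N := by rw [hN]; push_cast; linarith [Nat.cast_nonneg (α := ℝ) n₁]
        gcongr
      linarith
    · have x1 : l * Real.log α ≤ ((m₁ + l + 5 : ℕ) : ℝ) * Real.log α := by
        have : (l : ℝ) ≤ ((m₁ + l + 5 : ℕ) : ℝ) := by push_cast; linarith [Nat.cast_nonneg (α := ℝ) m₁]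
        gcongr
      linarith
  have hmax'' := hmax N hN
  rw [← hN]
  clear hmax
  generalize min (k * Real.log gdel) (l * Real.log α) = M at *
  generalize max (k * Real.log gdel) (l * Real.log α) = M' at *
  have hlog6 : (6 : ℝ) ≤ Real.log (2 * N) := by
    have := log_ge 6 (2 * N) (by linarith) (le_trans (by norm_num) (by linarith : (600 : ℝ) ≤ 2 * N))
    exact_mod_cast this
  have step : ∀ r : ℕ, (r : ℝ) ≤ Real.log (2 * N) → M' < 2.57 * 10 ^ 27 * (1 + (r : ℝ)) ^ 2 →
      M' < 2.57 * 10 ^ 27 * (1 + Real.log (2 * N)) ^ 2 := by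
    intro r hr h
    refine h.trans_le ?_
    gcongr
  constructor
  · norm_num
    linarith
  rcases lt_or_ge N (10 ^ 29) with h1 | h1
  · apply step 6 (by exact_mod_cast hlog6)
    refine hmax'.trans_lt ?_
    norm_num at h1 ⊢
    linarith
  rcases lt_or_ge N (10 ^ 31) with h2 | h2
  · apply step 67 (log_ge 67 _ (by linarith) (le_trans (by norm_num) (mul_le_mul_of_nonneg_left h1 (by norm_num))))
    refine hmax'.trans_lt ?_
    norm_num at h2 ⊢
    linarith
  have h72 := log_ge 72 (2 * N) (by linarith) (le_trans (by norm_num) (mul_le_mul_of_nonneg_left h2 (by norm_num)))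
  apply step 72 h72
  rcases lt_or_ge N (2.8 * 10 ^ 31) with h3 | h3
  · refine hmax'.trans_lt ?_
    norm_num at h3 ⊢
    linarith
  · refine (hmax'' h3).trans_lt ?_
    norm_num

theorem min_max_bounds (α : ℝ) (hα : α ^ 3 = α + 1)
    (n n₁ m m₁ : ℕ) (hn₁ : 1 ≤ n₁) (hnn₁ : n₁ < n) (hm₁ : 1 ≤ m₁) (hmm₁ : m₁ < m)
    (hn : 300 ≤ n)
    (heq : (lucasSeq n : ℤ) - (lucasSeq n₁ : ℤ) = (padovan m : ℤ) - (padovan m₁ : ℤ)) :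
    min (((n : ℝ) - n₁) * Real.log ((1 + Real.sqrt 5) / 2)) (((m : ℝ) - m₁) * Real.log α) <
      7.33 * 10 ^ 13 * (1 + Real.log (2 * n)) ∧
    max (((n : ℝ) - n₁) * Real.log ((1 + Real.sqrt 5) / 2)) (((m : ℝ) - m₁) * Real.log α) <
      2.57 * 10 ^ 27 * (1 + Real.log (2 * n)) ^ 2 := by
  have hB := base_eq α hα n n₁ m m₁ heq
  obtain ⟨k, rfl⟩ := Nat.exists_eq_add_of_lt hnn₁
  obtain ⟨l, rfl⟩ := Nat.exists_eq_add_of_lt hmm₁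
  have S : Setup α n₁ (k + 1) m₁ (l + 1) := ⟨hα, hn₁, by omega, hm₁, by omega, hn, hB⟩
  have e1 : ((n₁ + k + 1 : ℕ) : ℝ) - n₁ = ((k + 1 : ℕ) : ℝ) := by push_cast; ring
  have e2 : ((m₁ + l + 1 : ℕ) : ℝ) - m₁ = ((l + 1 : ℕ) : ℝ) := by push_cast; ring
  rw [e1, e2]
  exact all_case S
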